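/- Assume d is such that 7(2/(d+1) + (1 − 2/(d+1)) q(d−1)) < 1 (this forces d ≥ 4 and holds for all large d). Then lim_{γ→0} liminf_{N→∞} P_0[γ N^{2d} ≤ T_N] = 1; that is, the laws of N^{2d}/T_N, N ≥ 2, are tight. -/

import Mathlib

open MeasureTheory Filter
open scoped ENNReal Classical

namespace DiscCyl

/-- The lattice `ℤ^{d+1}`. -/
abbrev Lat (d : ℕ) := Fin (d + 1) → ℤ

/-- The discrete cylinder `E = (ℤ/Nℤ)^d × ℤ`. -/
abbrev Cyl (d N : ℕ) := (Fin d → ZMod N) × ℤ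

instance (N : ℕ) : MeasurableSpace (ZMod N) := ⊤

instance (N : ℕ) : Countable (ZMod N) := by
  cases N with
  | zero => exact inferInstanceAs (Countable ℤ)
  | succ n => exact inferInstanceAs (Countable (Fin (n + 1)))

/-- The canonical projection `π_E : ℤ^{d+1} → E`. -/
def projE (d N : ℕ) (v : Lat d) : Cyl d N :=
  (fun i => (v i.castSucc : ZMod N), v (Fin.last d))

/-- The `2(d+1)` unit vectors `±e_i` of `ℤ^{d+1}`. -/
def unitVecs (d : ℕ) : Finset (Lat d) :=
  Finset.image (fun p : Fin (d + 1) × Bool => Pi.single p.1 (if p.2 then (1 : ℤ) else -1))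
    Finset.univ

/-- One-step transition probability of simple random walk on the cylinder:
each of the `2(d+1)` unit moves of `ℤ^{d+1}` is taken with probability `1/(2(d+1))`
and projected to `E`. -/
noncomputable def stepProb (d N : ℕ) (x y : Cyl d N) : ℝ≥0∞ :=
  (((unitVecs d).filter fun e => x + projE d N e = y).card : ℝ≥0∞) / (2 * (d + 1))

/-- `Pl` is the family of laws (indexed by the starting point) of simple random walk
on the cylinder `E = (ℤ/Nℤ)^d × ℤ`. -/
def IsCylRW (d N : ℕ) (Pl : Cyl d N → Measure (ℕ → Cyl d N)) : Prop :=
  (∀ x, IsProbabilityMeasure (Pl x)) ∧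
    ∀ (x : Cyl d N) (n : ℕ) (γ : ℕ → Cyl d N),
      Pl x {ω | ∀ i ≤ n, ω i = γ i} =
        (if γ 0 = x then 1 else 0) * ∏ i ∈ Finset.range n, stepProb d N (γ i) (γ (i + 1))

/-- The lattice `ℤ^ν`. -/
abbrev ZLat (ν : ℕ) := Fin ν → ℤ

/-- Unit vectors of `ℤ^ν`. -/
def zUnitVecs (ν : ℕ) : Set (ZLat ν) :=
  {v | ∃ i, v = Pi.single i 1 ∨ v = Pi.single i (-1)}

/-- One-step transition probability of simple random walk on `ℤ^ν`. -/
noncomputable def zStep (ν : ℕ) (x y : ZLat ν) : ℝ≥0∞ :=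
  if y - x ∈ zUnitVecs ν then (2 * ν : ℝ≥0∞)⁻¹ else 0

/-- `Ql` is the family of laws of simple random walk on `ℤ^ν`. -/
def IsLatRW (ν : ℕ) (Ql : ZLat ν → Measure (ℕ → ZLat ν)) : Prop :=
  (∀ x, IsProbabilityMeasure (Ql x)) ∧
    ∀ (x : ZLat ν) (n : ℕ) (γ : ℕ → ZLat ν),
      Ql x {ω | ∀ i ≤ n, ω i = γ i} =
        (if γ 0 = x then 1 else 0) * ∏ i ∈ Finset.range n, zStep ν (γ i) (γ (i + 1))

/-- `q(ν)`: the return probability to the origin of simple random walk on `ℤ^ν`. -/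
noncomputable def retProb (ν : ℕ) (Ql : ZLat ν → Measure (ℕ → ZLat ν)) : ℝ :=
  ((Ql 0) {ω | ∃ n : ℕ, 1 ≤ n ∧ ω n = 0}).toReal

/-- Entrance time `H_U` (with value `⊤` if `U` is never entered). -/
noncomputable def entT {X : Type*} (U : Set X) (ω : ℕ → X) : ℕ∞ :=
  sInf {t : ℕ∞ | ∃ n : ℕ, ω n ∈ U ∧ t = n}

/-- Exit time `T_U`. -/
noncomputable def exitT {X : Type*} (U : Set X) (ω : ℕ → X) : ℕ∞ :=
  entT Uᶜ ω

/-- `after t f ω = t + f (θ_t ω)`, with value `⊤` when `t = ⊤`. -/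
noncomputable def after {X : Type*} (t : ℕ∞) (f : (ℕ → X) → ℕ∞) (ω : ℕ → X) : ℕ∞ :=
  t.recTopCoe ⊤ fun m => (m : ℕ∞) + f fun k => ω (k + m)

/-- The block `C_j = (ℤ/Nℤ)^d × ([(j-3/4)N, (j+3/4)N] ∩ ℤ)`. -/
def Cblk (d N : ℕ) (j : ℤ) : Set (Cyl d N) :=
  {x | ((j : ℝ) - 3 / 4) * N ≤ (x.2 : ℝ) ∧ (x.2 : ℝ) ≤ ((j : ℝ) + 3 / 4) * N}

/-- The block `B_j = (ℤ/Nℤ)^d × [(j-1)N, (j+1)N]`. -/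
def Bblk (d N : ℕ) (j : ℤ) : Set (Cyl d N) :=
  {x | (j - 1) * (N : ℤ) ≤ x.2 ∧ x.2 ≤ (j + 1) * (N : ℤ)}

/-- The block `B̃_j = (ℤ/Nℤ)^d × [(j-2)N+1, (j+2)N-1]`. -/
def Btl (d N : ℕ) (j : ℤ) : Set (Cyl d N) :=
  {x | (j - 2) * (N : ℤ) + 1 ≤ x.2 ∧ x.2 ≤ (j + 2) * (N : ℤ) - 1}

/-- `D^j_1`: time of the first departure from `B̃_j` after the first return to `B_j`. -/
noncomputable def oneExc (d N : ℕ) (j : ℤ) (ω : ℕ → Cyl d N) : ℕ∞ :=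
  after (entT (Bblk d N j) ω) (exitT (Btl d N j)) ω

/-- `D^j_k`: time of the `k`-th departure from `B̃_j` (after successive returns to `B_j`). -/
noncomputable def DD (d N : ℕ) (j : ℤ) : ℕ → (ℕ → Cyl d N) → ℕ∞
  | 0, _ => 0
  | k + 1, ω => after (DD d N j k ω) (oneExc d N j) ω

/-- The law `P` of the walk with initial distribution uniform on `B_0`. -/
noncomputable def lawP (d N : ℕ) (Pl : Cyl d N → Measure (ℕ → Cyl d N)) :
    Measure (ℕ → Cyl d N) :=
  ((N : ℝ≥0∞) ^ d * (2 * N + 1))⁻¹ •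
    Measure.sum fun x : Cyl d N => if x ∈ Bblk d N 0 then Pl x else 0

/-- Nearest-neighbour adjacency on the cylinder. -/
def adj (d N : ℕ) (x y : Cyl d N) : Prop :=
  x ≠ y ∧ ∃ e ∈ unitVecs d, y = x + projE d N e

/-- `x` and `y` are connected by a nearest-neighbour path inside `S`. -/
def connIn (d N : ℕ) (S : Set (Cyl d N)) (x y : Cyl d N) : Prop :=
  Relation.ReflTransGen (fun a b => a ∈ S ∧ b ∈ S ∧ adj d N a b) x y

/-- `S` is a connected set. -/
def IsConnIn (d N : ℕ) (S : Set (Cyl d N)) : Prop :=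
  ∀ x ∈ S, ∀ y ∈ S, connIn d N S x y

/-- The boundary `∂U`. -/
def bdry (d N : ℕ) (U : Set (Cyl d N)) : Set (Cyl d N) :=
  {x | x ∉ U ∧ ∃ y ∈ U, adj d N x y}

/-- `ℓ^∞`-norm on `ℤ^{d+1}`. -/
def linf {d : ℕ} (v : Lat d) : ℕ := Finset.univ.sup fun i => (v i).natAbs

/-- `ℓ^∞`-distance induced on the cylinder. -/
noncomputable def cylDist (d N : ℕ) (x y : Cyl d N) : ℕ :=
  sInf {r : ℕ | ∃ v : Lat d, projE d N v = y - x ∧ linf v = r}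

/-- `S` has `ℓ^∞`-diameter at least `L`. -/
def diamGE (d N : ℕ) (S : Set (Cyl d N)) (L : ℕ) : Prop :=
  ∃ x ∈ S, ∃ y ∈ S, L ≤ cylDist d N x y

/-- `X_{[0,n]}`: the set of points visited up to time `n`. -/
def ran {X : Type*} (ω : ℕ → X) (n : ℕ) : Set X := {y | ∃ i ≤ n, ω i = y}

/-- The set of points visited up to the (possibly infinite) time `t`. -/
def ranE {X : Type*} (ω : ℕ → X) (t : ℕ∞) : Set X :=
  {y | ∃ i : ℕ, (i : ℕ∞) ≤ t ∧ ω i = y}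

/-- `L_m`: projections to `E` of `m`-dimensional affine coordinate lattices of `ℤ^{d+1}`. -/
def Lcoll (d N m : ℕ) : Set (Set (Cyl d N)) :=
  {F | ∃ I : Finset (Fin (d + 1)), I.card = m ∧ ∃ y : Lat d,
      F = (fun v => projE d N (y + v)) '' {v : Lat d | ∀ i ∉ I, v i = 0}}

/-- `A^j_m`: nonempty subsets of `C_j` contained in some `F ∈ L_m`. -/
def Adm (d N : ℕ) (j : ℤ) (m : ℕ) : Set (Finset (Cyl d N)) :=
  {A | A.Nonempty ∧ ↑A ⊆ Cblk d N j ∧ ∃ F ∈ Lcoll d N m, (↑A : Set (Cyl d N)) ⊆ F}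

/-- The segment `{x + k·e : 0 ≤ k ≤ L}` (addition via `π_E`). -/
def segment (d N : ℕ) (x : Cyl d N) (e : Lat d) (L : ℕ) : Set (Cyl d N) :=
  {y | ∃ k : ℕ, k ≤ L ∧ y = x + projE d N ((k : ℤ) • e)}

/-- The event `V_{K,j,t}` (with `k = ⌊t⌋` excursions). -/
def Vev (d N : ℕ) (K : ℝ) (j : ℤ) (k : ℕ) : Set (ℕ → Cyl d N) :=
  {ω | ∀ x ∈ Cblk d N j, ∀ e ∈ unitVecs d, ∃ i : ℕ, (i : ℝ) < Real.sqrt N ∧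
      ∀ l : ℕ, i ≤ l → l ≤ i + ⌊K * Real.log N⌋₊ →
        x + projE d N ((l : ℤ) • e) ∉ ranE ω (DD d N j k ω)}

/-- The event `U_{K,j,t}` (with `k = ⌊t⌋` excursions). -/
def Uev (d N : ℕ) (K : ℝ) (j : ℤ) (k : ℕ) : Set (ℕ → Cyl d N) :=
  {ω | ∀ F ∈ Lcoll d N 2, ∀ n : ℕ, (n : ℕ∞) ≤ DD d N j k ω →
      ∀ O₁ O₂ : Set (Cyl d N),
        O₁ ⊆ (F ∩ Cblk d N j) \ ran ω n → O₂ ⊆ (F ∩ Cblk d N j) \ ran ω n →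
        IsConnIn d N O₁ → IsConnIn d N O₂ →
        diamGE d N O₁ ⌊K * Real.log N⌋₊ → diamGE d N O₂ ⌊K * Real.log N⌋₊ →
        ∀ p ∈ O₁, ∀ q ∈ O₂, connIn d N ((F ∩ Cblk d N j) \ ran ω n) p q}

/-- A (finite) set `S` disconnects the cylinder. -/
def Disconnects (d N : ℕ) (S : Set (Cyl d N)) : Prop :=
  S.Finite ∧ ∃ M₀ : ℕ, ∀ M : ℕ, M₀ ≤ M → ∀ x y : Cyl d N,
    (M : ℤ) ≤ x.2 → y.2 ≤ -(M : ℤ) → ¬ connIn d N Sᶜ x y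

/-- The disconnection time `T_N`. -/
noncomputable def discT (d N : ℕ) (ω : ℕ → Cyl d N) : ℕ∞ :=
  sInf {t : ℕ∞ | ∃ n : ℕ, Disconnects d N (ran ω n) ∧ t = n}

/-- `r ≤ t` for `t : ℕ∞` and a real threshold `r` (trivially true when `t = ⊤`). -/
def geReal (t : ℕ∞) (r : ℝ) : Prop := ∀ n : ℕ, t = (n : ℕ∞) → r ≤ n

/-- `r < t` for `t : ℕ∞` and a real threshold `r` (trivially true when `t = ⊤`). -/
def gtReal (t : ℕ∞) (r : ℝ) : Prop := ∀ n : ℕ, t = (n : ℕ∞) → r < n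

/-- `φ_j(z) = E_z[exp(λ Σ_{x∈A} 1{H_x < T_{B̃_j}})]`. -/
noncomputable def phi (d N : ℕ) (Pl : Cyl d N → Measure (ℕ → Cyl d N)) (j : ℤ) (lam : ℝ)
    (A : Finset (Cyl d N)) (z : Cyl d N) : ℝ :=
  ∫ ω, Real.exp (lam * ∑ x ∈ A, if entT {x} ω < exitT (Btl d N j) ω then (1 : ℝ) else 0)
    ∂(Pl z)

/-- `‖φ_j‖_∞`. -/
noncomputable def phiSup (d N : ℕ) (Pl : Cyl d N → Measure (ℕ → Cyl d N)) (j : ℤ) (lam : ℝ)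
    (A : Finset (Cyl d N)) : ℝ :=
  ⨆ z : Cyl d N, phi d N Pl j lam A z

/-- `q_N = sup {P_z[H_F < T_{B̃_j}] : F ∈ L_m, z ∈ ∂F}`. -/
noncomputable def qNval (d N m : ℕ) (Pl : Cyl d N → Measure (ℕ → Cyl d N)) (j : ℤ) : ℝ :=
  sSup {r : ℝ | ∃ F ∈ Lcoll d N m, ∃ z ∈ bdry d N F,
      r = ((Pl z) {ω | entT F ω < exitT (Btl d N j) ω}).toReal}

/-- The times `τ_k`: `τ_0` is the entrance time of `(ℤ/Nℤ)^d × Nℤ`, and `τ_{k+1}` is the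
first time after `τ_k` at which the vertical component has moved by exactly `N`. -/
noncomputable def tauT (d N : ℕ) : ℕ → (ℕ → Cyl d N) → ℕ∞
  | 0, ω => entT {x : Cyl d N | (N : ℤ) ∣ x.2} ω
  | k + 1, ω =>
      (tauT d N k ω).recTopCoe ⊤ fun m =>
        sInf {t : ℕ∞ | ∃ n : ℕ, m < n ∧ ((ω n).2 - (ω m).2).natAbs = N ∧ t = n}

/-- `*`-adjacency on `ℤ²`. -/
def starAdj (x y : ℤ × ℤ) : Prop :=
  x ≠ y ∧ (x.1 - y.1).natAbs ≤ 1 ∧ (x.2 - y.2).natAbs ≤ 1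


section

lemma taylor4 (s : ℝ) : ∃ c3 C ε : ℝ, 0 < ε ∧ 0 ≤ C ∧ ∀ x : ℝ, |x| ≤ ε →
    (1 + x) ^ (-s) ≤ 1 - s * x + s * (s + 1) / 2 * x ^ 2 + c3 * x ^ 3 + C * x ^ 4 := by
  have h := (Real.one_add_rpow_hasFPowerSeriesAt_zero (a := -s)).isBigO_sub_partialSum_pow 4
  obtain ⟨C, hC, hb⟩ := h.exists_nonneg
  rw [Asymptotics.IsBigOWith] at hb
  obtain ⟨ε, hε, hball⟩ := Metric.eventually_nhds_iff.mp hb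
  refine ⟨Ring.choose (-s) 3, C, ε / 2, by positivity, hC, fun x hx => ?_⟩
  have h1 := hball (y := x) (by rw [Real.dist_eq, sub_zero]; linarith)
  have h2 : (binomialSeries ℝ (-s)).partialSum 4 x
      = 1 - s * x + s * (s + 1) / 2 * x ^ 2 + Ring.choose (-s) 3 * x ^ 3 := by
    have e1 : Ring.choose (-s) 1 = -s := by simp
    have e2 : Ring.choose (-s) 2 = s * (s + 1) / 2 := by
      rw [Ring.choose_eq_smul]
      simp [descPochhammer_succ_left, Polynomial.smeval_sub, Polynomial.smeval_mul,
        Polynomial.smeval_X, Polynomial.smeval_one]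
      ring
    simp [FormalMultilinearSeries.partialSum, Finset.sum_range_succ, binomialSeries, e2]
    ring
  rw [h2] at h1
  simp only [zero_add, Real.norm_eq_abs, abs_pow, abs_abs] at h1
  have h3 := (abs_le.mp h1).2
  have h4 : |x| ^ 4 = x ^ 4 := by
    rw [← abs_pow]; exact abs_of_nonneg (by positivity)
  rw [h4] at h3
  linarith

/-- tangent-line inequality for `x ↦ x^{-s}` -/
lemma rpow_tangent {s x y : ℝ} (hs : 0 ≤ s) (hx : 0 < x) (hy : 0 < y) :
    y ^ (-s) - s * y ^ (-s - 1) * (x - y) ≤ x ^ (-s) := by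
  have h1 : x ^ (-s) = y ^ (-s) * (x / y) ^ (-s) := by
    rw [← Real.mul_rpow hy.le (by positivity)]
    congr 1
    field_simp
  have h2 : y ^ (-s - 1) = y ^ (-s) / y := by
    rw [Real.rpow_sub hy, Real.rpow_one]
  have h3 : 1 - s * (x / y - 1) ≤ (x / y) ^ (-s) := by
    rw [Real.rpow_def_of_pos (by positivity)]
    have := Real.add_one_le_exp (Real.log (x / y) * (-s))
    have h4 := Real.log_le_sub_one_of_pos (show 0 < x / y by positivity)
    nlinarith
  rw [h1, h2]
  have h5 : 0 < y ^ (-s) := Real.rpow_pos_of_pos hy _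
  have : y ^ (-s) - s * (y ^ (-s) / y) * (x - y) = y ^ (-s) * (1 - s * (x / y - 1)) := by
    field_simp
  rw [this]
  exact mul_le_mul_of_nonneg_left h3 h5.le

/-- squared Euclidean norm -/
def nsq {n : ℕ} (v : Fin n → ℤ) : ℝ := ∑ i, ((v i : ℤ) : ℝ) ^ 2

lemma nsq_nonneg {n : ℕ} (v : Fin n → ℤ) : 0 ≤ nsq v := Finset.sum_nonneg fun _ _ => sq_nonneg _

lemma coord_sq_le {n : ℕ} (v : Fin n → ℤ) (i : Fin n) : ((v i : ℤ) : ℝ) ^ 2 ≤ nsq v :=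
  Finset.single_le_sum (f := fun i => ((v i : ℤ) : ℝ) ^ 2) (fun _ _ => sq_nonneg _)
    (Finset.mem_univ i)

set_option maxHeartbeats 1000000 in
lemma superharm (n : ℕ) (hn : 3 ≤ n) (s : ℝ) (hs : 2 * s + 2 = n) :
    ∃ a : ℝ, 1 ≤ a ∧ ∀ v : Fin n → ℤ,
      ∑ i, ((nsq v + a + 1 + 2 * v i) ^ (-s) + (nsq v + a + 1 - 2 * v i) ^ (-s))
        ≤ 2 * n * (nsq v + a) ^ (-s) := by
  have hn' : (3 : ℝ) ≤ n := by exact_mod_cast hn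
  have hspos : 0 < s := by linarith
  obtain ⟨c3, C, ε, hε, hC, hT⟩ := taylor4 s
  set a : ℝ := max 4 (max (9 / ε ^ 2)
    ((n * (s * (s + 1)) + |c3| * (2 * n + 24) + 16 * C * (n + 16)) / (4 * (s * (s + 1))))) with ha
  have ha1 : 4 ≤ a := le_max_left _ _
  have ha2 : 9 / ε ^ 2 ≤ a := le_trans (le_max_left _ _) (le_max_right _ _)
  have ha3 : (n * (s * (s + 1)) + |c3| * (2 * n + 24) + 16 * C * (n + 16)) / (4 * (s * (s + 1))) ≤ a :=
    le_trans (le_max_right _ _) (le_max_right _ _)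
  refine ⟨a, by linarith, fun v => ?_⟩
  set ρ : ℝ := nsq v + a with hρ
  have hv0 := nsq_nonneg v
  have hρ4 : 4 ≤ ρ := by linarith
  have hρ0 : 0 < ρ := by linarith
  set c : ℝ := 1 / ρ with hc
  have hc0 : 0 < c := by positivity
  have hcρ : c * ρ = 1 := by rw [hc]; field_simp
  have hc1 : c ≤ 1 := by nlinarith
  set δ : Fin n → ℝ := fun i => 2 * v i * c with hδ
  have hδsq : ∀ i, (δ i) ^ 2 ≤ 4 * c := by
    intro i
    have h1 := coord_sq_le v i
    have : (δ i) ^ 2 = 4 * (v i : ℝ) ^ 2 * c ^ 2 := by rw [hδ]; ring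
    rw [this]
    have h2 : (v i : ℝ) ^ 2 * c ^ 2 ≤ ρ * c ^ 2 := mul_le_mul_of_nonneg_right (by linarith) (by positivity)
    nlinarith
  have hsmall : ∀ x : ℝ, x ^ 2 ≤ 9 * c → |x| ≤ ε := by
    intro x hx
    apply abs_le_of_sq_le_sq _ hε.le
    have h1 : 9 / ε ^ 2 ≤ ρ := by linarith
    rw [div_le_iff₀ (by positivity)] at h1
    nlinarith
  have hδ2 : ∀ i, |δ i| ≤ 2 * (c * ρ) := by
    intro i
    apply abs_le_of_sq_le_sq _ (by positivity)
    rw [hcρ]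
    nlinarith [hδsq i]
  have hplus : ∀ i, (c + δ i) ^ 2 ≤ 9 * c ∧ (c - δ i) ^ 2 ≤ 9 * c := by
    intro i
    have h1 := hδsq i
    have h2 : c ^ 2 ≤ c / 4 := by nlinarith
    constructor
    · nlinarith [sq_nonneg (2 * c - δ i), sq_nonneg (2 * c + δ i)]
    · nlinarith [sq_nonneg (2 * c - δ i), sq_nonneg (2 * c + δ i)]
  have hfac : ∀ x : ℝ, x ^ 2 ≤ 9 * c → ∀ y : ℝ, y = ρ * (1 + x) → 0 ≤ 1 + x →
      y ^ (-s) ≤ ρ ^ (-s) * (1 - s * x + s * (s + 1) / 2 * x ^ 2 + c3 * x ^ 3 + C * x ^ 4) := by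
    intro x hx y hy h1x
    rw [hy, Real.mul_rpow hρ0.le h1x]
    exact mul_le_mul_of_nonneg_left (hT x (hsmall x hx)) (Real.rpow_nonneg hρ0.le _)
  have hpos : ∀ i, 0 ≤ 1 + (c + δ i) ∧ 0 ≤ 1 + (c - δ i) := by
    intro i
    have h1 := hδsq i
    have h2 : |δ i| ≤ 1 := by
      apply abs_le_of_sq_le_sq _ (by norm_num)
      nlinarith
    have := abs_le.mp h2
    constructor <;> linarith
  have hterm : ∀ i, (ρ + 1 + 2 * v i) ^ (-s) + (ρ + 1 - 2 * v i) ^ (-s) ≤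
      ρ ^ (-s) * (2 - 2 * s * c + s * (s + 1) * (c ^ 2 + (δ i) ^ 2)
        + (|c3| * (2 * c ^ 2 + 6 * c * (δ i) ^ 2)) + 16 * C * (c ^ 2 + (δ i) ^ 4)) := by
    intro i
    have e1 : (ρ + 1 + 2 * v i : ℝ) = ρ * (1 + (c + δ i)) := by
      simp only [hδ]
      have : ρ * (1 + (c + 2 * (v i : ℝ) * c)) = ρ + (c * ρ) + 2 * v i * (c * ρ) := by ring
      rw [this, hcρ]; ring
    have e2 : (ρ + 1 - 2 * v i : ℝ) = ρ * (1 + (c - δ i)) := by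
      simp only [hδ]
      have : ρ * (1 + (c - 2 * (v i : ℝ) * c)) = ρ + (c * ρ) - 2 * v i * (c * ρ) := by ring
      rw [this, hcρ]; ring
    have f1 := hfac _ (hplus i).1 _ e1 (hpos i).1
    have f2 := hfac _ (hplus i).2 _ e2 (hpos i).2
    refine (add_le_add f1 f2).trans ?_
    rw [← mul_add]
    apply mul_le_mul_of_nonneg_left _ (Real.rpow_nonneg hρ0.le _)
    have g3 : c3 * (2 * c ^ 3 + 6 * c * (δ i) ^ 2) ≤ |c3| * (2 * c ^ 2 + 6 * c * (δ i) ^ 2) := by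
      have : c ^ 3 ≤ c ^ 2 := pow_le_pow_of_le_one hc0.le hc1 (by norm_num)
      apply mul_le_mul (le_abs_self _) (by linarith) (by positivity) (abs_nonneg _)
    have g4 : (c + δ i) ^ 4 + (c - δ i) ^ 4 ≤ 16 * (c ^ 2 + (δ i) ^ 4) := by
      have : c ^ 4 ≤ c ^ 2 := pow_le_pow_of_le_one hc0.le hc1 (by norm_num)
      nlinarith [sq_nonneg (c ^ 2 - (δ i) ^ 2), sq_nonneg (c ^ 2), sq_nonneg ((δ i) ^ 2)]
    have g5 := mul_le_mul_of_nonneg_left g4 hC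
    have e3 : 1 - s * (c + δ i) + s * (s + 1) / 2 * (c + δ i) ^ 2 + c3 * (c + δ i) ^ 3
        + C * (c + δ i) ^ 4 + (1 - s * (c - δ i) + s * (s + 1) / 2 * (c - δ i) ^ 2
        + c3 * (c - δ i) ^ 3 + C * (c - δ i) ^ 4)
        = 2 - 2 * s * c + s * (s + 1) * (c ^ 2 + (δ i) ^ 2) + c3 * (2 * c ^ 3 + 6 * c * (δ i) ^ 2)
          + C * ((c + δ i) ^ 4 + (c - δ i) ^ 4) := by ring
    rw [e3]
    linarith
  refine (Finset.sum_le_sum fun i _ => hterm i).trans ?_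
  rw [← Finset.mul_sum, mul_comm (2 * (n : ℝ))]
  apply mul_le_mul_of_nonneg_left _ (Real.rpow_nonneg hρ0.le _)
  have hS2 : ∑ i, (δ i) ^ 2 = 4 * c - 4 * a * c ^ 2 := by
    have : ∀ i, (δ i) ^ 2 = 4 * c ^ 2 * (v i : ℝ) ^ 2 := fun i => by simp only [hδ]; ring
    simp_rw [this]
    rw [← Finset.mul_sum]
    have h2 : ∑ i, (v i : ℝ) ^ 2 = ρ - a := by rw [hρ]; simp [nsq]
    rw [h2]
    have : 4 * c ^ 2 * (ρ - a) = 4 * c * (c * ρ) - 4 * a * c ^ 2 := by ring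
    rw [this, hcρ]; ring
  have hS4 : ∑ i, (δ i) ^ 4 ≤ 16 * c ^ 2 := by
    have h1 : ∑ i, (δ i) ^ 4 ≤ ∑ i, (4 * c) * (δ i) ^ 2 := by
      apply Finset.sum_le_sum
      intro i _
      have := hδsq i
      nlinarith [sq_nonneg (δ i)]
    rw [← Finset.mul_sum, hS2] at h1
    nlinarith [mul_pos hc0 (sq_pos_of_pos hc0)]
  have hsum : ∑ i, (2 - 2 * s * c + s * (s + 1) * (c ^ 2 + (δ i) ^ 2)
        + (|c3| * (2 * c ^ 2 + 6 * c * (δ i) ^ 2)) + 16 * C * (c ^ 2 + (δ i) ^ 4))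
      = n * (2 - 2 * s * c + s * (s + 1) * c ^ 2 + |c3| * (2 * c ^ 2) + 16 * C * c ^ 2)
        + (s * (s + 1) + |c3| * (6 * c)) * ∑ i, (δ i) ^ 2 + 16 * C * ∑ i, (δ i) ^ 4 := by
    rw [Finset.mul_sum, Finset.mul_sum]
    have : (n : ℝ) * (2 - 2 * s * c + s * (s + 1) * c ^ 2 + |c3| * (2 * c ^ 2) + 16 * C * c ^ 2)
        = ∑ _i : Fin n,
          (2 - 2 * s * c + s * (s + 1) * c ^ 2 + |c3| * (2 * c ^ 2) + 16 * C * c ^ 2) := by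
      rw [Finset.sum_const, Finset.card_univ, Fintype.card_fin, nsmul_eq_mul]
    rw [this, ← Finset.sum_add_distrib, ← Finset.sum_add_distrib]
    apply Finset.sum_congr rfl
    intro i _
    ring
  rw [hsum, hS2]
  have k1 : |c3| * (6 * c) * (4 * c - 4 * a * c ^ 2) ≤ |c3| * (24 * c ^ 2) := by
    have h1 : 0 ≤ |c3| * (6 * c) * (4 * a * c ^ 2) := by positivity
    have h2 : |c3| * (6 * c) * (4 * c - 4 * a * c ^ 2)
      = |c3| * (24 * c ^ 2) - |c3| * (6 * c) * (4 * a * c ^ 2) := by ring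
    linarith
  have k2 := mul_le_mul_of_nonneg_left hS4 (show 0 ≤ 16 * C by positivity)
  have k3 : n * (s * (s + 1)) + |c3| * (2 * n + 24) + 16 * C * (n + 16) ≤ a * (4 * (s * (s + 1))) := by
    rwa [div_le_iff₀ (by positivity)] at ha3
  have k4 := mul_le_mul_of_nonneg_right k3 (sq_nonneg c)
  have k5 : (n : ℝ) * (2 * s * c) = 4 * (s * (s + 1)) * c := by rw [← hs]; ring
  linear_combination k1 + k2 + k4 - k5

end

section

/-- tangent-difference function -/
noncomputable def Hfun (s R ρ : ℝ) : ℝ := ρ ^ (-s) - R ^ (-s) + s * R ^ (-s - 1) * (ρ - R)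

/-- truncated Green-type function -/
noncomputable def Gfun (s R ρ : ℝ) : ℝ := if ρ ≤ R then Hfun s R ρ else 0

lemma Hfun_nonneg {s R ρ : ℝ} (hs : 0 ≤ s) (hR : 0 < R) (hρ : 0 < ρ) : 0 ≤ Hfun s R ρ := by
  have := rpow_tangent hs hρ hR
  unfold Hfun
  linarith

lemma Gfun_nonneg {s R ρ : ℝ} (hs : 0 ≤ s) (hR : 0 < R) (hρ : 0 < ρ) : 0 ≤ Gfun s R ρ := by
  unfold Gfun
  split_ifs
  · exact Hfun_nonneg hs hR hρ
  · exact le_rfl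

lemma Gfun_le_Hfun {s R ρ : ℝ} (hs : 0 ≤ s) (hR : 0 < R) (hρ : 0 < ρ) :
    Gfun s R ρ ≤ Hfun s R ρ := by
  unfold Gfun
  split_ifs
  · exact le_rfl
  · exact Hfun_nonneg hs hR hρ

lemma Gfun_kink {s R ρ w : ℝ} (hs : 0 ≤ s) (hR : 16 ≤ R) (hρ : R < ρ) (hw : w ^ 2 ≤ ρ) :
    Gfun s R (ρ + 1 + 2 * w) ≤ s * (s + 1) * (4 * 4 ^ (s + 2)) * R ^ (-s - 1) := by
  have hR0 : 0 < R := by linarith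
  unfold Gfun
  split_ifs with h
  swap
  · positivity
  set y := ρ + 1 + 2 * w with hy
  set q := Real.sqrt R with hq
  have hq2 : q ^ 2 = R := Real.sq_sqrt hR0.le
  have hq4 : 4 ≤ q := Real.le_sqrt_of_sq_le (by linarith)
  set r := Real.sqrt ρ with hr
  have hr2 : r ^ 2 = ρ := Real.sq_sqrt (by linarith)
  have hqr : q ≤ r := Real.sqrt_le_sqrt hρ.le
  have hwr : |w| ≤ r := abs_le_of_sq_le_sq (by rw [hr2]; exact hw) (by linarith)
  have hwr' := (abs_le.mp hwr).1
  have hy1 : (r - 1) ^ 2 ≤ y := by rw [hy]; nlinarith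
  have hy2 : (q - 1) ^ 2 ≤ y := le_trans (by nlinarith) hy1
  have hd : R - y ≤ 2 * q := by nlinarith
  have hd2 : (R - y) ^ 2 ≤ 4 * R := by nlinarith
  have hy4 : R / 4 ≤ y := by nlinarith
  have hy0 : 0 < y := by linarith
  have t1 := rpow_tangent hs hR0 hy0
  have t2 := rpow_tangent (s := s + 1) (by linarith) hR0 hy0
  have e1 : -(s + 1) = -s - 1 := by ring
  rw [e1] at t2
  have t3 : Hfun s R y ≤ s * (s + 1) * y ^ (-s - 1 - 1) * (R - y) ^ 2 := by
    unfold Hfun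
    have h1 : y ^ (-s - 1) - R ^ (-s - 1) ≤ (s + 1) * y ^ (-s - 1 - 1) * (R - y) := by linarith
    have h2 := mul_le_mul_of_nonneg_left h1 (show 0 ≤ s * (R - y) from mul_nonneg hs (by linarith))
    linear_combination t1 + h2
  have t4 : y ^ (-s - 1 - 1) ≤ 4 ^ (s + 2) * R ^ (-s - 1 - 1) := by
    have h1 : y ^ (-s - 1 - 1) ≤ (R / 4) ^ (-s - 1 - 1) :=
      Real.rpow_le_rpow_of_nonpos (by positivity) hy4 (by linarith)
    refine h1.trans (le_of_eq ?_)
    rw [Real.div_rpow hR0.le (by norm_num), div_eq_mul_inv, ← Real.rpow_neg (by norm_num), mul_comm]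
    congr 2
    ring
  have t5 : R ^ (-s - 1 - 1) * R = R ^ (-s - 1) := by
    rw [Real.rpow_sub_one hR0.ne']
    field_simp
  calc Hfun s R y ≤ s * (s + 1) * y ^ (-s - 1 - 1) * (R - y) ^ 2 := t3
    _ ≤ s * (s + 1) * (4 ^ (s + 2) * R ^ (-s - 1 - 1)) * (4 * R) := by gcongr
    _ = s * (s + 1) * (4 * 4 ^ (s + 2)) * (R ^ (-s - 1 - 1) * R) := by ring
    _ = _ := by rw [t5]

/-- The constants and one-step estimate for the truncated function. -/
lemma Gstep (n : ℕ) (hn : 3 ≤ n) (s : ℝ) (hs : 2 * s + 2 = n) :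
    ∃ a C1 R0 g0 : ℝ, 1 ≤ a ∧ 0 ≤ C1 ∧ 16 ≤ R0 ∧ 0 < g0 ∧ ∀ R : ℝ, R0 ≤ R →
      g0 ≤ Gfun s R a ∧
      ∀ v : Fin n → ℤ,
      ∑ i, (Gfun s R (nsq v + a + 1 + 2 * v i) + Gfun s R (nsq v + a + 1 - 2 * v i))
        ≤ 2 * n * Gfun s R (nsq v + a) + C1 * R ^ (-s - 1) := by
  have hn' : (3 : ℝ) ≤ n := by exact_mod_cast hn
  have hspos : 0 < s := by linarith
  obtain ⟨a, ha, hsup⟩ := superharm n hn s hs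
  have ha0 : 0 < a := by linarith
  have hlim : Tendsto (fun R : ℝ => (1 + s) * R ^ (-s)) atTop (nhds ((1 + s) * 0)) :=
    (tendsto_rpow_neg_atTop hspos).const_mul _
  rw [mul_zero] at hlim
  have hga : 0 < a ^ (-s) := Real.rpow_pos_of_pos ha0 _
  obtain ⟨R1, hR1⟩ := eventually_atTop.mp (hlim.eventually (gt_mem_nhds (half_pos hga)))
  refine ⟨a, n * (2 * s) + n * (2 * (s * (s + 1) * (4 * 4 ^ (s + 2)))), max 16 (max a R1),
    a ^ (-s) / 2, ha, by positivity, le_max_left _ _, by positivity, fun R hR => ?_⟩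
  have hR16 : 16 ≤ R := le_trans (le_max_left _ _) hR
  have hRa : a ≤ R := le_trans (le_trans (le_max_left _ _) (le_max_right _ _)) hR
  have hRR1 : R1 ≤ R := le_trans (le_trans (le_max_right _ _) (le_max_right _ _)) hR
  have hR0 : 0 < R := by linarith
  have e1 : R ^ (-s - 1) * R = R ^ (-s) := by
    rw [Real.rpow_sub_one hR0.ne']
    field_simp
  have hRp : 0 < R ^ (-s - 1) := Real.rpow_pos_of_pos hR0 _
  constructor
  · have h1 := hR1 R hRR1
    unfold Gfun
    rw [if_pos hRa]
    unfold Hfun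
    have : s * R ^ (-s - 1) * (a - R) = s * R ^ (-s - 1) * a - s * R ^ (-s) := by
      rw [← e1]; ring
    rw [this]
    have : 0 ≤ s * R ^ (-s - 1) * a := by positivity
    linarith
  intro v
  have hv0 := nsq_nonneg v
  set ρ := nsq v + a with hρ
  have hρ0 : 0 < ρ := by linarith
  have hvi : ∀ i, (v i : ℝ) ^ 2 ≤ nsq v := coord_sq_le v
  have hpos1 : ∀ i, 0 < ρ + 1 + 2 * (v i : ℝ) := fun i => by nlinarith [hvi i, sq_nonneg ((v i : ℝ) + 1)]
  have hpos2 : ∀ i, 0 < ρ + 1 - 2 * (v i : ℝ) := fun i => by nlinarith [hvi i, sq_nonneg ((v i : ℝ) - 1)]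
  by_cases hcase : ρ ≤ R
  · have h1 : ∑ i, (Gfun s R (ρ + 1 + 2 * v i) + Gfun s R (ρ + 1 - 2 * v i)) ≤
        ∑ i, (Hfun s R (ρ + 1 + 2 * v i) + Hfun s R (ρ + 1 - 2 * v i)) := by
      apply Finset.sum_le_sum
      intro i _
      exact add_le_add (Gfun_le_Hfun hspos.le hR0 (hpos1 i)) (Gfun_le_Hfun hspos.le hR0 (hpos2 i))
    have h2 : ∑ i, (Hfun s R (ρ + 1 + 2 * v i) + Hfun s R (ρ + 1 - 2 * v i))
        = ∑ i, ((ρ + 1 + 2 * v i) ^ (-s) + (ρ + 1 - 2 * v i) ^ (-s))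
          + n * (2 * (- R ^ (-s) + s * R ^ (-s - 1) * (ρ + 1 - R))) := by
      have : (n : ℝ) * (2 * (- R ^ (-s) + s * R ^ (-s - 1) * (ρ + 1 - R)))
          = ∑ _i : Fin n, (2 * (- R ^ (-s) + s * R ^ (-s - 1) * (ρ + 1 - R))) := by
        rw [Finset.sum_const, Finset.card_univ, Fintype.card_fin, nsmul_eq_mul]
      rw [this, ← Finset.sum_add_distrib]
      apply Finset.sum_congr rfl
      intro i _
      unfold Hfun
      ring
    have h3 := hsup v
    have h4 : Gfun s R ρ = Hfun s R ρ := by unfold Gfun; rw [if_pos hcase]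
    rw [h4]
    unfold Hfun
    have h5 : 0 ≤ n * (2 * (s * (s + 1) * (4 * 4 ^ (s + 2)))) * R ^ (-s - 1) := by positivity
    linear_combination h1 + h2 + h3 + h5
  · push Not at hcase
    have h4 : Gfun s R ρ = 0 := by unfold Gfun; rw [if_neg (not_le.mpr hcase)]
    rw [h4]
    have h1 : ∑ i, (Gfun s R (ρ + 1 + 2 * v i) + Gfun s R (ρ + 1 - 2 * v i)) ≤
        ∑ _i : Fin n, (2 * (s * (s + 1) * (4 * 4 ^ (s + 2)) * R ^ (-s - 1))) := by
      apply Finset.sum_le_sum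
      intro i _
      have k1 := Gfun_kink (w := (v i : ℝ)) hspos.le hR16 hcase (by linarith [hvi i])
      have k2 := Gfun_kink (w := -(v i : ℝ)) hspos.le hR16 hcase (by rw [neg_sq]; linarith [hvi i])
      have : ρ + 1 + 2 * -(v i : ℝ) = ρ + 1 - 2 * v i := by ring
      rw [this] at k2
      linarith
    rw [Finset.sum_const, Finset.card_univ, Fintype.card_fin, nsmul_eq_mul] at h1
    have h5 : 0 ≤ n * (2 * s) * R ^ (-s - 1) := by positivity
    linear_combination h1 + h5

end

section

/-- The law `P` is that of a Markov chain with transition `p` started at `x`. -/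
def IsChain {S : Type*} [MeasurableSpace S] (p : S → S → ℝ≥0∞) (x : S) (P : Measure (ℕ → S)) : Prop :=
  ∀ (n : ℕ) (γ : ℕ → S), P {ω | ∀ i ≤ n, ω i = γ i} =
        (if γ 0 = x then 1 else 0) * ∏ i ∈ Finset.range n, p (γ i) (γ (i + 1))

/-- `F` depends only on coordinates `≤ n`. -/
def Dep {S T : Type*} (n : ℕ) (F : (ℕ → S) → T) : Prop :=
  ∀ ω ω' : ℕ → S, (∀ i ≤ n, ω i = ω' i) → F ω = F ω'

lemma Dep.mono {S T : Type*} {n m : ℕ} {F : (ℕ → S) → T} (h : Dep n F) (hm : n ≤ m) : Dep m F :=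
  fun ω ω' hh => h ω ω' fun i hi => hh i (hi.trans hm)

/-- Extension of a finite initial piece. -/
def ext0 {S : Type*} {n : ℕ} (g : Fin (n + 1) → S) : ℕ → S :=
  fun i => if h : i < n + 1 then g ⟨i, h⟩ else g 0

lemma ext0_apply {S : Type*} {n : ℕ} (g : Fin (n + 1) → S) (i : Fin (n + 1)) : ext0 g i = g i := by
  unfold ext0; rw [dif_pos i.2]

lemma ext0_prefix {S : Type*} {n : ℕ} (ω : ℕ → S) (i : ℕ) (hi : i ≤ n) :
    ext0 (fun j : Fin (n + 1) => ω j) i = ω i := by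
  simp [ext0, Nat.lt_succ_of_le hi]

variable {S : Type*} [MeasurableSpace S] [Countable S] [MeasurableSingletonClass S]

lemma lint_prefix (P : Measure (ℕ → S)) (n : ℕ) (F : (ℕ → S) → ℝ≥0∞) (hF : Dep n F) :
    ∫⁻ ω, F ω ∂P = ∑' g : Fin (n + 1) → S, F (ext0 g) * P {ω | ∀ i ≤ n, ω i = ext0 g i} := by
  have hm : Measurable (fun (ω : ℕ → S) (j : Fin (n + 1)) => ω j) := by fun_prop
  have h1 : ∀ ω, F ω = (fun g : Fin (n + 1) → S => F (ext0 g)) (fun j : Fin (n + 1) => ω j) := by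
    intro ω
    apply hF
    intro i hi
    exact (ext0_prefix ω i hi).symm
  calc ∫⁻ ω, F ω ∂P = ∫⁻ ω, (fun g : Fin (n + 1) → S => F (ext0 g)) (fun j : Fin (n + 1) => ω j) ∂P :=
        lintegral_congr h1
    _ = ∫⁻ g, F (ext0 g) ∂(P.map (fun (ω : ℕ → S) (j : Fin (n + 1)) => ω j)) := by
        rw [lintegral_map _ hm]
        exact measurable_of_countable _
    _ = _ := by
        rw [lintegral_countable']
        refine tsum_congr fun g => ?_
        rw [Measure.map_apply hm (measurableSet_singleton _)]
        congr 2
        ext ω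
        simp only [Set.mem_preimage, Set.mem_singleton_iff, Set.mem_ofPred_eq]
        constructor
        · rintro rfl i hi
          exact (ext0_prefix ω i hi).symm
        · intro h
          funext j
          rw [h j (Nat.lt_succ_iff.mp j.2), ext0_apply]

lemma lint_step {p : S → S → ℝ≥0∞} {x : S} {P : Measure (ℕ → S)} (hP : IsChain p x P) (n : ℕ)
    (F : (ℕ → S) → S → ℝ≥0∞) (hF : Dep n F) :
    ∫⁻ ω, F ω (ω (n + 1)) ∂P = ∫⁻ ω, ∑' y, F ω y * p (ω n) y ∂P := by
  have hd1 : Dep (n + 1) (fun ω : ℕ → S => F ω (ω (n + 1))) := by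
    intro ω ω' h
    simp only
    rw [hF ω ω' fun i hi => h i (by omega), h (n + 1) le_rfl]
  have hd2 : Dep n (fun ω : ℕ → S => ∑' y, F ω y * p (ω n) y) := by
    intro ω ω' h
    simp only
    rw [hF ω ω' h, h n le_rfl]
  rw [lint_prefix P (n + 1) _ hd1, lint_prefix P n _ hd2]
  have e := (Fin.snocEquiv (fun _ : Fin (n + 2) => S))
  rw [← (Fin.snocEquiv (fun _ : Fin (n + 1 + 1) => S)).tsum_eq, ENNReal.tsum_prod', ENNReal.tsum_comm]
  refine tsum_congr fun g => ?_
  rw [← ENNReal.tsum_mul_right]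
  refine tsum_congr fun y => ?_
  have hg : ∀ i ≤ n, ext0 (Fin.snocEquiv (fun _ : Fin (n + 1 + 1) => S) (y, g)) i = ext0 g i := by
    intro i hi
    have h1 : i < n + 1 + 1 := by omega
    have h2 : i < n + 1 := by omega
    simp only [ext0, h1, h2, dif_pos, Fin.snocEquiv]
    exact Fin.snoc_castSucc (α := fun _ => S) y g ⟨i, h2⟩
  have hy : ext0 (Fin.snocEquiv (fun _ : Fin (n + 1 + 1) => S) (y, g)) (n + 1) = y := by
    simp only [ext0, Fin.snocEquiv, Nat.lt_succ_self, dif_pos]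
    exact Fin.snoc_last (α := fun _ => S) y g
  rw [hP, hP, Finset.prod_range_succ, hy, hg 0 (by omega), hg n le_rfl,
    hF _ _ hg]
  have : ∏ i ∈ Finset.range n, p (ext0 (Fin.snocEquiv (fun _ : Fin (n + 1 + 1) => S) (y, g)) i)
      (ext0 (Fin.snocEquiv (fun _ : Fin (n + 1 + 1) => S) (y, g)) (i + 1))
      = ∏ i ∈ Finset.range n, p (ext0 g i) (ext0 g (i + 1)) := by
    refine Finset.prod_congr rfl fun i hi => ?_
    rw [hg i (Finset.mem_range.mp hi).le, hg (i + 1) (Finset.mem_range.mp hi)]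
  rw [this]
  ring

lemma lint_prod_le {p : S → S → ℝ≥0∞} {x : S} {P : Measure (ℕ → S)} [IsProbabilityMeasure P]
    (hP : IsChain p x P)
    (ξ : ℕ → (ℕ → S) → S → ℝ≥0∞) (hξ : ∀ k, Dep k (ξ k))
    (hle : ∀ k ω, ∑' y, ξ k ω y * p (ω k) y ≤ 1) (n : ℕ) :
    ∫⁻ ω, ∏ i ∈ Finset.range n, ξ i ω (ω (i + 1)) ∂P ≤ 1 := by
  induction n with
  | zero => simp
  | succ n ih =>
    refine le_trans ?_ ih
    simp only [Finset.prod_range_succ]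
    rw [lint_step hP n (fun ω y => (∏ i ∈ Finset.range n, ξ i ω (ω (i + 1))) * ξ n ω y)]
    · refine lintegral_mono fun ω => ?_
      simp only [mul_assoc]
      rw [ENNReal.tsum_mul_left]
      calc _ ≤ (∏ i ∈ Finset.range n, ξ i ω (ω (i + 1))) * 1 := by gcongr; exact hle n ω
        _ = _ := mul_one _
    · intro ω ω' h
      funext y
      have : ∏ i ∈ Finset.range n, ξ i ω (ω (i + 1)) = ∏ i ∈ Finset.range n, ξ i ω' (ω' (i + 1)) := by
        refine Finset.prod_congr rfl fun i hi => ?_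
        have hi' := Finset.mem_range.mp hi
        rw [hξ i ω ω' fun j hj => h j (by omega), h (i + 1) hi']
      simp only
      rw [this, hξ n ω ω' h]

lemma lint_shift {p : S → S → ℝ≥0∞} (P : S → Measure (ℕ → S)) (hP : ∀ x, IsChain p x (P x)) (x : S)
    (n : ℕ) (F : (ℕ → S) → ℝ≥0∞) (hF : Dep n F) :
    ∫⁻ ω, F (fun k => ω (k + 1)) ∂(P x) = ∑' y, p x y * ∫⁻ ω, F ω ∂(P y) := by
  have hd : Dep (n + 1) (fun ω : ℕ → S => F (fun k => ω (k + 1))) := by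
    intro ω ω' h
    exact hF _ _ fun i hi => h (i + 1) (by omega)
  rw [lint_prefix (P x) (n + 1) _ hd]
  simp_rw [lint_prefix (P _) n _ hF]
  simp_rw [← ENNReal.tsum_mul_left]
  rw [ENNReal.tsum_comm]
  rw [← (Fin.consEquiv (fun _ : Fin (n + 1 + 1) => S)).tsum_eq, ENNReal.tsum_prod', ENNReal.tsum_comm]
  refine tsum_congr fun g => ?_
  have hg : ∀ z, ∀ i ≤ n, ext0 (Fin.consEquiv (fun _ : Fin (n + 1 + 1) => S) (z, g)) (i + 1) = ext0 g i := by
    intro z i hi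
    have h1 : i + 1 < n + 1 + 1 := by omega
    have h2 : i < n + 1 := by omega
    simp only [ext0, h1, h2, dif_pos, Fin.consEquiv]
    exact Fin.cons_succ (α := fun _ => S) z g ⟨i, h2⟩
  have hz : ∀ z, ext0 (Fin.consEquiv (fun _ : Fin (n + 1 + 1) => S) (z, g)) 0 = z := by
    intro z
    simp [ext0, Fin.consEquiv]
  rw [tsum_eq_single x, tsum_eq_single (ext0 g 0)]
  · rw [hP, hP, Finset.prod_range_succ', hz, hg x 0 (by omega), hF _ _ (hg x)]
    have : ∏ i ∈ Finset.range n, p (ext0 (Fin.consEquiv (fun _ : Fin (n + 1 + 1) => S) (x, g)) (i + 1))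
        (ext0 (Fin.consEquiv (fun _ : Fin (n + 1 + 1) => S) (x, g)) (i + 1 + 1))
        = ∏ i ∈ Finset.range n, p (ext0 g i) (ext0 g (i + 1)) := by
      refine Finset.prod_congr rfl fun i hi => ?_
      rw [hg x i (Finset.mem_range.mp hi).le, hg x (i + 1) (Finset.mem_range.mp hi)]
    rw [this]
    simp only [if_true, one_mul]
    ring
  · intro y hy
    rw [hP]
    simp [Ne.symm hy]
  · intro z hz'
    rw [hP, hz]
    simp [hz']

end

section

instance instMSCZ (N : ℕ) : MeasurableSingletonClass (ZMod N) := ⟨fun _ => trivial⟩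

lemma cylChain {d N : ℕ} {Pl : Cyl d N → Measure (ℕ → Cyl d N)} (h : IsCylRW d N Pl) (x : Cyl d N) :
    IsChain (stepProb d N) x (Pl x) := by
  intro n γ
  convert h.2 x n γ

lemma latChain {ν : ℕ} {Ql : ZLat ν → Measure (ℕ → ZLat ν)} (h : IsLatRW ν Ql) (x : ZLat ν) :
    IsChain (zStep ν) x (Ql x) := by
  intro n γ
  convert h.2 x n γ

lemma unit_inj (n : ℕ) : Function.Injective
    (fun p : Fin n × Bool => (Pi.single p.1 (if p.2 then (1 : ℤ) else -1) : Fin n → ℤ)) := by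
  rintro ⟨i, a⟩ ⟨j, b⟩ h
  simp only at h
  have h1 := congrFun h i
  have h2 := congrFun h j
  by_cases hij : i = j
  · subst hij
    cases a <;> cases b <;> simp_all
  · exfalso
    simp only [Pi.single_eq_same, Pi.single_eq_of_ne hij] at h1
    cases a <;> simp at h1

lemma sum_unitVecs {M : Type*} [AddCommMonoid M] (d : ℕ) (f : Lat d → M) :
    ∑ u ∈ unitVecs d, f u = ∑ i : Fin (d + 1), (f (Pi.single i 1) + f (Pi.single i (-1))) := by
  unfold unitVecs
  rw [Finset.sum_image (fun a _ b _ h => unit_inj (d + 1) h), Fintype.sum_prod_type]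
  simp

lemma tsum_stepProb (d N : ℕ) (z : Cyl d N) (h : Cyl d N → ℝ≥0∞) :
    ∑' y, h y * stepProb d N z y = (∑ u ∈ unitVecs d, h (z + projE d N u)) / (2 * (d + 1)) := by
  have h1 : ∀ y, h y * stepProb d N z y =
      (∑ u ∈ unitVecs d, if y = z + projE d N u then h y else 0) / (2 * (d + 1)) := by
    intro y
    unfold stepProb
    rw [Finset.card_eq_sum_ones, ← mul_div_assoc, Nat.cast_sum, Finset.mul_sum, Finset.sum_filter]
    congr 1
    refine Finset.sum_congr rfl fun u _ => ?_
    by_cases hy : z + projE d N u = y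
    · simp [hy]
    · simp [hy, Ne.symm hy]
  simp_rw [h1, div_eq_mul_inv]
  rw [ENNReal.tsum_mul_right]
  congr 1
  rw [Summable.tsum_finsetSum (fun _ _ => ENNReal.summable)]
  refine Finset.sum_congr rfl fun u _ => ?_
  rw [tsum_ite_eq]

lemma tsum_zStep (ν : ℕ) (z : ZLat ν) (h : ZLat ν → ℝ≥0∞) :
    ∑' y, zStep ν z y * h y =
      (∑ i : Fin ν, (h (z + Pi.single i 1) + h (z + Pi.single i (-1)))) / (2 * ν) := by
  have h1 : ∀ y, zStep ν z y * h y =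
      (∑ p : Fin ν × Bool, if y = z + Pi.single p.1 (if p.2 then (1 : ℤ) else -1) then h y else 0)
        / (2 * ν) := by
    intro y
    unfold zStep
    by_cases hy : y - z ∈ zUnitVecs ν
    · rw [if_pos hy, mul_comm, ← div_eq_mul_inv]
      congr 1
      have : ∃ p : Fin ν × Bool, y = z + Pi.single p.1 (if p.2 then (1 : ℤ) else -1) := by
        obtain ⟨i, hi | hi⟩ := hy
        · exact ⟨(i, true), by rw [← sub_add_cancel y z, hi, add_comm]; simp⟩
        · exact ⟨(i, false), by rw [← sub_add_cancel y z, hi, add_comm]; simp⟩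
      obtain ⟨p, hp⟩ := this
      rw [Finset.sum_eq_single p]
      · rw [if_pos hp]
      · intro b _ hb
        rw [if_neg]
        intro hb'
        rw [hp] at hb'
        exact hb (unit_inj ν (add_left_cancel hb')).symm
      · simp
    · rw [if_neg hy, zero_mul, Finset.sum_eq_zero, ENNReal.zero_div]
      intro p _
      rw [if_neg]
      intro hp
      apply hy
      refine ⟨p.1, ?_⟩
      rw [hp]
      cases p.2 <;> simp
  simp_rw [h1, div_eq_mul_inv]
  rw [ENNReal.tsum_mul_right]
  congr 1
  rw [Summable.tsum_finsetSum (fun _ _ => ENNReal.summable), Fintype.sum_prod_type]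
  refine Finset.sum_congr rfl fun i _ => ?_
  simp [tsum_ite_eq]

/-- probability of ever hitting the origin -/
noncomputable def hitP (ν : ℕ) (Q : ZLat ν → Measure (ℕ → ZLat ν)) (w : ZLat ν) : ℝ≥0∞ :=
  Q w {ω | ∃ n, ω n = 0}

lemma hit_avg {ν : ℕ} {Q : ZLat ν → Measure (ℕ → ZLat ν)} (hQ : IsLatRW ν Q) (w : ZLat ν) :
    (∑ i : Fin ν, (hitP ν Q (w + Pi.single i 1) + hitP ν Q (w + Pi.single i (-1)))) / (2 * ν)
      ≤ Q w {ω | ∃ n, 1 ≤ n ∧ ω n = 0} := by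
  set T : ℕ → Set (ℕ → ZLat ν) := fun M => {ω | ∃ n ≤ M, ω n = 0} with hT
  have hmono : Monotone T := by
    rintro a b hab ω ⟨n, hn, h⟩
    exact ⟨n, hn.trans hab, h⟩
  have hmeas : ∀ M, MeasurableSet (T M) := by
    intro M
    have : T M = ⋃ n ∈ Finset.range (M + 1), (fun ω : ℕ → ZLat ν => ω n) ⁻¹' {0} := by
      ext ω; simp [hT, Nat.lt_succ_iff]
    rw [this]
    exact Finset.measurableSet_biUnion _ fun n _ => measurable_pi_apply n (measurableSet_singleton _)
  have hlim : ∀ v, Tendsto (fun M => Q v (T M)) atTop (nhds (hitP ν Q v)) := by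
    intro v
    have hU : {ω : ℕ → ZLat ν | ∃ n, ω n = 0} = ⋃ M, T M := by
      ext ω
      simp only [hT, Set.mem_iUnion]
      exact ⟨fun ⟨n, h⟩ => ⟨n, n, le_rfl, h⟩, fun ⟨_, n, _, h⟩ => ⟨n, h⟩⟩
    unfold hitP
    rw [hU]
    exact tendsto_measure_iUnion_atTop hmono
  have hM : ∀ M, (∑ i : Fin ν, (Q (w + Pi.single i 1) (T M) + Q (w + Pi.single i (-1)) (T M))) / (2 * ν)
      ≤ Q w {ω | ∃ n, 1 ≤ n ∧ ω n = 0} := by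
    intro M
    have hd : Dep M (fun ω => (T M).indicator (1 : (ℕ → ZLat ν) → ℝ≥0∞) ω) := by
      intro ω ω' h
      have : ω ∈ T M ↔ ω' ∈ T M := by
        constructor
        · rintro ⟨n, hn, h0⟩; exact ⟨n, hn, by rw [← h n hn, h0]⟩
        · rintro ⟨n, hn, h0⟩; exact ⟨n, hn, by rw [h n hn, h0]⟩
      simp only [Set.indicator_apply, this, Pi.one_apply]
    have := lint_shift Q (fun x => latChain hQ x) w M _ hd
    simp_rw [lintegral_indicator_one (hmeas M)] at this
    rw [tsum_zStep] at this
    rw [← this]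
    have hsh : Measurable (fun (ω : ℕ → ZLat ν) (k : ℕ) => ω (k + 1)) := by fun_prop
    have e : ∀ ω : ℕ → ZLat ν, (T M).indicator (1 : (ℕ → ZLat ν) → ℝ≥0∞) (fun k => ω (k + 1)) =
       ((fun (ω : ℕ → ZLat ν) (k : ℕ) => ω (k + 1)) ⁻¹' (T M)).indicator 1 ω := by
      intro ω; simp [Set.indicator_apply]
    simp_rw [e]
    rw [lintegral_indicator_one (hsh (hmeas M))]
    apply measure_mono
    rintro ω ⟨n, _, h⟩
    exact ⟨n + 1, by omega, h⟩
  refine le_of_tendsto (f := fun M => (∑ i : Fin ν, (Q (w + Pi.single i 1) (T M) + Q (w + Pi.single i (-1)) (T M))) / (2 * ν)) (x := atTop) ?_ (Eventually.of_forall hM)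
  by_cases hν : ν = 0
  · subst hν; simp
  · apply ENNReal.Tendsto.div_const
    · apply tendsto_finsetSum
      intro i _
      exact (hlim _).add (hlim _)
    · right
      simp [hν]

/-- real-valued hitting probability with its properties -/
lemma exists_eta {ν : ℕ} (hν : 0 < ν) {Q : ZLat ν → Measure (ℕ → ZLat ν)} (hQ : IsLatRW ν Q) :
    ∃ η : ZLat ν → ℝ, η 0 = 1 ∧ (∀ w, 0 ≤ η w) ∧ (∀ w, η w ≤ 1) ∧
      (∀ w, w ≠ 0 → ∑ i, (η (w + Pi.single i 1) + η (w + Pi.single i (-1))) ≤ 2 * ν * η w) ∧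
      ∑ i, (η (Pi.single i 1) + η (Pi.single i (-1))) ≤ 2 * ν * retProb ν Q := by
  have := hQ.1
  have key : ∀ w, ∑ i, ((hitP ν Q (w + Pi.single i 1)).toReal + (hitP ν Q (w + Pi.single i (-1))).toReal)
      ≤ 2 * ν * (Q w {ω | ∃ n, 1 ≤ n ∧ ω n = 0}).toReal := by
    intro w
    have h := hit_avg hQ w
    have hfin : ∀ v, hitP ν Q v ≠ ⊤ := fun v => measure_ne_top _ _
    have h' := ENNReal.toReal_mono (measure_ne_top _ _) h
    rw [ENNReal.toReal_div, ENNReal.toReal_sum (fun i _ => ENNReal.add_ne_top.2 ⟨hfin _, hfin _⟩)] at h'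
    simp only [ENNReal.toReal_add (hfin _) (hfin _), ENNReal.toReal_mul, ENNReal.toReal_ofNat, ENNReal.toReal_natCast] at h'
    rw [div_le_iff₀ (by positivity)] at h'
    linarith
  refine ⟨fun w => (hitP ν Q w).toReal, ?_, fun w => ENNReal.toReal_nonneg, ?_, ?_, ?_⟩
  · have h0 := hQ.2 0 0 (fun _ => 0)
    simp at h0
    have : hitP ν Q 0 = 1 := by
      apply le_antisymm prob_le_one
      rw [← h0]
      exact measure_mono fun ω h => ⟨0, h⟩
    simp [this]
  · intro w
    exact ENNReal.toReal_mono ENNReal.one_ne_top prob_le_one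
  · intro w hw
    refine (key w).trans ?_
    have : (Q w {ω | ∃ n, 1 ≤ n ∧ ω n = 0}).toReal ≤ (hitP ν Q w).toReal :=
      ENNReal.toReal_mono (measure_ne_top _ _) (measure_mono fun ω ⟨n, _, h⟩ => ⟨n, h⟩)
    gcongr
  · have := key 0
    simpa [retProb] using this

end

section

/-- integer representative of a cylinder point -/
def repC {d N : ℕ} (z : Cyl d N) : Fin (d + 1) → ℤ :=
  Fin.snoc (α := fun _ => ℤ) (fun i => (z.1 i).valMinAbs) z.2

@[simp] lemma repC_cast {d N : ℕ} (z : Cyl d N) (i : Fin d) : repC z i.castSucc = (z.1 i).valMinAbs := by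
  simp [repC]

@[simp] lemma repC_last {d N : ℕ} (z : Cyl d N) : repC z (Fin.last d) = z.2 := by
  simp [repC]

lemma valMin_add {N : ℕ} [NeZero N] (a : ZMod N) (b : ℤ) (hb : |b| ≤ 1)
    (h : 2 * (|a.valMinAbs| + 1) < N) : (a + (b : ZMod N)).valMinAbs = a.valMinAbs + b := by
  rw [ZMod.valMinAbs_spec]
  refine ⟨by simp, ?_⟩
  have h1 := abs_le.mp hb
  have h2 := abs_le.mp (le_refl |a.valMinAbs|)
  constructor <;> omega

lemma valMin_add_ge {N : ℕ} [NeZero N] (a : ZMod N) (b : ℤ) (hb : |b| ≤ 1) :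
    |a.valMinAbs| ≤ |(a + (b : ZMod N)).valMinAbs| + 1 := by
  have h := ZMod.natAbs_valMinAbs_add_le (a + (b : ZMod N)) (-(b : ZMod N))
  rw [add_neg_cancel_right] at h
  have hb' : |(-(b : ZMod N)).valMinAbs| ≤ 1 := by
    by_cases hN : N ≤ 1
    · have := (-(b : ZMod N)).valMinAbs_mem_Ioc
      have hN' : (N : ℤ) ≤ 1 := by exact_mod_cast hN
      have h1 := this.1
      have h2 := this.2
      rw [abs_le]; constructor <;> omega
    · have hN' : N ≠ 0 := NeZero.ne N
      by_cases h2 : N = 2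
      · have := (-(b : ZMod N)).valMinAbs_mem_Ioc
        have h1 := this.1
        have h2 := this.2
        rw [abs_le]; constructor <;> omega
      · have : (-(b : ZMod N)).valMinAbs = -b := by
          rw [ZMod.valMinAbs_spec]
          have h1 := abs_le.mp hb
          refine ⟨by simp, ?_, ?_⟩ <;> omega
        rw [this, abs_neg]; exact hb
  have h3 : |a.valMinAbs| ≤ |(a + (b : ZMod N)).valMinAbs + (-(b : ZMod N)).valMinAbs| := by
    rw [Int.abs_eq_natAbs, Int.abs_eq_natAbs]; exact_mod_cast h
  have := abs_add_le (a + (b : ZMod N)).valMinAbs (-(b : ZMod N)).valMinAbs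
  omega

lemma unit_abs {d : ℕ} {u : Lat d} (hu : u ∈ unitVecs d) (i : Fin (d + 1)) : |u i| ≤ 1 := by
  unfold unitVecs at hu
  simp only [Finset.mem_image, Finset.mem_univ, true_and] at hu
  obtain ⟨⟨j, b⟩, rfl⟩ := hu
  by_cases hij : i = j
  · subst hij; cases b <;> simp
  · simp [Pi.single_eq_of_ne hij]

lemma repC_add {d N : ℕ} [NeZero N] (z : Cyl d N) {u : Lat d} (hu : u ∈ unitVecs d)
    (h : ∀ i, 2 * (|(z.1 i).valMinAbs| + 1) < (N : ℤ)) : repC (z + projE d N u) = repC z + u := by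
  funext i
  refine Fin.lastCases ?_ (fun j => ?_) i
  · simp [projE]
  · simp only [repC_cast, Pi.add_apply]
    exact valMin_add (z.1 j) (u j.castSucc) (unit_abs hu _) (h j)

lemma nsq_add_single {n : ℕ} (v : Fin n → ℤ) (i : Fin n) (b : ℤ) :
    nsq (v + Pi.single i b) = nsq v + b ^ 2 + 2 * b * v i := by
  unfold nsq
  have h1 : ∀ j, (((v + Pi.single i b : Fin n → ℤ) j : ℤ) : ℝ) ^ 2 = ((v j : ℤ) : ℝ) ^ 2 +
      if j = i then ((b : ℝ) ^ 2 + 2 * b * v i) else 0 := by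
    intro j
    by_cases h : j = i
    · subst h; simp; ring
    · simp [h]
  simp_rw [h1]
  rw [Finset.sum_add_distrib]
  simp
  ring

lemma single_mem {d : ℕ} (i : Fin (d + 1)) (b : ℤ) (hb : b = 1 ∨ b = -1) :
    (Pi.single i b : Lat d) ∈ unitVecs d := by
  unfold unitVecs
  simp only [Finset.mem_image, Finset.mem_univ, true_and]
  rcases hb with rfl | rfl
  · exact ⟨(i, true), by simp⟩
  · exact ⟨(i, false), by simp⟩

lemma gcyl (d : ℕ) (hd : 2 ≤ d) : ∃ (C1 g0 : ℝ) (N0 : ℕ), 0 ≤ C1 ∧ 0 < g0 ∧ 8 ≤ N0 ∧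
    ∀ N : ℕ, N0 ≤ N → ∃ g : Cyl d N → ℝ, (∀ z, 0 ≤ g z) ∧ g0 ≤ g 0 ∧
      (∀ z, ∑ u ∈ unitVecs d, g (z + projE d N u) ≤
        2 * (d + 1) * g z + if |z.2| ≤ (N : ℤ) then C1 / (N : ℝ) ^ (d + 1) else 0) ∧
      ∀ (z : Cyl d N) (i : Fin d), (N : ℤ) ≤ 2 * (|(z.1 i).valMinAbs| + 1) →
        g z = 0 ∧ ∀ u ∈ unitVecs d, g (z + projE d N u) = 0 := by
  obtain ⟨a, C1, R0, g0, ha, hC1, hR0, hg0, H⟩ := Gstep (d + 1) (by omega) (((d : ℝ) - 1) / 2) (by push_cast; ring)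
  set s : ℝ := ((d : ℝ) - 1) / 2 with hs
  have hs0 : 0 ≤ s := by
    have : (2 : ℝ) ≤ d := by exact_mod_cast hd
    rw [hs]; linarith
  refine ⟨C1 * 4 ^ (d + 1), g0, max 8 (⌈4 * R0⌉₊), by positivity, hg0, le_max_left _ _, ?_⟩
  intro N hN
  have hN8 : 8 ≤ N := (le_max_left _ _).trans hN
  have hNr : (8 : ℝ) ≤ N := by exact_mod_cast hN8
  have hNR : 4 * R0 ≤ N := (Nat.le_ceil _).trans (by exact_mod_cast (le_max_right _ _).trans hN)
  have : NeZero N := ⟨by omega⟩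
  set R : ℝ := (N : ℝ) ^ 2 / 16 with hR
  have hRR0 : R0 ≤ R := by rw [hR]; nlinarith
  have hRpos : 0 < R := by linarith
  obtain ⟨Hg, Hs⟩ := H R hRR0
  have hpow : R ^ (-s - 1) = 4 ^ (d + 1) / (N : ℝ) ^ (d + 1) := by
    have h1 : R = ((N : ℝ) / 4) ^ (2 : ℝ) := by rw [hR, Real.rpow_two]; ring
    rw [h1, ← Real.rpow_mul (by positivity)]
    have h2 : (2 : ℝ) * (-s - 1) = -((d + 1 : ℕ) : ℝ) := by rw [hs]; push_cast; ring
    rw [h2, Real.rpow_neg (by positivity), Real.rpow_natCast, div_pow, inv_div]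
  set g : Cyl d N → ℝ := fun z => Gfun s R (nsq (repC z) + a) with hg
  have gz : ∀ z : Cyl d N, R ≤ nsq (repC z) → g z = 0 := by
    intro z hz
    simp only [hg, Gfun]
    rw [if_neg]
    linarith
  have gn : ∀ z, 0 ≤ g z := fun z => Gfun_nonneg hs0 hRpos (by have := nsq_nonneg (repC z); linarith)
  have hbig : ∀ (z : Cyl d N) (i : Fin (d + 1)), (N : ℝ) / 4 ≤ |((repC z i : ℤ) : ℝ)| → g z = 0 := by
    intro z i h
    apply gz
    refine le_trans ?_ (coord_sq_le (repC z) i)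
    rw [← sq_abs, hR]
    nlinarith
  have hwrap : ∀ (z : Cyl d N) (i : Fin d), (N : ℤ) ≤ 2 * (|(z.1 i).valMinAbs| + 1) →
        g z = 0 ∧ ∀ u ∈ unitVecs d, g (z + projE d N u) = 0 := by
    intro z i h
    have hr : (N : ℝ) ≤ 2 * (|(((z.1 i).valMinAbs : ℤ) : ℝ)| + 1) := by exact_mod_cast h
    constructor
    · apply hbig z i.castSucc
      rw [repC_cast]; linarith
    · intro u hu
      apply hbig _ i.castSucc
      rw [repC_cast]
      have h1 := valMin_add_ge (z.1 i) (u i.castSucc) (unit_abs hu _)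
      have h2 : |(((z.1 i).valMinAbs : ℤ) : ℝ)| ≤ |(((z.1 i + (u i.castSucc : ZMod N)).valMinAbs : ℤ) : ℝ)| + 1 := by
        exact_mod_cast h1
      have h3 : (z + projE d N u).1 i = z.1 i + (u i.castSucc : ZMod N) := rfl
      rw [h3]
      linarith
  refine ⟨g, gn, ?_, ?_, hwrap⟩
  · have : repC (0 : Cyl d N) = 0 := by
      funext i
      refine Fin.lastCases ?_ (fun j => ?_) i <;> simp
    simp only [hg, this]
    have h0 : nsq (0 : Fin (d + 1) → ℤ) = 0 := by simp [nsq]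
    rw [h0, zero_add]; exact Hg
  · intro z
    have hRHS : (0 : ℝ) ≤ if |z.2| ≤ (N : ℤ) then C1 * 4 ^ (d + 1) / (N : ℝ) ^ (d + 1) else 0 := by
      split_ifs <;> positivity
    by_cases hw : ∀ i, 2 * (|(z.1 i).valMinAbs| + 1) < (N : ℤ)
    · by_cases hv : |z.2| ≤ (N : ℤ)
      · rw [if_pos hv, mul_div_assoc, ← hpow]
        refine le_trans (le_of_eq ?_) ((Hs (repC z)).trans (le_of_eq ?_))
        · rw [sum_unitVecs]
          refine Finset.sum_congr rfl fun i _ => ?_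
          simp only [hg]
          rw [repC_add z (single_mem i 1 (Or.inl rfl)) hw, repC_add z (single_mem i (-1) (Or.inr rfl)) hw,
            nsq_add_single, nsq_add_single]
          congr 2 <;> push_cast <;> ring
        · simp only [hg]; push_cast; ring
      · push Not at hv
        have hz : ∀ u ∈ unitVecs d, g (z + projE d N u) = 0 := by
          intro u hu
          apply hbig _ (Fin.last d)
          rw [repC_last]
          have h3 : (z + projE d N u).2 = z.2 + u (Fin.last d) := rfl
          rw [h3]
          have h1 := unit_abs hu (Fin.last d)
          have h2 : (N : ℤ) ≤ |z.2 + u (Fin.last d)| := by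
            have := abs_sub_abs_le_abs_add z.2 (u (Fin.last d))
            omega
          have h4 : (N : ℝ) ≤ |((z.2 + u (Fin.last d) : ℤ) : ℝ)| := by exact_mod_cast h2
          linarith
        rw [Finset.sum_eq_zero hz]
        have := gn z
        positivity
    · push Not at hw
      obtain ⟨i, hi⟩ := hw
      rw [Finset.sum_eq_zero (hwrap z i hi).2]
      have := gn z
      positivity

end

section

section
variable {S : Type*} [MeasurableSpace S] [Countable S] [MeasurableSingletonClass S]

lemma Dep.measurable {n : ℕ} {F : (ℕ → S) → ℝ≥0∞} (hF : Dep n F) : Measurable F := by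
  have hm : Measurable (fun (ω : ℕ → S) (j : Fin (n + 1)) => ω j) := by fun_prop
  have h1 : F = (fun g : Fin (n + 1) → S => F (ext0 g)) ∘ (fun ω (j : Fin (n + 1)) => ω j) := by
    funext ω
    apply hF
    intro i hi
    exact (ext0_prefix ω i hi).symm
  rw [h1]
  exact (measurable_of_countable _).comp hm

end

/-- nearest neighbour paths started at `x` -/
def Legit {d N : ℕ} (x : Cyl d N) (ω : ℕ → Cyl d N) : Prop :=
  ω 0 = x ∧ ∀ i, ∃ u ∈ unitVecs d, ω (i + 1) = ω i + projE d N u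

lemma legit_ae {d N : ℕ} {Pl : Cyl d N → Measure (ℕ → Cyl d N)} (h : IsCylRW d N Pl) (x : Cyl d N) :
    ∀ᵐ ω ∂(Pl x), Legit x ω := by
  have := h.1 x
  have h0 : ∀ᵐ ω ∂(Pl x), ω 0 = x := by
    have h1 := h.2 x 0 (fun _ => x)
    simp at h1
    have : MeasurableSet {ω : ℕ → Cyl d N | ω 0 = x} := by
      have hm : Measurable (fun ω : ℕ → Cyl d N => ω 0) := measurable_pi_apply 0
      exact hm (measurableSet_singleton x)
    rw [ae_iff]
    rw [← prob_compl_eq_zero_iff this] at h1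
    exact h1
  have h1 : ∀ i, ∀ᵐ ω ∂(Pl x), ∃ u ∈ unitVecs d, ω (i + 1) = ω i + projE d N u := by
    intro k
    set F : (ℕ → Cyl d N) → Cyl d N → ℝ≥0∞ := fun ω y =>
      if ∃ u ∈ unitVecs d, y = ω k + projE d N u then 0 else 1 with hF
    have hd : Dep k F := by
      intro ω ω' hh
      simp only [hF]
      rw [hh k le_rfl]
    have hd2 : Dep (k + 1) (fun ω => F ω (ω (k + 1))) := by
      intro ω ω' hh
      simp only
      rw [hd ω ω' fun i hi => hh i (by omega), hh (k + 1) le_rfl]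
    have e := lint_step (cylChain h x) k F hd
    have hz : ∀ ω : ℕ → Cyl d N, ∑' y, F ω y * stepProb d N (ω k) y = 0 := by
      intro ω
      rw [tsum_stepProb, Finset.sum_eq_zero, ENNReal.zero_div]
      intro u hu
      simp only [hF]
      rw [if_pos ⟨u, hu, rfl⟩]
    simp_rw [hz] at e
    rw [lintegral_zero, lintegral_eq_zero_iff hd2.measurable] at e
    filter_upwards [e] with ω hω
    by_contra hc
    simp only [hF, Pi.zero_apply] at hω
    rw [if_neg hc] at hω
    exact one_ne_zero hω
  filter_upwards [h0, ae_all_iff.2 h1] with ω a b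
  exact ⟨a, b⟩

lemma cyl_markov {d N : ℕ} {Pl : Cyl d N → Measure (ℕ → Cyl d N)} (h : IsCylRW d N Pl) (x : Cyl d N)
    (ζ : ℕ → (ℕ → Cyl d N) → Cyl d N → ℝ) (h0 : ∀ k ω y, 0 ≤ ζ k ω y) (hdep : ∀ k, Dep k (ζ k))
    (hle : ∀ k ω, ∑ u ∈ unitVecs d, ζ k ω (ω k + projE d N u) ≤ 2 * (d + 1))
    (n : ℕ) (E : Set (ℕ → Cyl d N)) (c : ℝ) (hc : 0 < c)
    (hE : ∀ ω ∈ E, Legit x ω → c ≤ ∏ i ∈ Finset.range n, ζ i ω (ω (i + 1))) :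
    Pl x E ≤ ENNReal.ofReal (1 / c) := by
  have := h.1 x
  have key := lint_prod_le (cylChain h x) (fun k ω y => ENNReal.ofReal (ζ k ω y))
    (fun k ω ω' hh => by simp only; rw [hdep k ω ω' hh])
    (fun k ω => by
      rw [tsum_stepProb, ← ENNReal.ofReal_sum_of_nonneg (fun _ _ => h0 _ _ _)]
      apply ENNReal.div_le_of_le_mul
      rw [one_mul]
      refine (ENNReal.ofReal_le_ofReal (hle k ω)).trans (le_of_eq ?_)
      rw [ENNReal.ofReal_mul (by norm_num), ENNReal.ofReal_add (by positivity) (by norm_num)]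
      simp) n
  set f : (ℕ → Cyl d N) → ℝ≥0∞ := fun ω => ∏ i ∈ Finset.range n, ENNReal.ofReal (ζ i ω (ω (i + 1))) with hf
  have hfd : Dep n f := by
    intro ω ω' hh
    simp only [hf]
    refine Finset.prod_congr rfl fun i hi => ?_
    have hi' := Finset.mem_range.mp hi
    rw [hdep i ω ω' fun j hj => hh j (by omega), hh (i + 1) hi']
  have h1 : Pl x E ≤ Pl x {ω | ENNReal.ofReal c ≤ f ω} := by
    apply measure_mono_ae
    filter_upwards [legit_ae h x] with ω hl he
    have := hE ω he hl
    change ENNReal.ofReal c ≤ f ω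
    simp only [hf]
    rw [← ENNReal.ofReal_prod_of_nonneg (fun _ _ => h0 _ _ _)]
    exact ENNReal.ofReal_le_ofReal this
  refine h1.trans ((meas_ge_le_lintegral_div hfd.measurable.aemeasurable (by simpa using hc) ENNReal.ofReal_ne_top).trans ?_)
  rw [one_div, ENNReal.ofReal_inv_of_pos hc, div_eq_mul_inv]
  calc _ ≤ 1 * (ENNReal.ofReal c)⁻¹ := by gcongr
    _ = _ := one_mul _

lemma telescope (f : ℕ → ℝ) (hf : ∀ i, f i ≠ 0) (n : ℕ) :
    ∏ i ∈ Finset.range n, (f (i + 1) / f i) = f n / f 0 := by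
  induction n with
  | zero => simp [hf 0]
  | succ n ih =>
    rw [Finset.prod_range_succ, ih]
    have h1 := hf n
    have h2 := hf 0
    field_simp

/-- the abstract exponential bound -/
lemma exp_bound {d N : ℕ} {Pl : Cyl d N → Measure (ℕ → Cyl d N)} (h : IsCylRW d N Pl) (x : Cyl d N)
    (Ψ : Cyl d N → ℝ) (K lam θ : ℝ) (A : Finset (Cyl d N)) (slab : Set (Cyl d N))
    (hΨ1 : ∀ z, 1 ≤ Ψ z) (hΨK : ∀ z, Ψ z ≤ K) (hlam : 0 ≤ lam) (hθ : 0 ≤ θ)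
    (hoff : ∀ z ∉ A, ∑ u ∈ unitVecs d, Ψ (z + projE d N u) ≤
      2 * (d + 1) * Ψ z * Real.exp (if z ∈ slab then θ else 0))
    (hon : ∀ z ∈ A, Real.exp lam * ∑ u ∈ unitVecs d, Ψ (z + projE d N u) ≤ 2 * (d + 1) * Ψ z)
    (n : ℕ) (V : ℝ) :
    Pl x {ω | (∀ a ∈ A, ∃ i < n, ω i = a) ∧
      (((Finset.range n).filter fun i => ω i ∈ slab).card : ℝ) ≤ V} ≤
      ENNReal.ofReal (K * Real.exp (-(lam * A.card) + θ * V)) := by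
  have hp : ∀ z, 0 < Ψ z := fun z => lt_of_lt_of_le one_pos (hΨ1 z)
  have hK : 1 ≤ K := (hΨ1 x).trans (hΨK x)
  set w : Cyl d N → ℝ := fun z => (if z ∈ A then lam else 0) - (if z ∈ slab then θ else 0) with hw
  have := cyl_markov h x (fun k ω y => Real.exp (w (ω k)) * (Ψ y / Ψ (ω k)))
    (fun k ω y => by have := hp y; have := hp (ω k); positivity)
    (fun k ω ω' hh => by funext y; simp only; rw [hh k le_rfl])
    (fun k ω => by
      rw [← Finset.mul_sum, ← Finset.sum_div, ← mul_div_assoc, div_le_iff₀ (hp _)]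
      by_cases hA : ω k ∈ A
      · refine le_trans ?_ (hon _ hA)
        apply mul_le_mul_of_nonneg_right
        · apply Real.exp_le_exp.2
          simp only [hw, if_pos hA]
          split_ifs <;> linarith
        · exact Finset.sum_nonneg fun u _ => (hp _).le
      · have h2 := hoff _ hA
        simp only [hw, if_neg hA, zero_sub]
        rw [Real.exp_neg, inv_mul_le_iff₀ (Real.exp_pos _)]
        linarith)
    n {ω | (∀ a ∈ A, ∃ i < n, ω i = a) ∧
      (((Finset.range n).filter fun i => ω i ∈ slab).card : ℝ) ≤ V}
    (Real.exp (lam * A.card - θ * V) / K) (by positivity)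
    (fun ω hω _ => by
      obtain ⟨hv, hs⟩ := hω
      rw [Finset.prod_mul_distrib, telescope (fun i => Ψ (ω i)) (fun i => (hp _).ne'), ← Real.exp_sum]
      rw [div_eq_mul_one_div]
      have h1 : 1 / K ≤ Ψ (ω n) / Ψ (ω 0) := by
        rw [div_le_div_iff₀ (by linarith) (hp _)]
        nlinarith [hΨ1 (ω n), hΨK (ω 0)]
      have h2 : lam * A.card - θ * V ≤ ∑ i ∈ Finset.range n, w (ω i) := by
        simp only [hw]
        rw [Finset.sum_sub_distrib, ← Finset.sum_filter, ← Finset.sum_filter, Finset.sum_const,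
          Finset.sum_const, nsmul_eq_mul, nsmul_eq_mul]
        have h3 : A.card ≤ ((Finset.range n).filter fun i => ω i ∈ A).card := by
          have : A ⊆ ((Finset.range n).filter fun i => ω i ∈ A).image ω := by
            intro a ha
            obtain ⟨i, hi, rfl⟩ := hv a ha
            exact Finset.mem_image_of_mem _ (by simp [hi, ha])
          exact (Finset.card_le_card this).trans Finset.card_image_le
        have h3' : (A.card : ℝ) ≤ (((Finset.range n).filter fun i => ω i ∈ A).card : ℝ) := by exact_mod_cast h3
        have h4 := mul_le_mul_of_nonneg_left hs hθ
        have h5 := mul_le_mul_of_nonneg_left h3' hlam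
        linarith
      gcongr)
  refine this.trans (le_of_eq ?_)
  congr 1
  rw [one_div_div, div_eq_mul_inv, ← Real.exp_neg]
  congr 2
  ring

end

section

/-- transverse representative -/
def wrep {e N : ℕ} (z : Cyl (e + 1) N) : ZLat e := fun i => (z.1 i.succ).valMinAbs

lemma wrep_step {e N : ℕ} [NeZero N] (z : Cyl (e + 1) N)
    (h : ∀ i : Fin e, 2 * (|(z.1 i.succ).valMinAbs| + 1) < (N : ℤ)) (f : ZLat e → ℝ) :
    ∑ u ∈ unitVecs (e + 1), f (wrep (z + projE (e + 1) N u)) =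
      4 * f (wrep z) + ∑ i, (f (wrep z + Pi.single i 1) + f (wrep z + Pi.single i (-1))) := by
  rw [sum_unitVecs, Fin.sum_univ_castSucc, Fin.sum_univ_succ]
  have h0 : ∀ b : ℤ, wrep (z + projE (e + 1) N (Pi.single (Fin.castSucc 0) b)) = wrep z := by
    intro b
    funext j
    have : (z + projE (e + 1) N (Pi.single (Fin.castSucc 0) b)).1 j.succ = z.1 j.succ := by
      have hne : (Fin.castSucc j.succ : Fin (e + 1 + 1)) ≠ Fin.castSucc 0 := by
        intro hh; exact Fin.succ_ne_zero j (Fin.castSucc_injective _ hh)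
      simp only [projE, Prod.fst_add, Pi.add_apply, Pi.single_eq_of_ne hne]
      simp
    simp only [wrep, this]
  have hl : ∀ b : ℤ, wrep (z + projE (e + 1) N (Pi.single (Fin.last (e + 1)) b)) = wrep z := by
    intro b
    funext j
    have : (z + projE (e + 1) N (Pi.single (Fin.last (e + 1)) b)).1 j.succ = z.1 j.succ := by
      have hne : (Fin.castSucc j.succ : Fin (e + 1 + 1)) ≠ Fin.last (e + 1) := Fin.castSucc_ne_last _
      simp only [projE, Prod.fst_add, Pi.add_apply, Pi.single_eq_of_ne hne]
      simp
    simp only [wrep, this]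
  have hs : ∀ (i : Fin e) (b : ℤ), |b| ≤ 1 →
      wrep (z + projE (e + 1) N (Pi.single (Fin.castSucc i.succ) b)) = wrep z + Pi.single i b := by
    intro i b hb
    funext j
    have h1 : (Pi.single (Fin.castSucc i.succ) b : Lat (e + 1)) (Fin.castSucc j.succ)
        = (Pi.single i b : ZLat e) j := by
      by_cases hij : j = i
      · subst hij; simp
      · have hne : (Fin.castSucc j.succ : Fin (e + 1 + 1)) ≠ Fin.castSucc i.succ := by
          intro hh; exact hij (Fin.succ_injective _ (Fin.castSucc_injective _ hh))
        rw [Pi.single_eq_of_ne hne, Pi.single_eq_of_ne hij]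
    have hb' : |(Pi.single i b : ZLat e) j| ≤ 1 := by
      by_cases hij : j = i
      · subst hij; simpa using hb
      · simp [Pi.single_eq_of_ne hij]
    have := valMin_add (z.1 j.succ) ((Pi.single i b : ZLat e) j) hb' (h j)
    simp only [wrep, Pi.add_apply]
    rw [← this]
    simp only [projE, Prod.fst_add, Pi.add_apply, h1]
  rw [h0, h0, hl, hl]
  have : ∀ i : Fin e, f (wrep (z + projE (e + 1) N (Pi.single (Fin.castSucc i.succ) 1))) +
      f (wrep (z + projE (e + 1) N (Pi.single (Fin.castSucc i.succ) (-1)))) =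
      f (wrep z + Pi.single i 1) + f (wrep z + Pi.single i (-1)) := by
    intro i
    rw [hs i 1 (by simp), hs i (-1) (by simp)]
  simp_rw [this]
  ring

lemma card_unitVecs (d : ℕ) : (unitVecs d).card = 2 * (d + 1) := by
  have := sum_unitVecs d (fun _ => (1 : ℕ))
  simp at this
  omega

lemma exists_Psi (e : ℕ) (he : 1 ≤ e) (η : ZLat e → ℝ) (q : ℝ) (hη0 : η 0 = 1) (hηn : ∀ w, 0 ≤ η w)
    (hη1 : ∀ w, η w ≤ 1)
    (hηs : ∀ w, w ≠ 0 → ∑ i, (η (w + Pi.single i 1) + η (w + Pi.single i (-1))) ≤ 2 * e * η w)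
    (hηq : ∑ i, (η (Pi.single i 1) + η (Pi.single i (-1))) ≤ 2 * e * q)
    (Λ : ℝ) (hΛ : 1 < Λ) (hΛr : Λ * ((2 + e * q) / (e + 2)) < 1) :
    ∃ (K C3 : ℝ) (N0 : ℕ), 1 ≤ K ∧ 0 ≤ C3 ∧ 8 ≤ N0 ∧ ∀ N : ℕ, N0 ≤ N → ∀ A : Finset (Cyl (e + 1) N),
      (∀ x ∈ A, ∀ i : Fin e, x.1 i.succ = 0) → ∀ t0 : ℤ, (∀ x ∈ A, |x.2 - t0| ≤ (N : ℤ)) →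
      ∃ Ψ : Cyl (e + 1) N → ℝ, (∀ z, 1 ≤ Ψ z) ∧ (∀ z, Ψ z ≤ K) ∧
        (∀ z ∉ A, ∑ u ∈ unitVecs (e + 1), Ψ (z + projE (e + 1) N u) ≤
          2 * ((e + 1 : ℕ) + 1) * Ψ z * Real.exp (if z ∈ {z : Cyl (e + 1) N | |z.2 - t0| ≤ 2 * (N : ℤ)} then
            C3 * A.card / (N : ℝ) ^ (e + 2) else 0)) ∧
        (∀ z ∈ A, Λ * ∑ u ∈ unitVecs (e + 1), Ψ (z + projE (e + 1) N u) ≤ 2 * ((e + 1 : ℕ) + 1) * Ψ z) := by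
  obtain ⟨C1, g0, N0, hC1, hg0, hN0, H⟩ := gcyl (e + 1) (by omega)
  set r := (2 + e * q) / ((e : ℝ) + 2) with hr
  set κ := (Λ - 1) / (1 - Λ * r) with hκ
  have hκ0 : 0 ≤ κ := div_nonneg (by linarith) (by linarith)
  have hκeq : κ * (1 - Λ * r) = Λ - 1 := div_mul_cancel₀ _ (by linarith)
  set C := κ / g0 with hC
  have hC0 : 0 ≤ C := by positivity
  have hCg : C * g0 = κ := div_mul_cancel₀ _ hg0.ne'
  refine ⟨1 + κ, C * C1, N0, by linarith, by positivity, hN0, ?_⟩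
  intro N hN A hAF t0 hAt
  have : NeZero N := ⟨by omega⟩
  obtain ⟨g, gn, gg0, gs, gw⟩ := H N hN
  set Ψ1 : Cyl (e + 1) N → ℝ := fun z => 1 + κ * η (wrep z) with hΨ1
  set Ψ2 : Cyl (e + 1) N → ℝ := fun z => 1 + C * ∑ x ∈ A, g (z - x) with hΨ2
  have h11 : ∀ z, 1 ≤ Ψ1 z := fun z => by have := hηn (wrep z); simp only [hΨ1]; nlinarith
  have h1K : ∀ z, Ψ1 z ≤ 1 + κ := fun z => by have := hη1 (wrep z); simp only [hΨ1]; nlinarith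
  have hS0 : ∀ z, 0 ≤ ∑ x ∈ A, g (z - x) := fun z => Finset.sum_nonneg fun x _ => gn _
  have h21 : ∀ z, 1 ≤ Ψ2 z := fun z => by have := hS0 z; simp only [hΨ2]; nlinarith
  have hD : (0 : ℝ) < 2 * ((e + 1 : ℕ) + 1) := by positivity
  have hexp1 : ∀ z : Cyl (e + 1) N, 1 ≤ Real.exp (if z ∈ {z : Cyl (e + 1) N | |z.2 - t0| ≤ 2 * (N : ℤ)} then
            C * C1 * A.card / (N : ℝ) ^ (e + 2) else 0) := by
    intro z
    apply Real.one_le_exp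
    split_ifs <;> positivity
  have hmin1 : ∀ z, 1 ≤ min (Ψ1 z) (Ψ2 z) := fun z => le_min (h11 z) (h21 z)
  -- consequences of F-membership
  have hzx : ∀ z : Cyl (e + 1) N, ∀ x ∈ A, ∀ i : Fin e, (z - x).1 i.succ = z.1 i.succ := by
    intro z x hx i
    simp [hAF x hx i]
  have hsum1 : ∀ z : Cyl (e + 1) N, wrep z = 0 → (∀ i : Fin e, 2 * (|(z.1 i.succ).valMinAbs| + 1) < (N : ℤ)) := by
    intro z hz i
    have : (z.1 i.succ).valMinAbs = 0 := congrFun hz i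
    rw [this]; simp; omega
  refine ⟨fun z => min (Ψ1 z) (Ψ2 z), hmin1, fun z => (min_le_left _ _).trans (h1K z), ?_, ?_⟩
  · intro z hzA
    -- it suffices to bound by either
    have case2 : ∑ u ∈ unitVecs (e + 1), Ψ2 (z + projE (e + 1) N u) ≤
          2 * ((e + 1 : ℕ) + 1) * Ψ2 z * Real.exp (if z ∈ {z : Cyl (e + 1) N | |z.2 - t0| ≤ 2 * (N : ℤ)} then
            C * C1 * A.card / (N : ℝ) ^ (e + 2) else 0) := by
      have h1 : ∀ x ∈ A, ∑ u ∈ unitVecs (e + 1), g (z + projE (e + 1) N u - x) ≤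
          2 * ((e + 1 : ℕ) + 1) * g (z - x) +
            (if z ∈ {z : Cyl (e + 1) N | |z.2 - t0| ≤ 2 * (N : ℤ)} then C1 / (N : ℝ) ^ (e + 2) else 0) := by
        intro x hx
        have := gs (z - x)
        have e1 : ∀ u, z - x + projE (e + 1) N u = z + projE (e + 1) N u - x := fun u => by abel
        simp_rw [e1] at this
        refine this.trans ?_
        gcongr
        have hx2 := hAt x hx
        by_cases hc : |(z - x).2| ≤ (N : ℤ)
        · have : z ∈ {z : Cyl (e + 1) N | |z.2 - t0| ≤ 2 * (N : ℤ)} := by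
            change |z.2 - t0| ≤ 2 * (N : ℤ)
            have h3 : (z - x).2 = z.2 - x.2 := rfl
            rw [h3] at hc
            rw [abs_le] at *
            omega
          rw [if_pos hc, if_pos this]
        · rw [if_neg hc]
          split_ifs <;> positivity
      have h2 : ∑ u ∈ unitVecs (e + 1), Ψ2 (z + projE (e + 1) N u) ≤ 2 * ((e + 1 : ℕ) + 1) * Ψ2 z +
          (if z ∈ {z : Cyl (e + 1) N | |z.2 - t0| ≤ 2 * (N : ℤ)} then C * C1 * A.card / (N : ℝ) ^ (e + 2) else 0) := by
        simp only [hΨ2]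
        rw [Finset.sum_add_distrib, ← Finset.mul_sum, Finset.sum_comm, Finset.sum_const, card_unitVecs]
        have h3 := Finset.sum_le_sum h1
        rw [Finset.sum_add_distrib, ← Finset.mul_sum, Finset.sum_const] at h3
        have h4 := mul_le_mul_of_nonneg_left h3 hC0
        have h5 : C * (A.card • (if z ∈ {z : Cyl (e + 1) N | |z.2 - t0| ≤ 2 * (N : ℤ)} then C1 / (N : ℝ) ^ (e + 2) else 0))
          = (if z ∈ {z : Cyl (e + 1) N | |z.2 - t0| ≤ 2 * (N : ℤ)} then C * C1 * A.card / (N : ℝ) ^ (e + 2) else 0) := by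
          split_ifs
          · rw [nsmul_eq_mul]; ring
          · simp
        rw [mul_add, h5] at h4
        push_cast at h4 ⊢
        simp only [nsmul_eq_mul]
        push_cast
        linarith
      refine h2.trans ?_
      set θ := (if z ∈ {z : Cyl (e + 1) N | |z.2 - t0| ≤ 2 * (N : ℤ)} then C * C1 * A.card / (N : ℝ) ^ (e + 2) else 0) with hθ
      have hθ0 : 0 ≤ θ := by rw [hθ]; split_ifs <;> positivity
      have h6 := Real.add_one_le_exp θ
      have h7 : (1 : ℝ) ≤ 2 * ((e + 1 : ℕ) + 1) * Ψ2 z := by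
        have := h21 z
        push_cast
        have : (0 : ℝ) ≤ e := by positivity
        nlinarith
      nlinarith
    have hle2 : ∑ u ∈ unitVecs (e + 1), min (Ψ1 (z + projE (e + 1) N u)) (Ψ2 (z + projE (e + 1) N u)) ≤
        ∑ u ∈ unitVecs (e + 1), Ψ2 (z + projE (e + 1) N u) := Finset.sum_le_sum fun u _ => min_le_right _ _
    have hle1 : ∑ u ∈ unitVecs (e + 1), min (Ψ1 (z + projE (e + 1) N u)) (Ψ2 (z + projE (e + 1) N u)) ≤
        ∑ u ∈ unitVecs (e + 1), Ψ1 (z + projE (e + 1) N u) := Finset.sum_le_sum fun u _ => min_le_left _ _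
    beta_reduce
    by_cases hcmp : Ψ2 z ≤ Ψ1 z
    · rw [min_eq_right hcmp]
      exact hle2.trans case2
    · rw [min_eq_left (le_of_not_ge hcmp)]
      have hnw : ∀ i : Fin e, 2 * (|(z.1 i.succ).valMinAbs| + 1) < (N : ℤ) := by
        by_contra hc
        push Not at hc
        obtain ⟨i, hi⟩ := hc
        apply hcmp
        have : Ψ2 z = 1 := by
          simp only [hΨ2]
          rw [Finset.sum_eq_zero]
          · simp
          · intro x hx
            refine (gw (z - x) i.succ ?_).1
            rw [hzx z x hx i]; exact hi
        rw [this]; exact h11 z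
      have h1 : ∑ u ∈ unitVecs (e + 1), Ψ1 (z + projE (e + 1) N u) ≤ 2 * ((e + 1 : ℕ) + 1) * Ψ1 z := by
        by_cases hw0 : wrep z = 0
        · have : Ψ1 z = 1 + κ := by simp only [hΨ1, hw0, hη0]; ring
          rw [this]
          refine (Finset.sum_le_sum fun u _ => h1K _).trans (le_of_eq ?_)
          rw [Finset.sum_const, card_unitVecs, nsmul_eq_mul]
          push_cast; ring
        · simp only [hΨ1]
          rw [wrep_step z hnw (fun w => 1 + κ * η w)]
          have := hηs _ hw0
          have h2 := mul_le_mul_of_nonneg_left this hκ0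
          rw [Finset.mul_sum] at h2
          have h3 : ∑ i : Fin e, (1 + κ * η (wrep z + Pi.single i 1) + (1 + κ * η (wrep z + Pi.single i (-1))))
            = 2 * e + ∑ i : Fin e, κ * (η (wrep z + Pi.single i 1) + η (wrep z + Pi.single i (-1))) := by
            have : ∀ i : Fin e, (1 + κ * η (wrep z + Pi.single i 1) + (1 + κ * η (wrep z + Pi.single i (-1))))
              = 2 + κ * (η (wrep z + Pi.single i 1) + η (wrep z + Pi.single i (-1))) := fun i => by ring
            simp_rw [this]
            rw [Finset.sum_add_distrib]
            simp; ring
          rw [h3]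
          push_cast
          linarith
      refine hle1.trans (h1.trans ?_)
      have h2 := hexp1 z
      have h3 := h11 z
      have : 0 ≤ 2 * (((e + 1 : ℕ) : ℝ) + 1) * Ψ1 z := by positivity
      exact le_mul_of_one_le_right this h2
  · intro z hzA
    have hw0 : wrep z = 0 := by
      funext i
      simp [wrep, hAF z hzA i]
    have hnw := hsum1 z hw0
    have hP1 : Ψ1 z = 1 + κ := by simp only [hΨ1, hw0, hη0]; ring
    have hP2 : 1 + κ ≤ Ψ2 z := by
      simp only [hΨ2]
      have h1 : g (z - z) ≤ ∑ x ∈ A, g (z - x) :=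
        Finset.single_le_sum (f := fun x => g (z - x)) (fun x _ => gn _) hzA
      rw [sub_self] at h1
      have := mul_le_mul_of_nonneg_left (gg0.trans h1) hC0
      linarith
    beta_reduce
    rw [hP1, min_eq_left hP2]
    have hle1 : ∑ u ∈ unitVecs (e + 1), min (Ψ1 (z + projE (e + 1) N u)) (Ψ2 (z + projE (e + 1) N u)) ≤
        ∑ u ∈ unitVecs (e + 1), Ψ1 (z + projE (e + 1) N u) := Finset.sum_le_sum fun u _ => min_le_left _ _
    refine (mul_le_mul_of_nonneg_left hle1 (by linarith)).trans ?_
    simp only [hΨ1]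
    rw [wrep_step z hnw (fun w => 1 + κ * η w), hw0, hη0]
    simp only [zero_add]
    have h2 := mul_le_mul_of_nonneg_left hηq hκ0
    rw [Finset.mul_sum] at h2
    have h3 : ∑ i : Fin e, (1 + κ * η (Pi.single i 1) + (1 + κ * η (Pi.single i (-1))))
            = 2 * e + ∑ i : Fin e, κ * (η (Pi.single i 1) + η (Pi.single i (-1))) := by
      have : ∀ i : Fin e, (1 + κ * η (Pi.single i 1) + (1 + κ * η (Pi.single i (-1))))
              = 2 + κ * (η (Pi.single i 1) + η (Pi.single i (-1))) := fun i => by ring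
      simp_rw [this]
      rw [Finset.sum_add_distrib]
      simp; ring
    rw [h3]
    have hre : r * (e + 2) = 2 + e * q := by rw [hr]; field_simp
    have h4 : 4 * (1 + κ * 1) + (2 * e + ∑ i : Fin e, κ * (η (Pi.single i 1) + η (Pi.single i (-1))))
        ≤ 2 * (e + 2) * (1 + κ * r) := by
      nlinarith
    have h5 : Λ * (1 + κ * r) = 1 + κ := by linarith
    calc _ ≤ Λ * (2 * (e + 2) * (1 + κ * r)) := mul_le_mul_of_nonneg_left h4 (by linarith)
      _ = 2 * (e + 2) * (Λ * (1 + κ * r)) := by ring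
      _ = _ := by rw [h5]; push_cast; ring

end

section

/-- the two-dimensional cylinder -/
abbrev Tor (N : ℕ) := ZMod N × ℤ

/-- nearest neighbours: `q = p ± e` -/
def nn {N : ℕ} (p q : Tor N) : Prop :=
  q = p + (1, 0) ∨ q = p + (-1, 0) ∨ q = p + (0, 1) ∨ q = p + (0, -1)

/-- star neighbours or equal -/
def st {N : ℕ} (p q : Tor N) : Prop :=
  ∃ a b : ℤ, |a| ≤ 1 ∧ |b| ≤ 1 ∧ q = p + ((a : ZMod N), b)

lemma st.symm {N : ℕ} {p q : Tor N} (h : st p q) : st q p := by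
  obtain ⟨a, b, ha, hb, rfl⟩ := h
  refine ⟨-a, -b, by simpa using ha, by simpa using hb, ?_⟩
  ext <;> simp

section dual
variable {N : ℕ} (S W K : Set (Tor N))

/-- boundary edge indicator -/
noncomputable def ced (u v : Tor N) : ZMod 2 := if (u ∈ W ∧ v ∈ K) ∨ (v ∈ W ∧ u ∈ K) then 1 else 0

noncomputable def chi (u : Tor N) : ZMod 2 := if u ∈ W then 1 else 0

lemma ced_comm (u v : Tor N) : ced W K u v = ced W K v u := by
  unfold ced; congr 1; rw [or_comm]

variable {S W K}

lemma two_zero (a : ZMod 2) : a + a = 0 := CharTwo.add_self_eq_zero a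

lemma ced_chi (hKS : K ⊆ S) (hWS : ∀ p ∈ W, p ∉ S)
    (hcl : ∀ p ∈ W, ∀ q, nn p q → q ∉ W → q ∈ S)
    (hK : ∀ p ∈ K, ∀ q ∈ S, st p q → q ∈ K) (u v k : Tor N) (hk : k ∈ K) (hku : st k u) (hkv : st k v)
    (huv : nn u v) (hvu : nn v u) : ced W K u v = chi W u + chi W v := by
  unfold ced chi
  by_cases hu : u ∈ W <;> by_cases hv : v ∈ W
  · have h1 : u ∉ K := fun h => hWS u hu (hKS h)
    have h2 : v ∉ K := fun h => hWS v hv (hKS h)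
    simp [hu, hv, h1, h2]; decide
  · have : v ∈ K := hK k hk v (hcl u hu v huv hv) hkv
    simp [hu, hv, this]
  · have : u ∈ K := hK k hk u (hcl v hv u hvu hu) hku
    simp [hu, hv, this]
  · simp [hu, hv]

lemma plaq (hKS : K ⊆ S) (hWS : ∀ p ∈ W, p ∉ S)
    (hcl : ∀ p ∈ W, ∀ q, nn p q → q ∉ W → q ∈ S)
    (hK : ∀ p ∈ K, ∀ q ∈ S, st p q → q ∈ K) (x : ZMod N) (t : ℤ) :
    ced W K (x, t) (x + 1, t) =
      ced W K (x, t) (x, t + 1) + ced W K (x, t + 1) (x + 1, t + 1) + ced W K (x + 1, t) (x + 1, t + 1) := by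
  have n1 : nn (x, t) (x + 1, t) := Or.inl (by ext <;> simp)
  have n1' : nn (x + 1, t) (x, t) := Or.inr (Or.inl (by ext <;> simp))
  have n2 : nn (x, t) (x, t + 1) := Or.inr (Or.inr (Or.inl (by ext <;> simp)))
  have n2' : nn (x, t + 1) (x, t) := Or.inr (Or.inr (Or.inr (by ext <;> simp)))
  have n3 : nn (x, t + 1) (x + 1, t + 1) := Or.inl (by ext <;> simp)
  have n3' : nn (x + 1, t + 1) (x, t + 1) := Or.inr (Or.inl (by ext <;> simp))
  have n4 : nn (x + 1, t) (x + 1, t + 1) := Or.inr (Or.inr (Or.inl (by ext <;> simp)))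
  have n4' : nn (x + 1, t + 1) (x + 1, t) := Or.inr (Or.inr (Or.inr (by ext <;> simp)))
  by_cases hex : ∃ k ∈ K, st k (x, t) ∧ st k (x + 1, t) ∧ st k (x, t + 1) ∧ st k (x + 1, t + 1)
  · obtain ⟨k, hk, h1, h2, h3, h4⟩ := hex
    rw [ced_chi hKS hWS hcl hK _ _ k hk h1 h2 n1 n1', ced_chi hKS hWS hcl hK _ _ k hk h1 h3 n2 n2',
      ced_chi hKS hWS hcl hK _ _ k hk h3 h4 n3 n3', ced_chi hKS hWS hcl hK _ _ k hk h2 h4 n4 n4']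
    have e1 := two_zero (chi W (x, t + 1))
    have e2 := two_zero (chi W (x + 1, t + 1))
    linear_combination -e1 - e2
  · have k1 : (x, t) ∉ K := fun h => hex ⟨_, h, ⟨0, 0, by simp, by simp, by ext <;> simp⟩,
      ⟨1, 0, by simp, by simp, by ext <;> simp⟩, ⟨0, 1, by simp, by simp, by ext <;> simp⟩,
      ⟨1, 1, by simp, by simp, by ext <;> simp⟩⟩
    have k2 : (x + 1, t) ∉ K := fun h => hex ⟨_, h, ⟨-1, 0, by simp, by simp, by ext <;> simp⟩,
      ⟨0, 0, by simp, by simp, by ext <;> simp⟩, ⟨-1, 1, by simp, by simp, by ext <;> simp⟩,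
      ⟨0, 1, by simp, by simp, by ext <;> simp⟩⟩
    have k3 : (x, t + 1) ∉ K := fun h => hex ⟨_, h, ⟨0, -1, by simp, by simp, by ext <;> simp⟩,
      ⟨1, -1, by simp, by simp, by ext <;> simp⟩, ⟨0, 0, by simp, by simp, by ext <;> simp⟩,
      ⟨1, 0, by simp, by simp, by ext <;> simp⟩⟩
    have k4 : (x + 1, t + 1) ∉ K := fun h => hex ⟨_, h, ⟨-1, -1, by simp, by simp, by ext <;> simp⟩,
      ⟨0, -1, by simp, by simp, by ext <;> simp⟩, ⟨-1, 0, by simp, by simp, by ext <;> simp⟩,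
      ⟨0, 0, by simp, by simp, by ext <;> simp⟩⟩
    simp [ced, k1, k2, k3, k4]

/-- crossing parity -/
noncomputable def sig (W K : Set (Tor N)) (T0 : ℤ) (x : ZMod N) (t : ℤ) : ZMod 2 :=
  ∑ j ∈ Finset.Ico t T0, ced W K (x, j) (x, j + 1)

lemma sig_vert {T0 : ℤ} (htop : ∀ x t, T0 ≤ t → ((x, t) : Tor N) ∈ W) (hWK : ∀ p ∈ W, p ∉ K) (x : ZMod N) (t : ℤ) :
    sig W K T0 x t = ced W K (x, t) (x, t + 1) + sig W K T0 x (t + 1) := by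
  unfold sig
  by_cases h : t < T0
  · rw [← Finset.sum_insert (s := Finset.Ico (t + 1) T0) (a := t) (f := fun j => ced W K (x, j) (x, j + 1)) (by simp)]
    congr 1
    ext j
    simp only [Finset.mem_Ico, Finset.mem_insert]
    omega
  · rw [Finset.Ico_eq_empty (by omega), Finset.Ico_eq_empty (by omega)]
    have h1 := hWK _ (htop x t (by omega))
    have h2 := hWK _ (htop x (t + 1) (by omega))
    simp [ced, h1, h2]

lemma sig_horiz {T0 : ℤ} (htop : ∀ x t, T0 ≤ t → ((x, t) : Tor N) ∈ W)
    (hKS : K ⊆ S) (hWS : ∀ p ∈ W, p ∉ S)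
    (hcl : ∀ p ∈ W, ∀ q, nn p q → q ∉ W → q ∈ S)
    (hK : ∀ p ∈ K, ∀ q ∈ S, st p q → q ∈ K) (x : ZMod N) (t : ℤ) :
    sig W K T0 x t = ced W K (x, t) (x + 1, t) + sig W K T0 (x + 1) t := by
  have hWK : ∀ p ∈ W, p ∉ K := fun p hp hk => hWS p hp (hKS hk)
  have base : ∀ t, T0 ≤ t → sig W K T0 x t = ced W K (x, t) (x + 1, t) + sig W K T0 (x + 1) t := by
    intro t ht
    unfold sig
    rw [Finset.Ico_eq_empty (by omega)]
    have h1 := hWK _ (htop x t (by omega))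
    have h2 := hWK _ (htop (x + 1) t (by omega))
    simp [ced, h1, h2]
  have step : ∀ n : ℕ, sig W K T0 x (T0 - n) = ced W K (x, T0 - n) (x + 1, T0 - n) + sig W K T0 (x + 1) (T0 - n) := by
    intro n
    induction n with
    | zero => simpa using base T0 le_rfl
    | succ n ih =>
      have e : T0 - ((n + 1 : ℕ) : ℤ) + 1 = T0 - n := by push_cast; ring
      rw [sig_vert htop hWK x, sig_vert htop hWK (x + 1), plaq hKS hWS hcl hK, e, ih]
      have e1 := two_zero (ced W K (x + 1, T0 - ((n + 1 : ℕ) : ℤ)) (x + 1, T0 - (n : ℤ)))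
      linear_combination -e1
  by_cases h : T0 ≤ t
  · exact base t h
  · have := step (T0 - t).toNat
    have e : T0 - ((T0 - t).toNat : ℤ) = t := by omega
    rwa [e] at this

lemma sig_nn {T0 : ℤ} (htop : ∀ x t, T0 ≤ t → ((x, t) : Tor N) ∈ W)
    (hKS : K ⊆ S) (hWS : ∀ p ∈ W, p ∉ S)
    (hcl : ∀ p ∈ W, ∀ q, nn p q → q ∉ W → q ∈ S)
    (hK : ∀ p ∈ K, ∀ q ∈ S, st p q → q ∈ K) (p q : Tor N) (h : nn p q) :
    sig W K T0 p.1 p.2 = ced W K p q + sig W K T0 q.1 q.2 := by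
  have hWK : ∀ p ∈ W, p ∉ K := fun p hp hk => hWS p hp (hKS hk)
  obtain ⟨x, t⟩ := p
  have hz := sig_horiz htop hKS hWS hcl hK
  rcases h with rfl | rfl | rfl | rfl
  · simpa using hz x t
  · have := hz (x - 1) t
    simp only [sub_add_cancel] at this
    simp only [Prod.mk_add_mk, add_zero, ← sub_eq_add_neg]
    rw [this, ced_comm W K (x, t)]
    have := two_zero (ced W K (x - 1, t) (x, t))
    linear_combination -this
  · simpa using sig_vert htop hWK x t
  · have := sig_vert htop hWK x (t - 1)
    simp only [sub_add_cancel] at this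
    simp only [Prod.mk_add_mk, add_zero, ← sub_eq_add_neg]
    rw [this, ced_comm W K (x, t)]
    have := two_zero (ced W K (x, t - 1) (x, t))
    linear_combination -this

end dual

/-- star graph on S -/
def stG {N : ℕ} (S : Set (Tor N)) : SimpleGraph (Tor N) where
  Adj p q := p ≠ q ∧ p ∈ S ∧ q ∈ S ∧ st p q
  symm := ⟨fun _ _ h => ⟨h.1.symm, h.2.2.1, h.2.1, h.2.2.2.symm⟩⟩
  loopless := ⟨fun _ h => h.1 rfl⟩

lemma duality {N : ℕ} [NeZero N] (S W : Set (Tor N)) (T0 : ℤ)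
    (htop : ∀ x t, T0 ≤ t → ((x, t) : Tor N) ∈ W)
    (hbot : ∀ x t, t ≤ -T0 → ((x, t) : Tor N) ∉ W)
    (hWS : ∀ p ∈ W, p ∉ S)
    (hcl : ∀ p ∈ W, ∀ q, nn p q → q ∉ W → q ∈ S)
    (hconn : ∀ p ∈ W, ∃ q : Tor N, T0 ≤ q.2 ∧ Relation.ReflTransGen (fun a b => a ∈ W ∧ b ∈ W ∧ nn a b) q p) :
    ∃ p0 : Tor N, p0 ∈ S ∧ p0.1 = 0 ∧ ∀ x : ZMod N, ∃ q : Tor N, q.1 = x ∧ (stG S).Reachable p0 q := by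
  obtain ⟨t1, ht1, hmin⟩ : ∃ lb : ℤ, ((0, lb) : Tor N) ∈ W ∧ ∀ z : ℤ, ((0, z) : Tor N) ∈ W → lb ≤ z := by
    apply Int.exists_least_of_bdd
    · refine ⟨-T0, fun z hz => ?_⟩
      by_contra hc
      exact hbot 0 z (by omega) hz
    · exact ⟨T0, htop 0 T0 le_rfl⟩
  have hp0W : ((0, t1 - 1) : Tor N) ∉ W := fun h => by have := hmin _ h; omega
  have hp0S : ((0, t1 - 1) : Tor N) ∈ S := hcl _ ht1 _ (Or.inr (Or.inr (Or.inr (by ext <;> simp; ring)))) hp0W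
  refine ⟨(0, t1 - 1), hp0S, rfl, ?_⟩
  set p0 : Tor N := (0, t1 - 1) with hp0
  set K : Set (Tor N) := {q | q ∈ S ∧ (stG S).Reachable p0 q} with hKdef
  have hKS : K ⊆ S := fun q hq => hq.1
  have hK : ∀ p ∈ K, ∀ q ∈ S, st p q → q ∈ K := by
    intro p hp q hq hst
    refine ⟨hq, ?_⟩
    by_cases hpq : p = q
    · rw [← hpq]; exact hp.2
    · exact hp.2.trans (SimpleGraph.Adj.reachable ⟨hpq, hp.1, hq, hst⟩)
  have hWK : ∀ p ∈ W, p ∉ K := fun p hp hk => hWS p hp (hKS hk)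
  have hnn := fun p q => sig_nn (T0 := T0) htop hKS hWS hcl hK p q
  have hpath : ∀ p q : Tor N, Relation.ReflTransGen (fun a b => a ∈ W ∧ b ∈ W ∧ nn a b) p q →
      sig W K T0 p.1 p.2 = sig W K T0 q.1 q.2 := by
    intro p q h
    induction h with
    | refl => rfl
    | tail _ hbc ih =>
      obtain ⟨hb, hc, hn⟩ := hbc
      rw [ih, hnn _ _ hn]
      simp [ced, hWK _ hb, hWK _ hc]
  have hsW : ∀ p ∈ W, sig W K T0 p.1 p.2 = 0 := by
    intro p hp
    obtain ⟨q, hq, hr⟩ := hconn p hp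
    rw [← hpath _ _ hr]
    unfold sig
    rw [Finset.Ico_eq_empty (by omega)]
    simp
  have hlow : ∀ n : ℕ, sig W K T0 0 (t1 - 1 - n) = 1 := by
    intro n
    induction n with
    | zero =>
      have := sig_vert (T0 := T0) htop hWK 0 (t1 - 1)
      rw [sub_add_cancel] at this
      have h0 := hsW _ ht1
      simp only at h0
      rw [h0] at this
      simp only [Nat.cast_zero, sub_zero]
      rw [this]
      have : p0 ∈ K := ⟨hp0S, SimpleGraph.Reachable.refl _⟩
      have h2 : ((0, t1 - 1) : Tor N) ∈ K := this
      simp [ced, ht1, h2]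
    | succ n ih =>
      have := sig_vert (T0 := T0) htop hWK 0 (t1 - 1 - (n + 1 : ℕ))
      have e : t1 - 1 - ((n + 1 : ℕ) : ℤ) + 1 = t1 - 1 - n := by push_cast; ring
      rw [e, ih] at this
      rw [this]
      have h1 : ((0, t1 - 1 - ((n + 1 : ℕ) : ℤ)) : Tor N) ∉ W := fun h => by have := hmin _ h; push_cast at this; omega
      have h2 : ((0, t1 - 1 - (n : ℤ)) : Tor N) ∉ W := fun h => by have := hmin _ h; omega
      simp only [ced, h1, h2]
      simp
  have ht1' : -T0 < t1 := by
    by_contra hc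
    exact hbot 0 t1 (by omega) ht1
  have hb0 : sig W K T0 0 (-T0) = 1 := by
    have := hlow (t1 - 1 + T0).toNat
    have e : t1 - 1 - ((t1 - 1 + T0).toNat : ℤ) = -T0 := by omega
    rwa [e] at this
  have hball : ∀ n : ℕ, sig W K T0 (n : ZMod N) (-T0) = 1 := by
    intro n
    induction n with
    | zero => simpa using hb0
    | succ n ih =>
      have := sig_horiz (T0 := T0) htop hKS hWS hcl hK (n : ZMod N) (-T0)
      rw [ih] at this
      have h1 := hbot (n : ZMod N) (-T0) le_rfl
      have h2 := hbot ((n : ZMod N) + 1) (-T0) le_rfl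
      simp only [ced, h1, h2] at this
      push_cast
      simpa using this.symm
  intro x
  by_contra hc
  push Not at hc
  have := hball x.val
  rw [ZMod.natCast_zmod_val] at this
  unfold sig at this
  rw [Finset.sum_eq_zero] at this
  · exact zero_ne_one this
  · intro j _
    have h1 : ((x, j) : Tor N) ∉ K := fun h => hc _ rfl h.2
    have h2 : ((x, j + 1) : Tor N) ∉ K := fun h => hc _ rfl h.2
    simp [ced, h1, h2]

lemma star_path {N : ℕ} [NeZero N] (S : Set (Tor N)) (p0 : Tor N) (hp0 : p0 ∈ S) (h0 : p0.1 = 0)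
    (h : ∀ x : ZMod N, ∃ q : Tor N, q.1 = x ∧ (stG S).Reachable p0 q) :
    ∃ v : ℕ → Tor N, (∀ i ≤ N / 2, v i ∈ S) ∧ Set.InjOn v {i | i ≤ N / 2} ∧
      ∀ i < N / 2, st (v i) (v (i + 1)) := by
  obtain ⟨q, hq, hr⟩ := h ((N / 2 : ℕ) : ZMod N)
  obtain ⟨w⟩ := hr
  set P := w.toPath with hP
  have hlen : N / 2 ≤ P.1.length := by
    have key : ∀ i ≤ P.1.length, |((P.1.getVert i).1).valMinAbs| ≤ i := by
      intro i
      induction i with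
      | zero => intro _; simp [h0]
      | succ i ih =>
        intro hi
        have hadj := P.1.adj_getVert_succ (i := i) (by omega)
        obtain ⟨a, b, ha, hb, hh⟩ := hadj.2.2.2.symm
        have h1 := valMin_add_ge (P.1.getVert (i + 1)).1 a ha
        have h2 : (P.1.getVert i).1 = (P.1.getVert (i + 1)).1 + (a : ZMod N) := congrArg Prod.fst hh
        rw [← h2] at h1
        have := ih (by omega)
        push_cast
        omega
    have := key P.1.length le_rfl
    rw [SimpleGraph.Walk.getVert_length, hq, ZMod.valMinAbs_natCast_of_le_half le_rfl] at this
    rw [Nat.abs_cast] at this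
    exact_mod_cast this
  refine ⟨P.1.getVert, ?_, ?_, ?_⟩
  · intro i hi
    by_cases hi0 : i = 0
    · subst hi0; simpa using hp0
    · have hadj := P.1.adj_getVert_succ (i := i - 1) (by omega)
      have e : i - 1 + 1 = i := by omega
      rw [e] at hadj
      exact hadj.2.2.1
  · exact P.2.getVert_injOn.mono fun i hi => le_trans hi hlen
  · intro i hi
    exact (P.1.adj_getVert_succ (i := i) (by omega)).2.2.2

end

section

/-- the eight star directions -/
noncomputable def Dirs : Finset (ℤ × ℤ) := ((Finset.Icc (-1) 1) ×ˢ (Finset.Icc (-1) 1)).erase 0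

lemma card_Dirs : Dirs.card = 8 := by decide

lemma mem_Dirs (h : ℤ × ℤ) : h ∈ Dirs ↔ h ≠ 0 ∧ |h.1| ≤ 1 ∧ |h.2| ≤ 1 := by
  unfold Dirs
  simp only [Finset.mem_erase, Finset.mem_product, Finset.mem_Icc, abs_le]

lemma neg_mem_Dirs {h : ℤ × ℤ} (hh : h ∈ Dirs) : -h ∈ Dirs := by
  rw [mem_Dirs] at *
  simpa using hh

/-- admissible next directions -/
noncomputable def nxt : List (ℤ × ℤ) → Finset (ℤ × ℤ)
  | [] => Dirs
  | h :: _ => Dirs.erase (-h)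

/-- non-backtracking direction lists -/
noncomputable def NB : ℕ → Finset (List (ℤ × ℤ))
  | 0 => {[]}
  | k + 1 => (NB k).biUnion fun l => (nxt l).image fun h => h :: l

lemma nxt_sub (l : List (ℤ × ℤ)) : nxt l ⊆ Dirs := by
  cases l with
  | nil => exact subset_rfl
  | cons h l => exact Finset.erase_subset _ _

lemma mem_NB_succ (k : ℕ) (l : List (ℤ × ℤ)) :
    l ∈ NB (k + 1) ↔ ∃ l' ∈ NB k, ∃ h ∈ nxt l', l = h :: l' := by
  simp only [NB, Finset.mem_biUnion, Finset.mem_image]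
  constructor
  · rintro ⟨l', h1, h, h2, rfl⟩; exact ⟨l', h1, h, h2, rfl⟩
  · rintro ⟨l', h1, h, h2, rfl⟩; exact ⟨l', h1, h, h2, rfl⟩

lemma card_NB (k : ℕ) : (NB k).card ≤ 8 * 7 ^ k := by
  induction k with
  | zero => simp [NB]
  | succ k ih =>
    cases k with
    | zero => simp [NB, nxt]; exact Finset.card_image_le.trans (by rw [card_Dirs]; norm_num)
    | succ k =>
      calc (NB (k + 1 + 1)).card ≤ ∑ l ∈ NB (k + 1), ((nxt l).image fun h => h :: l).card :=
            Finset.card_biUnion_le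
        _ ≤ ∑ l ∈ NB (k + 1), 7 := by
            refine Finset.sum_le_sum fun l hl => Finset.card_image_le.trans ?_
            rw [mem_NB_succ] at hl
            obtain ⟨l', _, h, hh, rfl⟩ := hl
            simp only [nxt]
            rw [Finset.card_erase_of_mem (neg_mem_Dirs (nxt_sub _ hh)), card_Dirs]
        _ ≤ _ := by rw [Finset.sum_const, smul_eq_mul]; rw [pow_succ 7 (k + 1)]; omega

variable {N : ℕ}

def shp (p : Tor N) (h : ℤ × ℤ) : Tor N := p + ((h.1 : ZMod N), h.2)

def endp (p : Tor N) : List (ℤ × ℤ) → Tor N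
  | [] => p
  | h :: l => shp (endp p l) h

noncomputable def pts (p : Tor N) : List (ℤ × ℤ) → Finset (Tor N)
  | [] => {p}
  | h :: l => insert (shp (endp p l) h) (pts p l)

lemma pts_height (p : Tor N) (k : ℕ) : ∀ l ∈ NB k, |(endp p l).2 - p.2| ≤ k ∧ ∀ x ∈ pts p l, |x.2 - p.2| ≤ k := by
  induction k with
  | zero =>
    intro l hl
    simp only [NB, Finset.mem_singleton] at hl
    subst hl
    simp [endp, pts]
  | succ k ih =>
    intro l hl
    rw [mem_NB_succ] at hl
    obtain ⟨l', h1, h, hh, rfl⟩ := hl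
    have h2 := ((mem_Dirs h).1 (nxt_sub _ hh)).2.2
    obtain ⟨i1, i2⟩ := ih l' h1
    have e1 : |(shp (endp p l') h).2 - p.2| ≤ ((k + 1 : ℕ) : ℤ) := by
      have : (shp (endp p l') h).2 = (endp p l').2 + h.2 := rfl
      rw [this]
      push_cast
      rw [abs_le] at *
      omega
    refine ⟨e1, ?_⟩
    intro x hx
    simp only [pts, Finset.mem_insert] at hx
    rcases hx with rfl | hx
    · exact e1
    · have := i2 x hx
      push_cast; omega

lemma path_code (v : ℕ → Tor N) (m : ℕ) (hinj : Set.InjOn v {i | i ≤ m})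
    (hst : ∀ i < m, st (v i) (v (i + 1))) : ∀ k ≤ m, ∃ l ∈ NB k, endp (v 0) l = v k ∧
      pts (v 0) l = (Finset.range (k + 1)).image v ∧ ∀ h l', l = h :: l' → 1 ≤ k ∧ v k = shp (v (k - 1)) h := by
  intro k
  induction k with
  | zero =>
    intro _
    exact ⟨[], by simp [NB], rfl, by simp [pts], by simp⟩
  | succ k ih =>
    intro hk
    obtain ⟨l, hl, he, hp, hh⟩ := ih (by omega)
    obtain ⟨a, b, ha, hb, hab⟩ := hst k (by omega)
    have hsh : v (k + 1) = shp (v k) (a, b) := hab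
    have hne : ((a, b) : ℤ × ℤ) ≠ 0 := by
      intro h0
      have h1 : a = 0 := congrArg Prod.fst h0
      have h2 : b = 0 := congrArg Prod.snd h0
      subst h1 h2
      have : v (k + 1) = v k := by rw [hab]; ext <;> simp
      have := hinj (x₁ := k + 1) (x₂ := k) hk (by change k ≤ m; omega) this
      omega
    have hD : ((a, b) : ℤ × ℤ) ∈ Dirs := (mem_Dirs _).2 ⟨hne, ha, hb⟩
    have hnx : ((a, b) : ℤ × ℤ) ∈ nxt l := by
      cases l with
      | nil => exact hD
      | cons h l' =>
        obtain ⟨h1, h2⟩ := hh h l' rfl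
        refine Finset.mem_erase.2 ⟨?_, hD⟩
        intro hneg
        have : v (k + 1) = v (k - 1) := by
          rw [hsh, h2, hneg]
          ext <;> simp [shp]
        have := hinj (x₁ := k + 1) (x₂ := k - 1) hk (by change k - 1 ≤ m; omega) this
        omega
    refine ⟨(a, b) :: l, (mem_NB_succ _ _).2 ⟨l, hl, _, hnx, rfl⟩, ?_, ?_, ?_⟩
    · simp only [endp]; rw [he, hsh]
    · simp only [pts]
      rw [he, ← hsh, hp, Finset.range_add_one (n := k + 1), Finset.image_insert]
    · intro h l' e
      simp only [List.cons.injEq] at e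
      refine ⟨by omega, ?_⟩
      rw [← e.1]; simpa using hsh

/-- embedding of the two-dimensional cylinder -/
def emb (e N : ℕ) (p : Tor N) : Cyl (e + 1) N := (Fin.cons (α := fun _ => ZMod N) p.1 (fun _ => 0), p.2)

lemma emb_inj (e N : ℕ) : Function.Injective (emb e N) := by
  intro p q h
  have h1 : p.1 = q.1 := by
    have := congrFun (congrArg Prod.fst h) 0
    simpa [emb] using this
  have h2 : (emb e N p).2 = (emb e N q).2 := by rw [h]
  exact Prod.ext h1 h2

lemma legit_height {d : ℕ} {ω : ℕ → Cyl d N} (h : Legit 0 ω) (i : ℕ) : |(ω i).2| ≤ i := by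
  induction i with
  | zero => rw [h.1]; simp
  | succ i ih =>
    obtain ⟨u, hu, hh⟩ := h.2 i
    have : (ω (i + 1)).2 = (ω i).2 + u (Fin.last d) := by rw [hh]; rfl
    rw [this]
    have h1 := unit_abs hu (Fin.last d)
    have := abs_add_le (ω i).2 (u (Fin.last d))
    push_cast; omega

/-- slab occupation count -/
noncomputable def slabN {d N : ℕ} (ω : ℕ → Cyl d N) (n : ℕ) (t0 : ℤ) : ℕ :=
  ((Finset.range n).filter fun i => ω i ∈ {z : Cyl d N | |z.2 - t0| ≤ 2 * (N : ℤ)}).card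

/-- the event of a long star path in the trace -/
def bad2 (e N n : ℕ) (V : ℝ) : Set (ℕ → Cyl (e + 1) N) :=
  {ω | (∀ t0, (slabN ω n t0 : ℝ) ≤ V) ∧ ∃ v : ℕ → Tor N, (∀ i ≤ N / 2, ∃ j < n, ω j = emb e N (v i)) ∧
    Set.InjOn v {i | i ≤ N / 2} ∧ ∀ i < N / 2, st (v i) (v (i + 1))}

lemma bad2_le (e : ℕ) (he : 1 ≤ e) (η : ZLat e → ℝ) (q : ℝ) (hη0 : η 0 = 1) (hηn : ∀ w, 0 ≤ η w)
    (hη1 : ∀ w, η w ≤ 1)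
    (hηs : ∀ w, w ≠ 0 → ∑ i, (η (w + Pi.single i 1) + η (w + Pi.single i (-1))) ≤ 2 * e * η w)
    (hηq : ∑ i, (η (Pi.single i 1) + η (Pi.single i (-1))) ≤ 2 * e * q)
    (lam : ℝ) (hΛ : 0 < lam) (hΛr : Real.exp lam * ((2 + e * q) / (e + 2)) < 1) :
    ∃ (K C3 : ℝ) (N0 : ℕ), 1 ≤ K ∧ 0 ≤ C3 ∧ 8 ≤ N0 ∧ ∀ N : ℕ, N0 ≤ N →
      ∀ Pl : Cyl (e + 1) N → Measure (ℕ → Cyl (e + 1) N), IsCylRW (e + 1) N Pl → ∀ (n : ℕ) (V : ℝ),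
      Pl 0 (bad2 e N n V) ≤ ENNReal.ofReal ((N * (2 * n + 1)) * (8 * 7 ^ (N / 2)) *
        (K * Real.exp (-(lam * ((N / 2 : ℕ) + 1)) + C3 * ((N / 2 : ℕ) + 1) / (N : ℝ) ^ (e + 2) * V))) := by
  obtain ⟨K, C3, N0, hK, hC3, hN0, H⟩ := exists_Psi e he η q hη0 hηn hη1 hηs hηq (Real.exp lam)
    (Real.one_lt_exp_iff.2 hΛ) hΛr
  refine ⟨K, C3, N0, hK, hC3, hN0, ?_⟩
  intro N hN Pl hPl n V
  have : NeZero N := ⟨by omega⟩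
  set m := N / 2 with hm
  set bnd : ℝ := K * Real.exp (-(lam * ((m : ℕ) + 1)) + C3 * ((m : ℕ) + 1) / (N : ℝ) ^ (e + 2) * V) with hbnd
  set E : Tor N × List (ℤ × ℤ) → Set (ℕ → Cyl (e + 1) N) := fun pl =>
    {ω | (∀ a ∈ (pts pl.1 pl.2).image (emb e N), ∃ i < n, ω i = a) ∧ (slabN ω n pl.1.2 : ℝ) ≤ V} with hE
  set I : Finset (Tor N × List (ℤ × ℤ)) :=
    ((Finset.univ ×ˢ Finset.Icc (-(n : ℤ)) n) ×ˢ NB m).filter fun pl => (pts pl.1 pl.2).card = m + 1 with hI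
  have hsub : Pl 0 (bad2 e N n V) ≤ Pl 0 (⋃ pl ∈ I, E pl) := by
    apply measure_mono_ae
    filter_upwards [legit_ae hPl 0] with ω hl hb
    obtain ⟨hs, v, hv, hinj, hst⟩ := hb
    obtain ⟨l, hlm, _, hp, _⟩ := path_code v m hinj hst m le_rfl
    refine Set.mem_biUnion (x := (v 0, l)) ?_ ?_
    · simp only [hI, Finset.coe_filter, Finset.mem_product, Finset.mem_univ, true_and]
      refine ⟨⟨?_, hlm⟩, ?_⟩
      · obtain ⟨j, hj, hje⟩ := hv 0 (Nat.zero_le _)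
        have := legit_height hl j
        rw [hje] at this
        change |(v 0).2| ≤ (j : ℤ) at this
        change (v 0).2 ∈ Finset.Icc (-(n : ℤ)) n
        rw [abs_le] at this
        rw [Finset.mem_Icc]
        omega
      · rw [hp, Finset.card_image_of_injOn, Finset.card_range]
        intro a ha b hb hab
        simp at ha hb
        exact hinj (by change a ≤ m; omega) (by change b ≤ m; omega) hab
    · refine ⟨?_, hs _⟩
      intro a ha
      simp only [hp, Finset.mem_image, Finset.mem_range] at ha
      obtain ⟨_, ⟨i, hi, rfl⟩, rfl⟩ := ha
      exact hv i (by omega)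
  have hEle : ∀ pl ∈ I, Pl 0 (E pl) ≤ ENNReal.ofReal bnd := by
    intro pl hpl
    simp only [hI, Finset.mem_filter, Finset.mem_product] at hpl
    obtain ⟨⟨_, hlm⟩, hc⟩ := hpl
    set A := (pts pl.1 pl.2).image (emb e N) with hA
    have hcA : A.card = m + 1 := by rw [hA, Finset.card_image_of_injective _ (emb_inj e N), hc]
    obtain ⟨Ψ, h1, h2, h3, h4⟩ := H N hN A (by
      intro x hx i
      simp only [hA, Finset.mem_image] at hx
      obtain ⟨p, _, rfl⟩ := hx
      simp [emb]) pl.1.2 (by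
      intro x hx
      simp only [hA, Finset.mem_image] at hx
      obtain ⟨p, hp, rfl⟩ := hx
      have := (pts_height pl.1 m pl.2 hlm).2 p hp
      change |p.2 - _| ≤ _
      omega)
    have := exp_bound hPl 0 Ψ K lam (C3 * A.card / (N : ℝ) ^ (e + 2)) A {z : Cyl (e + 1) N | |z.2 - pl.1.2| ≤ 2 * (N : ℤ)} h1 h2 hΛ.le (by positivity)
      (fun z hz => by convert h3 z hz) (fun z hz => by convert h4 z hz) n V
    rw [hcA] at this
    have hEq : E pl = {ω | (∀ a ∈ A, ∃ i < n, ω i = a) ∧ (((Finset.range n).filter fun i =>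
        ω i ∈ {z : Cyl (e + 1) N | |z.2 - pl.1.2| ≤ 2 * (N : ℤ)}).card : ℝ) ≤ V} := by
      simp only [hE, slabN]
      congr!
    refine le_trans (le_of_eq ?_) (this.trans (le_of_eq ?_))
    · rw [hEq]
      congr!
    · rw [hbnd]
      push_cast
      rfl
  refine hsub.trans ((measure_biUnion_finset_le _ _).trans ((Finset.sum_le_sum hEle).trans ?_))
  rw [Finset.sum_const, nsmul_eq_mul]
  have hcard : (I.card : ℝ) ≤ (N * (2 * n + 1)) * (8 * 7 ^ m) := by
    have h1 : I.card ≤ (N * (2 * n + 1)) * (8 * 7 ^ m) := by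
      refine (Finset.card_filter_le _ _).trans ?_
      rw [Finset.card_product, Finset.card_product, Finset.card_univ, ZMod.card, Int.card_Icc]
      have e1 : ((n : ℤ) + 1 - -(n : ℤ)).toNat = 2 * n + 1 := by omega
      rw [e1]
      exact Nat.mul_le_mul_left _ (card_NB m)
    exact_mod_cast h1
  rw [← ENNReal.ofReal_natCast, ← ENNReal.ofReal_mul (by positivity)]
  apply ENNReal.ofReal_le_ofReal
  apply mul_le_mul_of_nonneg_right hcard
  rw [hbnd]; positivity

end

section

lemma vsum (d : ℕ) (φ : ℤ → ℝ) :
    ∑ u ∈ unitVecs d, φ (u (Fin.last d)) = 2 * d * φ 0 + φ 1 + φ (-1) := by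
  rw [sum_unitVecs d (fun u => φ (u (Fin.last d))), Fin.sum_univ_castSucc]
  have : ∀ i : Fin d, φ ((Pi.single (Fin.castSucc i) 1 : Lat d) (Fin.last d)) +
      φ ((Pi.single (Fin.castSucc i) (-1) : Lat d) (Fin.last d)) = 2 * φ 0 := by
    intro i
    rw [Pi.single_eq_of_ne (by exact (Fin.castSucc_lt_last i).ne'),
      Pi.single_eq_of_ne (by exact (Fin.castSucc_lt_last i).ne')]
    ring
  simp only [this]
  simp
  ring

/-- exponential one-step bound -/
lemma step_exp (d : ℕ) (a b μ : ℝ) (ha : |a| ≤ 2) (hb : |b| ≤ 2) (hμ : 4 * |μ| ≤ 1) :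
    2 * d * Real.exp (μ * (0 - (a + b) / (2 * (d + 1))) - 16 * μ ^ 2) +
      Real.exp (μ * (a - (a + b) / (2 * (d + 1))) - 16 * μ ^ 2) +
      Real.exp (μ * (b - (a + b) / (2 * (d + 1))) - 16 * μ ^ 2) ≤ 2 * (d + 1) := by
  set D : ℝ := (a + b) / (2 * (d + 1)) with hD
  have hd : (0 : ℝ) ≤ d := Nat.cast_nonneg d
  have hDe : D * (2 * (d + 1)) = a + b := by rw [hD]; field_simp
  have hDa : |D| ≤ 2 := by
    rw [hD, abs_div, div_le_iff₀ (by positivity), abs_of_pos (show (0 : ℝ) < 2 * (d + 1) by positivity)]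
    have := abs_add_le a b
    nlinarith
  have key : ∀ s : ℝ, |s| ≤ 2 → Real.exp (μ * (s - D) - 16 * μ ^ 2) ≤
      (1 + μ * (s - D) + 16 * μ ^ 2) * Real.exp (-(16 * μ ^ 2)) := by
    intro s hs
    rw [sub_eq_add_neg (μ * (s - D)), Real.exp_add]
    apply mul_le_mul_of_nonneg_right _ (Real.exp_pos _).le
    have h4 : |s - D| ≤ 4 := (abs_sub s D).trans (by linarith)
    have h1 : |μ * (s - D)| ≤ 1 := by
      rw [abs_mul]; nlinarith [abs_nonneg μ]
    have h2 := Real.abs_exp_sub_one_sub_id_le h1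
    have h3 : (s - D) ^ 2 ≤ 16 := by
      rw [← sq_abs]; nlinarith [abs_nonneg (s - D)]
    have := (abs_le.1 h2).2
    nlinarith [sq_nonneg μ]
  have k0 := key 0 (by simp)
  have ka := key a ha
  have kb := key b hb
  have hE : (1 + 16 * μ ^ 2) * Real.exp (-(16 * μ ^ 2)) ≤ 1 := by
    rw [Real.exp_neg, ← div_eq_mul_inv, div_le_one (Real.exp_pos _)]
    linarith [Real.add_one_le_exp (16 * μ ^ 2)]
  set X := Real.exp (-(16 * μ ^ 2))
  have hX : 0 ≤ X := (Real.exp_pos _).le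
  calc _ ≤ 2 * d * ((1 + μ * (0 - D) + 16 * μ ^ 2) * X) + (1 + μ * (a - D) + 16 * μ ^ 2) * X +
        (1 + μ * (b - D) + 16 * μ ^ 2) * X := by
        have := mul_le_mul_of_nonneg_left k0 (show 0 ≤ 2 * (d : ℝ) by positivity)
        linarith
    _ = 2 * (d + 1) * ((1 + 16 * μ ^ 2) * X) + μ * X * (a + b - D * (2 * (d + 1))) := by ring
    _ ≤ _ := by
        rw [hDe]
        nlinarith

lemma tail {d N : ℕ} {Pl : Cyl d N → Measure (ℕ → Cyl d N)} (h : IsCylRW d N Pl)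
    (f : ℤ → ℝ) (U : Set ℤ) (hf : ∀ z, |f (z + 1) - f z| ≤ 2)
    (hU : ∀ z ∉ U, f (z + 1) = f z ∧ f (z - 1) = f z) (μ : ℝ) (hμ : 4 * |μ| ≤ 1)
    (G : ℕ → (ℕ → Cyl d N) → Prop) (hG : ∀ i, Dep i (G i)) (n : ℕ) (a : ℝ) :
    Pl 0 {ω | ∃ τ ≤ n, (∀ i < n, (i < τ ↔ G i ω)) ∧
      a ≤ μ * (f (ω τ).2 - f 0 - ∑ i ∈ Finset.range τ,
        (f ((ω i).2 + 1) + f ((ω i).2 - 1) - 2 * f (ω i).2) / (2 * (d + 1))) -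
        16 * μ ^ 2 * ((Finset.range τ).filter fun i => (ω i).2 ∈ U).card} ≤
      ENNReal.ofReal (Real.exp (-a)) := by
  set g : Cyl d N → ℤ → ℝ := fun z s => μ * (f s - f z.2 -
    (f (z.2 + 1) + f (z.2 - 1) - 2 * f z.2) / (2 * (d + 1))) - (if z.2 ∈ U then 16 * μ ^ 2 else 0) with hg
  have := cyl_markov h 0 (fun k ω y => Real.exp (if G k ω then g (ω k) y.2 else 0))
    (fun k ω y => (Real.exp_pos _).le)
    (fun k ω ω' hh => by funext y; simp only; rw [hh k le_rfl, hG k ω ω' hh])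
    (fun k ω => by
      by_cases hk : G k ω
      · simp only [if_pos hk]
        have e1 : ∀ u : Lat d, (ω k + projE d N u).2 = (ω k).2 + u (Fin.last d) := fun u => rfl
        simp only [e1]
        rw [vsum d (fun s => Real.exp (g (ω k) ((ω k).2 + s)))]
        by_cases hz : (ω k).2 ∈ U
        · have := step_exp d (f ((ω k).2 + 1) - f (ω k).2) (f ((ω k).2 - 1) - f (ω k).2) μ (hf _) (by
            have := hf ((ω k).2 - 1)
            rw [sub_add_cancel, abs_sub_comm] at this
            exact this) hμ
          refine le_trans (le_of_eq ?_) this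
          simp only [hg, if_pos hz, add_zero, ← sub_eq_add_neg]
          congr! 6 <;> ring
        · obtain ⟨h1, h2⟩ := hU _ hz
          simp only [hg, if_neg hz, add_zero, ← sub_eq_add_neg, h1, h2]
          have e0 : f (ω k).2 + f (ω k).2 - 2 * f (ω k).2 = 0 := by ring
          simp only [e0]
          simp
          linarith
      · simp only [if_neg hk, Real.exp_zero, Finset.sum_const, card_unitVecs, nsmul_eq_mul]
        push_cast; linarith)
    n {ω | ∃ τ ≤ n, (∀ i < n, (i < τ ↔ G i ω)) ∧
      a ≤ μ * (f (ω τ).2 - f 0 - ∑ i ∈ Finset.range τ,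
        (f ((ω i).2 + 1) + f ((ω i).2 - 1) - 2 * f (ω i).2) / (2 * (d + 1))) -
        16 * μ ^ 2 * ((Finset.range τ).filter fun i => (ω i).2 ∈ U).card} (Real.exp a) (Real.exp_pos _) (by
      rintro ω ⟨τ, hτ, hs, ha⟩ hl
      rw [← Real.exp_sum]
      apply Real.exp_le_exp.2
      refine ha.trans (le_of_eq ?_)
      have e1 : ∑ i ∈ Finset.range n, (if G i ω then g (ω i) (ω (i + 1)).2 else 0) =
          ∑ i ∈ Finset.range τ, g (ω i) (ω (i + 1)).2 := by
        rw [← Finset.sum_filter]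
        congr 1
        ext i
        simp only [Finset.mem_filter, Finset.mem_range]
        constructor
        · rintro ⟨h1, h2⟩; exact (hs i h1).2 h2
        · intro h1; exact ⟨h1.trans_le hτ, (hs i (h1.trans_le hτ)).1 h1⟩
      rw [e1]
      simp only [hg]
      have e2 : ∑ i ∈ Finset.range τ, (f (ω (i + 1)).2 - f (ω i).2) = f (ω τ).2 - f 0 := by
        rw [Finset.sum_range_sub (fun i => f (ω i).2), hl.1]; rfl
      rw [Finset.sum_sub_distrib, ← Finset.mul_sum, Finset.sum_sub_distrib, e2, ← Finset.sum_filter,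
        Finset.sum_const, nsmul_eq_mul]
      ring)
  rw [one_div, ← Real.exp_neg] at this
  exact this

end

section

/-- Occupation time of the vertical component. -/
noncomputable def Lt {d N : ℕ} (ω : ℕ → Cyl d N) (t : ℤ) (k : ℕ) : ℕ :=
  ((Finset.range k).filter fun i => (ω i).2 = t).card

lemma Lt_succ {d N : ℕ} (ω : ℕ → Cyl d N) (t : ℤ) (k : ℕ) : Lt ω t (k + 1) ≤ Lt ω t k + 1 := by
  unfold Lt
  rw [Finset.range_add_one, Finset.filter_insert]
  split_ifs
  · exact Finset.card_insert_le _ _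
  · omega

/-- the walk is good up to time `i` -/
def Gd {d N : ℕ} (B R : ℝ) (i : ℕ) (ω : ℕ → Cyl d N) : Prop :=
  ∀ k ≤ i, (∀ t, (Lt ω t k : ℝ) ≤ B) ∧ |((ω k).2 : ℝ)| ≤ R

lemma Gd_dep {d N : ℕ} (B R : ℝ) (i : ℕ) : Dep i (Gd (d := d) (N := N) B R i) := by
  intro ω ω' h
  have key : ∀ k ≤ i, ∀ t, Lt ω t k = Lt ω' t k := by
    intro k hk t
    unfold Lt
    congr 1
    apply Finset.filter_congr
    intro j hj
    rw [h j (by have := Finset.mem_range.1 hj; omega)]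
  unfold Gd
  apply propext
  refine forall_congr' fun k => forall_congr' fun hk => ?_
  rw [h k hk]
  simp only [key k hk]

/-- `τ` is the stopping time -/
def Stp {d N : ℕ} (B R : ℝ) (n : ℕ) (ω : ℕ → Cyl d N) (τ : ℕ) : Prop :=
  τ ≤ n ∧ ∀ i < n, (i < τ ↔ Gd B R i ω)

lemma exists_stp {d N : ℕ} (B R : ℝ) (hB : 0 ≤ B) (n : ℕ) (ω : ℕ → Cyl d N) (hbad : ∃ t, B < (Lt ω t n : ℝ)) :
    ∃ τ, Stp B R n ω τ ∧ (∀ t, (Lt ω t τ : ℝ) ≤ B + 1) ∧ (R < |((ω τ).2 : ℝ)| ∨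
      (|((ω τ).2 : ℝ)| ≤ R ∧ ∃ t : ℤ, B < (Lt ω t τ : ℝ) ∧ |(t : ℝ)| ≤ R)) := by
  have hex : ∃ k, ¬ ((∀ t, (Lt ω t k : ℝ) ≤ B) ∧ |((ω k).2 : ℝ)| ≤ R) :=
    ⟨n, fun hh => by obtain ⟨t, ht⟩ := hbad; exact absurd (hh.1 t) (not_le.2 ht)⟩
  set τ := Nat.find hex with hτ
  have hspec := Nat.find_spec hex
  have hmin : ∀ k < τ, (∀ t, (Lt ω t k : ℝ) ≤ B) ∧ |((ω k).2 : ℝ)| ≤ R := fun k hk =>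
    not_not.1 (Nat.find_min hex hk)
  refine ⟨τ, ⟨Nat.find_min' hex fun hh => by
    obtain ⟨t, ht⟩ := hbad; exact absurd (hh.1 t) (not_le.2 ht), fun i _ => ⟨fun hi k hk => hmin k (by omega), fun hg => ?_⟩⟩, ?_, ?_⟩
  · by_contra hc
    exact hspec (hg τ (by omega))
  · intro t
    rcases Nat.eq_zero_or_pos τ with h0 | h0
    · rw [h0]; simp [Lt]; linarith
    · have h1 := (hmin (τ - 1) (by omega)).1 t
      have h2 := Lt_succ ω t (τ - 1)
      rw [Nat.sub_add_cancel h0] at h2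
      have h3 : (Lt ω t τ : ℝ) ≤ Lt ω t (τ - 1) + 1 := by exact_mod_cast h2
      linarith
  · by_cases hR : R < |((ω τ).2 : ℝ)|
    · exact Or.inl hR
    · right
      rw [not_lt] at hR
      refine ⟨hR, ?_⟩
      have : ¬ ∀ t, (Lt ω t τ : ℝ) ≤ B := fun hh => hspec ⟨hh, hR⟩
      push Not at this
      obtain ⟨t, ht⟩ := this
      refine ⟨t, ht, ?_⟩
      have hpos : 0 < Lt ω t τ := by
        have : (0 : ℝ) < Lt ω t τ := by linarith
        exact_mod_cast this
      obtain ⟨i, hi⟩ := Finset.card_pos.1 hpos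
      simp only [Finset.mem_filter, Finset.mem_range] at hi
      rw [← hi.2]
      exact (hmin i hi.1).2

lemma absD (z x : ℤ) : |((z + 1 : ℤ) : ℝ) - x| + |((z - 1 : ℤ) : ℝ) - x| - 2 * |(z : ℝ) - x| =
    if z = x then 2 else 0 := by
  have : |z + 1 - x| + |z - 1 - x| - 2 * |z - x| = if z = x then 2 else 0 := by
    split_ifs with h
    · subst h
      have : z + 1 - z = 1 := by ring
      have h2 : z - 1 - z = -1 := by ring
      rw [this, h2]; simp
    · rcases lt_or_gt_of_ne h with h | h
      · rw [abs_of_nonpos (by omega), abs_of_nonpos (by omega), abs_of_nonpos (by omega)]; ring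
      · rw [abs_of_nonneg (by omega), abs_of_nonneg (by omega), abs_of_nonneg (by omega)]; ring
  exact_mod_cast this

lemma sum_ind {d N : ℕ} (ω : ℕ → Cyl d N) (x : ℤ) (τ : ℕ) :
    ∑ i ∈ Finset.range τ, (if (ω i).2 = x then (2 : ℝ) else 0) = 2 * Lt ω x τ := by
  rw [← Finset.sum_filter, Finset.sum_const, nsmul_eq_mul, Lt]; ring

lemma T3 {d N : ℕ} {Pl : Cyl d N → Measure (ℕ → Cyl d N)} (h : IsCylRW d N Pl) (B R m : ℝ) (hm : 0 ≤ m)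
    (hm4 : 4 * m ≤ 1) (n : ℕ) :
    Pl 0 {ω | ∃ τ, Stp B R n ω τ ∧ R < |((ω τ).2 : ℝ)|} ≤
      ENNReal.ofReal (2 * Real.exp (-(m * R - 16 * m ^ 2 * n))) := by
  have t1 := tail h (fun z => (z : ℝ)) Set.univ (fun z => by push_cast; simp) (by simp) m
    (by rwa [abs_of_nonneg hm]) (Gd B R) (Gd_dep B R) n (m * R - 16 * m ^ 2 * n)
  have t2 := tail h (fun z => (z : ℝ)) Set.univ (fun z => by push_cast; simp) (by simp) (-m)
    (by rwa [abs_neg, abs_of_nonneg hm]) (Gd B R) (Gd_dep B R) n (m * R - 16 * m ^ 2 * n)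
  rw [two_mul, ENNReal.ofReal_add (Real.exp_pos _).le (Real.exp_pos _).le]
  refine le_trans (measure_mono ?_) ((measure_union_le _ _).trans (add_le_add t1 t2))
  rintro ω ⟨τ, ⟨hτ, hs⟩, hR⟩
  have hn : (τ : ℝ) ≤ n := by exact_mod_cast hτ
  have e0 : ∀ z : ℤ, (((z + 1 : ℤ) : ℝ) + ((z - 1 : ℤ) : ℝ) - 2 * (z : ℝ)) / (2 * ((d : ℝ) + 1)) = 0 := by
    intro z; push_cast; ring
  have h2 : m ^ 2 * (τ : ℝ) ≤ m ^ 2 * n := mul_le_mul_of_nonneg_left hn (sq_nonneg m)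
  rcases lt_abs.1 hR with h1 | h1
  · left
    refine ⟨τ, hτ, hs, ?_⟩
    simp only [e0, Set.mem_univ, Finset.filter_true, Finset.card_range, Finset.sum_const_zero, Int.cast_zero]
    nlinarith
  · right
    refine ⟨τ, hτ, hs, ?_⟩
    simp only [e0, Set.mem_univ, Finset.filter_true, Finset.card_range, Finset.sum_const_zero, Int.cast_zero]
    nlinarith

lemma abs_lip (z x : ℤ) : |(|((z + 1 : ℤ) : ℝ) - x| - |(z : ℝ) - x|)| ≤ 1 := by
  refine (abs_abs_sub_abs_le_abs_sub _ _).trans ?_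
  push_cast
  rw [show (z : ℝ) + 1 - x - (z - x) = 1 by ring]; simp

lemma arith2 {m c1 c2 R q1 q0 τ n : ℝ} (hm : 0 ≤ m) (h4 : c1 ≤ c2) (h3 : q1 - q0 ≤ R)
    (h2 : m ^ 2 * τ ≤ m ^ 2 * n) :
    m * (c1 - R) - 16 * m ^ 2 * n ≤ -m * (q1 - q0 - c2) - 16 * (-m) ^ 2 * τ := by
  have h5 : m * (c1 - R) ≤ m * (c2 - (q1 - q0)) := mul_le_mul_of_nonneg_left (by linarith) hm
  nlinarith

lemma arith3 {m c1 c2 R q1 q0 τ n : ℝ} (hm : 0 ≤ m) (h4 : c1 ≤ -c2) (h3 : q0 - q1 ≤ R)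
    (h2 : m ^ 2 * τ ≤ m ^ 2 * n) :
    m * (c1 - R) - 16 * m ^ 2 * n ≤ m * (q1 - q0 - c2) - 16 * m ^ 2 * τ := by
  have h5 : m * (c1 - R) ≤ m * (-c2 + (q1 - q0)) := mul_le_mul_of_nonneg_left (by linarith) hm
  nlinarith

lemma T2 {d N : ℕ} {Pl : Cyl d N → Measure (ℕ → Cyl d N)} (h : IsCylRW d N Pl) (B R m : ℝ) (hm : 0 ≤ m)
    (hm4 : 4 * m ≤ 1) (n : ℕ) (x : ℤ) :
    Pl 0 {ω | ∃ τ, Stp B R n ω τ ∧ |((ω τ).2 : ℝ)| ≤ R ∧ B / 2 ≤ Lt ω x τ} ≤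
      ENNReal.ofReal (Real.exp (-(m * (B / (2 * (d + 1)) - R) - 16 * m ^ 2 * n))) := by
  have t2 := tail h (fun z => |(z : ℝ) - x|) Set.univ (fun z => (abs_lip z x).trans (by norm_num)) (by simp) (-m)
    (by rwa [abs_neg, abs_of_nonneg hm]) (Gd B R) (Gd_dep B R) n (m * (B / (2 * (d + 1)) - R) - 16 * m ^ 2 * n)
  refine le_trans (measure_mono ?_) t2
  rintro ω ⟨τ, ⟨hτ, hs⟩, hR, hL⟩
  have hn : (τ : ℝ) ≤ n := by exact_mod_cast hτ
  have h2 : m ^ 2 * (τ : ℝ) ≤ m ^ 2 * n := mul_le_mul_of_nonneg_left hn (sq_nonneg m)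
  refine ⟨τ, hτ, hs, ?_⟩
  simp only [absD, Set.mem_univ, Finset.filter_true, Finset.card_range]
  rw [← Finset.sum_div, sum_ind]
  have h3 : |((ω τ).2 : ℝ) - x| - |((0 : ℤ) : ℝ) - x| ≤ R := by
    have := abs_sub_abs_le_abs_sub (((ω τ).2 : ℝ) - x) (((0 : ℤ) : ℝ) - x)
    rw [show ((ω τ).2 : ℝ) - x - (((0 : ℤ) : ℝ) - x) = ((ω τ).2 : ℝ) by push_cast; ring] at this
    linarith
  have h4 : B / (2 * (d + 1)) ≤ 2 * (Lt ω x τ : ℝ) / (2 * (d + 1)) := by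
    apply div_le_div_of_nonneg_right _ (by positivity); linarith
  exact arith2 hm h4 h3 h2

lemma card_slab {d N : ℕ} (ω : ℕ → Cyl d N) (τ : ℕ) (B : ℝ) (hB : ∀ t, (Lt ω t τ : ℝ) ≤ B) (x y : ℤ)
    (hxy : x ≤ y) :
    (((Finset.range τ).filter fun i => (ω i).2 ∈ Set.Icc x y).card : ℝ) ≤ ((y - x : ℤ) + 1) * B := by
  have h1 : (((Finset.range τ).filter fun i => (ω i).2 ∈ Set.Icc x y).card) ≤ ∑ t ∈ Finset.Icc x y, Lt ω t τ := by
    rw [Finset.card_eq_sum_card_fiberwise (f := fun i => (ω i).2) (t := Finset.Icc x y)]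
    · apply Finset.sum_le_sum
      intro t _
      apply Finset.card_le_card
      intro i hi
      simp only [Finset.mem_filter] at hi ⊢
      exact ⟨hi.1.1, hi.2⟩
    · intro i hi
      simp only [Finset.coe_filter, Set.mem_ofPred_eq, Set.mem_Icc] at hi
      simpa using hi.2
  calc (((Finset.range τ).filter fun i => (ω i).2 ∈ Set.Icc x y).card : ℝ)
      ≤ ∑ t ∈ Finset.Icc x y, (Lt ω t τ : ℝ) := by exact_mod_cast h1
    _ ≤ ∑ t ∈ Finset.Icc x y, B := Finset.sum_le_sum fun t _ => hB t
    _ = _ := by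
        rw [Finset.sum_const, Int.card_Icc, nsmul_eq_mul]
        congr 1
        have : ((y + 1 - x).toNat : ℤ) = y - x + 1 := by omega
        exact_mod_cast this

lemma T1 {d N : ℕ} {Pl : Cyl d N → Measure (ℕ → Cyl d N)} (h : IsCylRW d N Pl) (B R m α : ℝ) (hm : 0 ≤ m)
    (hm4 : 4 * m ≤ 1) (n : ℕ) (x y : ℤ) (hxy : x ≤ y) :
    Pl 0 {ω | ∃ τ, Stp B R n ω τ ∧ (∀ t, (Lt ω t τ : ℝ) ≤ B + 1) ∧ α ≤ |(Lt ω x τ : ℝ) - Lt ω y τ|} ≤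
      ENNReal.ofReal (2 * Real.exp (-(m * (α / (d + 1) - 2 * (y - x : ℤ)) -
        16 * m ^ 2 * (((y - x : ℤ) + 1) * (B + 1))))) := by
  set a := (m * (α / (d + 1) - 2 * (y - x : ℤ)) - 16 * m ^ 2 * (((y - x : ℤ) + 1) * (B + 1))) with ha
  have hf : ∀ z : ℤ, |(|((z + 1 : ℤ) : ℝ) - x| - |((z + 1 : ℤ) : ℝ) - y|) - (|(z : ℝ) - x| - |(z : ℝ) - y|)| ≤ 2 := by
    intro z
    have h1 := abs_lip z x
    have h2 := abs_lip z y
    rw [abs_le] at *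
    constructor <;> linarith
  have hU : ∀ z : ℤ, z ∉ Set.Icc x y → (|((z + 1 : ℤ) : ℝ) - x| - |((z + 1 : ℤ) : ℝ) - y|) = (|(z : ℝ) - x| - |(z : ℝ) - y|) ∧
      (|((z - 1 : ℤ) : ℝ) - x| - |((z - 1 : ℤ) : ℝ) - y|) = (|(z : ℝ) - x| - |(z : ℝ) - y|) := by
    intro z hz
    have : |z + 1 - x| - |z + 1 - y| = |z - x| - |z - y| ∧ |z - 1 - x| - |z - 1 - y| = |z - x| - |z - y| := by
      rw [Set.mem_Icc, not_and_or, not_le, not_le] at hz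
      rcases hz with hz | hz
      · rw [abs_of_nonpos (by omega), abs_of_nonpos (by omega), abs_of_nonpos (by omega), abs_of_nonpos (by omega),
          abs_of_nonpos (by omega), abs_of_nonpos (by omega)]
        omega
      · rw [abs_of_nonneg (by omega), abs_of_nonneg (by omega), abs_of_nonneg (by omega), abs_of_nonneg (by omega),
          abs_of_nonneg (by omega), abs_of_nonneg (by omega)]
        omega
    exact_mod_cast this
  have t1 := tail h (fun z => |(z : ℝ) - x| - |(z : ℝ) - y|) (Set.Icc x y) hf hU m
    (by rwa [abs_of_nonneg hm]) (Gd B R) (Gd_dep B R) n a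
  have t2 := tail h (fun z => |(z : ℝ) - x| - |(z : ℝ) - y|) (Set.Icc x y) hf hU (-m)
    (by rwa [abs_neg, abs_of_nonneg hm]) (Gd B R) (Gd_dep B R) n a
  rw [two_mul, ENNReal.ofReal_add (Real.exp_pos _).le (Real.exp_pos _).le]
  refine le_trans (measure_mono ?_) ((measure_union_le _ _).trans (add_le_add t1 t2))
  rintro ω ⟨τ, ⟨hτ, hs⟩, hB, hL⟩
  have hcard := card_slab ω τ (B + 1) hB x y hxy
  have hl0 : (0 : ℝ) ≤ ((y - x : ℤ) : ℝ) := by exact_mod_cast (by omega : (0 : ℤ) ≤ y - x)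
  have fb : ∀ z : ℝ, |(|z - x| - |z - y|)| ≤ ((y - x : ℤ) : ℝ) := by
    intro z
    refine (abs_abs_sub_abs_le_abs_sub _ _).trans ?_
    rw [show z - x - (z - y) = ((y - x : ℤ) : ℝ) by push_cast; ring, abs_of_nonneg hl0]
  have f1 := abs_le.1 (fb ((ω τ).2 : ℝ))
  have f2 := abs_le.1 (fb (((0 : ℤ)) : ℝ))
  have hsum : ∑ i ∈ Finset.range τ, ((|(((ω i).2 + 1 : ℤ) : ℝ) - x| - |(((ω i).2 + 1 : ℤ) : ℝ) - y|) +
      (|(((ω i).2 - 1 : ℤ) : ℝ) - x| - |(((ω i).2 - 1 : ℤ) : ℝ) - y|) -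
      2 * (|((ω i).2 : ℝ) - x| - |((ω i).2 : ℝ) - y|)) / (2 * ((d : ℝ) + 1)) =
      ((Lt ω x τ : ℝ) - Lt ω y τ) / (d + 1) := by
    rw [← Finset.sum_div]
    have : ∀ i ∈ Finset.range τ, ((|(((ω i).2 + 1 : ℤ) : ℝ) - x| - |(((ω i).2 + 1 : ℤ) : ℝ) - y|) +
      (|(((ω i).2 - 1 : ℤ) : ℝ) - x| - |(((ω i).2 - 1 : ℤ) : ℝ) - y|) -
      2 * (|((ω i).2 : ℝ) - x| - |((ω i).2 : ℝ) - y|)) = (if (ω i).2 = x then (2 : ℝ) else 0) -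
        (if (ω i).2 = y then (2 : ℝ) else 0) := by
      intro i _
      rw [← absD, ← absD]; ring
    rw [Finset.sum_congr rfl this, Finset.sum_sub_distrib, sum_ind, sum_ind]
    field_simp
  have hm2 : m ^ 2 * (((Finset.range τ).filter fun i => (ω i).2 ∈ Set.Icc x y).card : ℝ) ≤
      m ^ 2 * (((y - x : ℤ) + 1) * (B + 1)) := mul_le_mul_of_nonneg_left hcard (sq_nonneg m)
  have hd : (0 : ℝ) < d + 1 := by positivity
  rcases le_abs.1 hL with h1 | h1
  · right
    refine ⟨τ, hτ, hs, ?_⟩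
    simp only [hsum]
    have h5 := div_le_div_of_nonneg_right h1 hd.le
    exact arith2 hm h5 (by linarith [f1.2, f2.1]) (by convert hm2)
  · left
    refine ⟨τ, hτ, hs, ?_⟩
    simp only [hsum]
    have h5 := div_le_div_of_nonneg_right h1 hd.le
    rw [neg_div] at h5
    exact arith3 hm h5 (by linarith [f1.1, f2.2]) (by convert hm2)

end

section

lemma chain_det (l : ℤ → ℝ) (K : ℕ) (B : ℝ) (x : ℤ) (hB : 0 < B) (h0 : l (2 ^ K * (x / 2 ^ K)) < B / 2)
    (hstep : ∀ j < K, |l (2 ^ (K - j) * (x / 2 ^ (K - j))) -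
      l (2 ^ (K - j) * (x / 2 ^ (K - j)) + 2 ^ (K - j - 1))| < B / 8 * (3 / 4) ^ j) : l x < B := by
  have key : ∀ j ≤ K, l (2 ^ (K - j) * (x / 2 ^ (K - j))) < B - B / 2 * (3 / 4) ^ j := by
    intro j
    induction j with
    | zero => intro _; simp only [Nat.sub_zero, pow_zero]; linarith
    | succ j ih =>
      intro hj
      have h1 := ih (by omega)
      have h2 := abs_lt.1 (hstep j (by omega))
      have hp : (0 : ℝ) < (3 / 4) ^ j := by positivity
      obtain ⟨s, hs⟩ : ∃ s, K - j = s + 1 := ⟨K - j - 1, by omega⟩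
      have hs' : K - (j + 1) = s := by omega
      rw [hs] at h1 h2
      simp only [Nat.add_sub_cancel] at h2
      rw [hs', pow_succ (3 / 4 : ℝ)]
      have hx : x / 2 ^ (s + 1) = (x / 2 ^ s) / 2 := by
        rw [pow_succ, Int.ediv_ediv_of_nonneg (by positivity)]
      rw [hx, pow_succ (2 : ℤ) s] at h1 h2
      rcases Int.even_or_odd' (x / 2 ^ s) with ⟨k, hk | hk⟩
      · have e1 : x / 2 ^ s / 2 = k := by omega
        have e2 : (2 : ℤ) ^ s * (x / 2 ^ s) = 2 ^ s * 2 * k := by rw [hk]; ring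
        rw [e1] at h1
        rw [e2]
        nlinarith
      · have e1 : x / 2 ^ s / 2 = k := by omega
        have e2 : (2 : ℤ) ^ s * (x / 2 ^ s) = 2 ^ s * 2 * k + 2 ^ s := by rw [hk]; ring
        rw [e1] at h1 h2
        rw [e2]
        nlinarith [h2.1, h2.2]
  have := key K le_rfl
  simp only [Nat.sub_self, pow_zero, Int.ediv_one, one_mul] at this
  have hp : (0 : ℝ) < B / 2 * (3 / 4) ^ K := by positivity
  linarith

lemma grid_range (x : ℤ) (R : ℝ) (hx : |(x : ℝ)| ≤ R) (K M j : ℕ) (hj : j ≤ K) (hM : R / 2 ^ K + 1 ≤ M) :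
    x / 2 ^ (K - j) ∈ Finset.Icc (-((2 ^ j * M : ℕ) : ℤ)) ((2 ^ j * M : ℕ) : ℤ) := by
  set s : ℤ := 2 ^ (K - j) with hs
  have hsp : (0 : ℤ) < s := by positivity
  have hsr : (0 : ℝ) < (s : ℝ) := by exact_mod_cast hsp
  set a := x / s with ha
  have h1 : s * a ≤ x := Int.mul_ediv_self_le hsp.ne'
  have h2 : x < s * a + s := Int.lt_mul_ediv_self_add hsp
  have h1r : (s : ℝ) * a ≤ x := by exact_mod_cast h1
  have h2r : (x : ℝ) < s * a + s := by exact_mod_cast h2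
  have hx' := abs_le.1 hx
  have hK : (2 : ℝ) ^ K = 2 ^ j * s := by
    rw [hs]; push_cast; rw [← pow_add]; congr 1; omega
  have h2K : (0 : ℝ) < 2 ^ K := by positivity
  have hR : R + 2 ^ K ≤ M * 2 ^ K := by
    have := mul_le_mul_of_nonneg_right hM h2K.le
    rwa [add_mul, div_mul_cancel₀ _ h2K.ne', one_mul] at this
  have hj1 : (1 : ℝ) ≤ 2 ^ j := one_le_pow₀ (by norm_num)
  rw [hK] at hR
  have hss : (s : ℝ) ≤ 2 ^ j * s := le_mul_of_one_le_left hsr.le hj1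
  have u1 : (a : ℝ) ≤ 2 ^ j * M := by
    have : (s : ℝ) * a ≤ s * (2 ^ j * M) := by nlinarith
    exact le_of_mul_le_mul_left this hsr
  have u2 : -((2 : ℝ) ^ j * M) ≤ a := by
    have : (s : ℝ) * (-(2 ^ j * M)) ≤ s * a := by nlinarith
    exact le_of_mul_le_mul_left this hsr
  rw [Finset.mem_Icc]
  constructor
  · exact_mod_cast u2
  · exact_mod_cast u1

lemma card_grid (M j : ℕ) (hM : 1 ≤ M) :
    ((Finset.Icc (-((2 ^ j * M : ℕ) : ℤ)) ((2 ^ j * M : ℕ) : ℤ)).card : ℝ) ≤ 3 * 2 ^ j * M := by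
  have : (Finset.Icc (-((2 ^ j * M : ℕ) : ℤ)) ((2 ^ j * M : ℕ) : ℤ)).card ≤ 3 * 2 ^ j * M := by
    rw [Int.card_Icc]
    have h1 : 1 ≤ 2 ^ j * M := Nat.mul_pos (by positivity) hM
    rw [mul_assoc]
    omega
  exact_mod_cast this

lemma local_union {d N : ℕ} {Pl : Cyl d N → Measure (ℕ → Cyl d N)} (h : IsCylRW d N Pl) (B R : ℝ) (hB : 0 < B)
    (n K M : ℕ) (hM1 : 1 ≤ M) (hM : R / 2 ^ K + 1 ≤ M) (m0 : ℝ) (hm0 : 0 ≤ m0) (hm04 : 4 * m0 ≤ 1)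
    (a2 : ℝ) (ha2 : a2 ≤ m0 * R - 16 * m0 ^ 2 * n) (ha2' : a2 ≤ m0 * (B / (2 * (d + 1)) - R) - 16 * m0 ^ 2 * n)
    (m a1 : ℕ → ℝ) (hm : ∀ j < K, 0 ≤ m j ∧ 4 * m j ≤ 1)
    (ha1 : ∀ j < K, a1 j ≤ m j * (B / 8 * (3 / 4) ^ j / (d + 1) - 2 * 2 ^ (K - j - 1)) -
      16 * m j ^ 2 * ((2 ^ (K - j - 1) + 1) * (B + 1))) :
    Pl 0 {ω | ∃ t, B < (Lt ω t n : ℝ)} ≤ ENNReal.ofReal ((2 + 3 * M) * Real.exp (-a2) +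
      ∑ j ∈ Finset.range K, 3 * 2 ^ j * M * (2 * Real.exp (-(a1 j)))) := by
  set E3 : Set (ℕ → Cyl d N) := {ω | ∃ τ, Stp B R n ω τ ∧ R < |((ω τ).2 : ℝ)|} with hE3
  set E2 : ℤ → Set (ℕ → Cyl d N) := fun x => {ω | ∃ τ, Stp B R n ω τ ∧ |((ω τ).2 : ℝ)| ≤ R ∧ B / 2 ≤ Lt ω x τ} with hE2
  set E1 : ℕ → ℤ → Set (ℕ → Cyl d N) := fun j a => {ω | ∃ τ, Stp B R n ω τ ∧ (∀ t, (Lt ω t τ : ℝ) ≤ B + 1) ∧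
    B / 8 * (3 / 4) ^ j ≤ |(Lt ω (2 ^ (K - j) * a) τ : ℝ) - Lt ω (2 ^ (K - j) * a + 2 ^ (K - j - 1)) τ|} with hE1
  set I : ℕ → Finset ℤ := fun j => Finset.Icc (-((2 ^ j * M : ℕ) : ℤ)) ((2 ^ j * M : ℕ) : ℤ) with hI
  have hsub : {ω : ℕ → Cyl d N | ∃ t, B < (Lt ω t n : ℝ)} ⊆
      (E3 ∪ ⋃ a ∈ I 0, E2 (2 ^ K * a)) ∪ ⋃ j ∈ Finset.range K, ⋃ a ∈ I j, E1 j a := by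
    intro ω hω
    obtain ⟨τ, hst, hB1, hc⟩ := exists_stp B R hB.le n ω hω
    rcases hc with hc | ⟨hR, t, ht, htR⟩
    · exact Or.inl (Or.inl ⟨τ, hst, hc⟩)
    by_contra hcon
    simp only [Set.mem_union, Set.mem_iUnion, not_or, not_exists] at hcon
    obtain ⟨⟨_, c2⟩, c1⟩ := hcon
    have := chain_det (fun x => (Lt ω x τ : ℝ)) K B t hB (by
      by_contra hh
      rw [not_lt] at hh
      refine c2 (t / 2 ^ K) ?_ ⟨τ, hst, hR, hh⟩
      exact grid_range t R htR K M 0 (Nat.zero_le _) hM) (by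
      intro j hj
      by_contra hh
      rw [not_lt] at hh
      exact c1 j (Finset.mem_range.2 hj) (t / 2 ^ (K - j)) (grid_range t R htR K M j hj.le hM) ⟨τ, hst, hB1, hh⟩)
    exact absurd this (not_lt.2 ht.le)
  have b3 : Pl 0 E3 ≤ ENNReal.ofReal (2 * Real.exp (-a2)) := by
    refine (T3 h B R m0 hm0 hm04 n).trans (ENNReal.ofReal_le_ofReal ?_)
    have := Real.exp_le_exp.2 (neg_le_neg ha2)
    linarith
  have b2 : Pl 0 (⋃ a ∈ I 0, E2 (2 ^ K * a)) ≤ ENNReal.ofReal (3 * M * Real.exp (-a2)) := by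
    refine (measure_biUnion_finset_le _ _).trans ((Finset.sum_le_sum (g := fun _ => ENNReal.ofReal (Real.exp (-a2)))
      fun a _ => (T2 h B R m0 hm0 hm04 n _).trans (ENNReal.ofReal_le_ofReal (Real.exp_le_exp.2 (neg_le_neg ha2')))).trans ?_)
    rw [Finset.sum_const, nsmul_eq_mul, ← ENNReal.ofReal_natCast, ← ENNReal.ofReal_mul (by positivity)]
    apply ENNReal.ofReal_le_ofReal
    apply mul_le_mul_of_nonneg_right _ (Real.exp_pos _).le
    have : ((I 0).card : ℝ) ≤ 3 * 2 ^ 0 * M := card_grid M 0 hM1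
    rwa [pow_zero, mul_one] at this
  have b1 : ∀ j ∈ Finset.range K, Pl 0 (⋃ a ∈ I j, E1 j a) ≤
      ENNReal.ofReal (3 * 2 ^ j * M * (2 * Real.exp (-(a1 j)))) := by
    intro j hj
    have hj' := Finset.mem_range.1 hj
    refine (measure_biUnion_finset_le _ _).trans ((Finset.sum_le_sum (g := fun _ => ENNReal.ofReal (2 * Real.exp (-(a1 j))))
      fun a _ => (T1 h B R (m j) _ (hm j hj').1 (hm j hj').2 n _ _ (by
        have : (0 : ℤ) < 2 ^ (K - j - 1) := by positivity
        linarith)).trans (ENNReal.ofReal_le_ofReal ?_)).trans ?_)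
    · have e1 : (((2 : ℤ) ^ (K - j) * a + 2 ^ (K - j - 1) - 2 ^ (K - j) * a : ℤ) : ℝ) = 2 ^ (K - j - 1) := by
        push_cast; ring
      rw [e1]
      have := Real.exp_le_exp.2 (neg_le_neg (ha1 j hj'))
      linarith
    · rw [Finset.sum_const, nsmul_eq_mul, ← ENNReal.ofReal_natCast, ← ENNReal.ofReal_mul (by positivity)]
      apply ENNReal.ofReal_le_ofReal
      apply mul_le_mul_of_nonneg_right _ (by positivity)
      exact card_grid M j hM1
  refine (measure_mono hsub).trans ((measure_union_le _ _).trans ?_)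
  rw [ENNReal.ofReal_add (by positivity) (Finset.sum_nonneg fun j _ => by positivity)]
  apply add_le_add
  · rw [add_mul, ENNReal.ofReal_add (by positivity) (by positivity)]
    exact (measure_union_le _ _).trans (add_le_add b3 b2)
  · rw [ENNReal.ofReal_sum_of_nonneg fun j _ => by positivity]
    exact (measure_biUnion_finset_le _ _).trans (Finset.sum_le_sum b1)

lemma pair_exp (B ℓ p α : ℝ) (hB : 1 ≤ B) (hℓ : 1 ≤ ℓ) (hp : 0 < p) (hα : 0 < α)
    (h : 2 * ℓ ≤ p * α) : p ^ 2 * α ^ 2 / (256 * ℓ * B) ≤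
      p * α / (128 * ℓ * B) * (2 * p * α - 2 * ℓ) - 16 * (p * α / (128 * ℓ * B)) ^ 2 * ((ℓ + 1) * (B + 1)) := by
  set m := p * α / (128 * ℓ * B) with hm
  have hm0 : 0 < m := by positivity
  have e1 : m * (128 * ℓ * B) = p * α := by rw [hm]; field_simp
  have e2 : p ^ 2 * α ^ 2 / (256 * ℓ * B) = m * (p * α) / 2 := by rw [hm]; field_simp; norm_num
  have h1 : (ℓ + 1) * (B + 1) ≤ 4 * (ℓ * B) := by nlinarith
  have h2 : 16 * m ^ 2 * ((ℓ + 1) * (B + 1)) ≤ m * (p * α) / 2 := by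
    rw [← e1]
    have := mul_le_mul_of_nonneg_left h1 (show 0 ≤ 16 * m ^ 2 by positivity)
    nlinarith
  have h3 : m * (p * α) ≤ m * (2 * p * α - 2 * ℓ) := mul_le_mul_of_nonneg_left (by linarith) hm0.le
  rw [e2]
  linarith

end

section

lemma exists_pow2 (y : ℝ) (hy : 1 ≤ y) : ∃ K : ℕ, (2 : ℝ) ^ K ≤ y ∧ y < 2 ^ (K + 1) :=
  exists_nat_pow_near hy (by norm_num)

lemma pow_split (K j : ℕ) (hj : j < K) : (2 : ℝ) ^ K = 2 * 2 ^ j * 2 ^ (K - j - 1) := by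
  rw [mul_comm (2 : ℝ) (2 ^ j), ← pow_succ, ← pow_add]; congr 1; omega

lemma sum_geo (K : ℕ) (M X r : ℝ) (hM : 0 ≤ M) (hX : 0 ≤ X) (hr0 : 0 ≤ r) (hr : 2 * r ≤ 1 / 2) :
    ∑ j ∈ Finset.range K, 3 * 2 ^ j * M * (2 * (X * r ^ j)) ≤ 12 * M * X := by
  have h1 : ∀ j ∈ Finset.range K, 3 * 2 ^ j * M * (2 * (X * r ^ j)) ≤ 6 * M * X * (1 / 2) ^ j := by
    intro j _
    have : (2 * r) ^ j ≤ (1 / 2) ^ j := pow_le_pow_left₀ (by positivity) hr j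
    rw [mul_pow] at this
    have h2 := mul_le_mul_of_nonneg_left this (show 0 ≤ 6 * M * X by positivity)
    calc _ = 6 * M * X * (2 ^ j * r ^ j) := by ring
      _ ≤ _ := h2
  refine (Finset.sum_le_sum h1).trans ?_
  rw [← Finset.mul_sum]
  have h3 : ∑ j ∈ Finset.range K, ((1 : ℝ) / 2) ^ j ≤ 2 := by
    have : ∀ K : ℕ, ∑ j ∈ Finset.range K, ((1 : ℝ) / 2) ^ j = 2 - 2 * (1 / 2) ^ K := by
      intro K
      induction K with
      | zero => simp
      | succ k ih => rw [Finset.sum_range_succ, ih, pow_succ]; ring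
    rw [this]
    have : (0 : ℝ) < (1 / 2) ^ K := by positivity
    linarith
  have := mul_le_mul_of_nonneg_left h3 (show 0 ≤ 6 * M * X by positivity)
  linarith

/-- the fluctuation exponent at level `j` -/
lemma level_exp (B p δ : ℝ) (K j : ℕ) (hj : j < K) (hB : 1 ≤ B) (hp : 0 < p) (hp2 : p ≤ 1 / 2) (hδ : 0 < δ)
    (hδp : δ ≤ p / 8) (hK : 2 ^ K ≤ δ * B) :
    ∃ m : ℝ, (0 ≤ m ∧ 4 * m ≤ 1) ∧ p ^ 2 / 8192 / δ * (1 + j / 8) ≤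
      m * (2 * p * (B / 8 * (3 / 4) ^ j) - 2 * 2 ^ (K - j - 1)) - 16 * m ^ 2 * ((2 ^ (K - j - 1) + 1) * (B + 1)) := by
  set ℓ : ℝ := 2 ^ (K - j - 1) with hℓ
  set α : ℝ := B / 8 * (3 / 4) ^ j with hα
  have hℓ1 : 1 ≤ ℓ := one_le_pow₀ (by norm_num)
  have hα0 : 0 < α := by positivity
  have hs := pow_split K j hj
  rw [← hℓ] at hs
  have h2j : (0 : ℝ) < 2 ^ j := by positivity
  have hℓδ : 2 * 2 ^ j * ℓ ≤ δ * B := by rw [← hs]; exact hK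
  have h34 : (3 / 4 : ℝ) ^ j ≤ 1 := pow_le_one₀ (by norm_num) (by norm_num)
  have h32 : (1 : ℝ) ≤ (3 / 4) ^ j * 2 ^ j := by
    rw [← mul_pow]; exact one_le_pow₀ (by norm_num)
  have hc : 2 * ℓ ≤ p * α := by
    have h1 : 2 * ℓ * 2 ^ j ≤ (p * α) * 2 ^ j := by
      calc 2 * ℓ * 2 ^ j = 2 * 2 ^ j * ℓ := by ring
        _ ≤ δ * B := hℓδ
        _ ≤ p / 8 * B := mul_le_mul_of_nonneg_right hδp (by linarith)
        _ ≤ p / 8 * B * ((3 / 4) ^ j * 2 ^ j) := le_mul_of_one_le_right (by positivity) h32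
        _ = _ := by rw [hα]; ring
    exact le_of_mul_le_mul_right h1 h2j
  refine ⟨p * α / (128 * ℓ * B), ⟨by positivity, ?_⟩, le_trans ?_ (pair_exp B ℓ p α hB hℓ1 hp hα0 hc)⟩
  · rw [← mul_div_assoc, div_le_one (by positivity)]
    have : α ≤ B := by rw [hα]; nlinarith
    nlinarith
  · have h98 : 1 + (j : ℝ) / 8 ≤ (9 / 8) ^ j := by
      have := one_add_mul_le_pow (a := (1 / 8 : ℝ)) (by norm_num) j
      calc 1 + (j : ℝ) / 8 = 1 + j * (1 / 8) := by ring
        _ ≤ _ := this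
        _ = _ := by norm_num
    refine (mul_le_mul_of_nonneg_left h98 (by positivity)).trans ?_
    rw [div_div, div_mul_eq_mul_div, div_le_div_iff₀ (by positivity) (by positivity)]
    have e : (9 / 8 : ℝ) ^ j = ((3 / 4) ^ j) ^ 2 * 2 ^ j := by
      rw [← pow_mul, mul_comm j 2, pow_mul, ← mul_pow]; norm_num
    rw [e, hα]
    have h5 := mul_le_mul_of_nonneg_left hℓδ (show 0 ≤ p ^ 2 * ((3 / 4) ^ j) ^ 2 * 128 * B by positivity)
    calc _ = p ^ 2 * ((3 / 4) ^ j) ^ 2 * 128 * B * (2 * 2 ^ j * ℓ) := by ring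
      _ ≤ _ := h5
      _ = _ := by ring

lemma delta_choice (c ε p : ℝ) (hc : 0 < c) (hε : 0 < ε) (hp : 0 < p) :
    ∃ δ : ℝ, 0 < δ ∧ δ ≤ p / 8 ∧ δ ≤ 1 ∧ 2 * Real.exp (-(c / δ / 8)) ≤ 1 / 2 ∧
      12 * (3 / δ) * Real.exp (-(c / δ)) ≤ ε := by
  set δ := min (min (p / 8) 1) (min (c / 32) (ε * c ^ 2 / 72)) with hδ
  have hδ0 : 0 < δ := by positivity
  have d1 : δ ≤ p / 8 := (min_le_left _ _).trans (min_le_left _ _)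
  have d2 : δ ≤ 1 := (min_le_left _ _).trans (min_le_right _ _)
  have d3 : δ ≤ c / 32 := (min_le_right _ _).trans (min_le_left _ _)
  have d4 : δ ≤ ε * c ^ 2 / 72 := (min_le_right _ _).trans (min_le_right _ _)
  refine ⟨δ, hδ0, d1, d2, ?_, ?_⟩
  · have h1 : 4 ≤ c / δ / 8 := by
      rw [div_div, le_div_iff₀ (by positivity)]; linarith
    have h2 := Real.add_one_le_exp (c / δ / 8)
    rw [Real.exp_neg, ← div_eq_mul_inv, div_le_iff₀ (Real.exp_pos _)]
    linarith
  · have h1 : (c / δ) ^ 2 / 2 ≤ Real.exp (c / δ) := by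
      have := Real.quadratic_le_exp_of_nonneg (show 0 ≤ c / δ by positivity)
      have h0 : 0 < c / δ := by positivity
      linarith
    rw [Real.exp_neg, ← div_eq_mul_inv, div_le_iff₀ (Real.exp_pos _)]
    refine le_trans ?_ (mul_le_mul_of_nonneg_left h1 hε.le)
    rw [div_pow, ← mul_div_assoc, ← mul_div_assoc, ← mul_div_assoc, div_div, div_le_div_iff₀ (by positivity) (by positivity)]
    rw [le_div_iff₀ (by norm_num)] at d4
    nlinarith [mul_le_mul_of_nonneg_left d4 hδ0.le]

lemma local_time (d : ℕ) (hd : 1 ≤ d) (b ε : ℝ) (hb : 0 < b) (hε : 0 < ε) :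
    ∃ γ0 : ℝ, 0 < γ0 ∧ ∀ γ, 0 < γ → γ ≤ γ0 → ∃ N1 : ℕ, ∀ N : ℕ, N1 ≤ N →
      ∀ Pl : Cyl d N → Measure (ℕ → Cyl d N), IsCylRW d N Pl → ∀ n : ℕ, (n : ℝ) ≤ 2 * γ * (N : ℝ) ^ (2 * d) →
      Pl 0 {ω | ∃ t, b * (N : ℝ) ^ d < (Lt ω t n : ℝ)} ≤ ENNReal.ofReal ε := by
  set p : ℝ := 1 / (2 * (d + 1)) with hp
  have hp0 : 0 < p := by positivity
  have hp2 : p ≤ 1 / 2 := by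
    rw [hp]; apply one_div_le_one_div_of_le (by norm_num)
    have : (0 : ℝ) ≤ d := Nat.cast_nonneg d
    linarith
  obtain ⟨δ, hδ0, hδp, hδ1, hr, hX⟩ := delta_choice (p ^ 2 / 8192) (ε / 2) p (by positivity) (by positivity) hp0
  set M : ℕ := ⌈1 / δ⌉₊ + 1 with hM
  have hM1 : 1 / δ + 1 ≤ M := by rw [hM]; push_cast; linarith [Nat.le_ceil (1 / δ)]
  have hM3 : (M : ℝ) ≤ 3 / δ := by
    have h1 := (Nat.ceil_lt_add_one (show 0 ≤ 1 / δ by positivity)).le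
    have h2 : 1 ≤ 1 / δ := by rw [le_div_iff₀ hδ0]; linarith
    rw [hM]; push_cast
    have : 3 / δ = 1 / δ + 1 / δ + 1 / δ := by ring
    linarith
  set T : ℝ := 32 + |Real.log ((2 + 3 * M) * 2 / ε)| with hT
  have hT0 : 0 < T := by positivity
  have hTe : (2 + 3 * M) * Real.exp (-(T - 32)) ≤ ε / 2 := by
    have h1 : Real.log ((2 + 3 * M) * 2 / ε) ≤ T - 32 := by rw [hT]; linarith [le_abs_self (Real.log ((2 + 3 * M) * 2 / ε))]
    have h2 : (2 + 3 * M) * 2 / ε ≤ Real.exp (T - 32) := (Real.log_le_iff_le_exp (by positivity)).1 h1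
    rw [Real.exp_neg, ← div_eq_mul_inv, div_le_iff₀ (Real.exp_pos _)]
    rw [div_le_iff₀ hε] at h2
    linarith
  refine ⟨(p * b / (2 * T)) ^ 2, by positivity, ?_⟩
  intro γ hγ hγ0
  set θ : ℝ := 1 / Real.sqrt γ with hθ
  have hsq : 0 < Real.sqrt γ := Real.sqrt_pos.2 hγ
  have hθ0 : 0 < θ := by positivity
  have hθγ : θ ^ 2 * γ = 1 := by
    rw [hθ, div_pow, Real.sq_sqrt hγ.le]; field_simp
  have hθT : T ≤ θ * (p * b / 2) := by
    have h1 : Real.sqrt γ ≤ p * b / (2 * T) := by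
      rw [← Real.sqrt_sq (show 0 ≤ p * b / (2 * T) by positivity)]; exact Real.sqrt_le_sqrt hγ0
    rw [le_div_iff₀ (by positivity)] at h1
    rw [hθ, one_div_mul_eq_div, le_div_iff₀ hsq]
    linarith
  obtain ⟨N1, hN1⟩ := exists_nat_ge (max 1 (max (4 * θ) (max (1 / b) (1 / (δ * b)))))
  refine ⟨N1, ?_⟩
  intro N hN Pl h n hn
  have hNr : (N1 : ℝ) ≤ N := by exact_mod_cast hN
  have hNm := hN1.trans hNr
  have n1 : (1 : ℝ) ≤ N := (le_max_left _ _).trans hNm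
  have hpow : (N : ℝ) ≤ (N : ℝ) ^ d := le_self_pow₀ n1 (by omega)
  set W : ℝ := (N : ℝ) ^ d with hW
  have hW2 : (N : ℝ) ^ (2 * d) = W ^ 2 := by rw [hW, ← pow_mul, mul_comm]
  rw [hW2] at hn
  have n2 : 4 * θ ≤ W := ((le_max_left _ _).trans ((le_max_right _ _).trans hNm)).trans hpow
  have n3 : 1 / b ≤ W := ((le_max_left _ _).trans ((le_max_right _ _).trans ((le_max_right _ _).trans hNm))).trans hpow
  have n4 : 1 / (δ * b) ≤ W := ((le_max_right _ _).trans ((le_max_right _ _).trans ((le_max_right _ _).trans hNm))).trans hpow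
  have hW0 : 0 < W := by linarith
  set B : ℝ := b * W with hB
  have hB1 : 1 ≤ B := by
    rw [div_le_iff₀ hb] at n3; linarith
  have hδB : 1 ≤ δ * B := by
    rw [div_le_iff₀ (by positivity)] at n4
    rw [hB]; linarith
  obtain ⟨K, hK1, hK2⟩ := exists_pow2 (δ * B) hδB
  set R : ℝ := p * B / 2 with hR
  have hRM : R / 2 ^ K + 1 ≤ M := by
    refine le_trans ?_ hM1
    have : R / 2 ^ K ≤ 1 / δ := by
      rw [div_le_div_iff₀ (by positivity) hδ0, hR]
      rw [pow_succ] at hK2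
      nlinarith
    linarith
  set m0 := θ / W with hm0
  have hm00 : 0 ≤ m0 := by positivity
  have hm04 : 4 * m0 ≤ 1 := by
    rw [hm0, ← mul_div_assoc, div_le_one hW0]; exact n2
  have hm0R : T ≤ m0 * R := by
    have : m0 * R = θ * (p * b / 2) := by rw [hm0, hR, hB]; field_simp
    rw [this]; exact hθT
  have hm0n : 16 * m0 ^ 2 * n ≤ 32 := by
    have h1 := mul_le_mul_of_nonneg_left hn (show 0 ≤ 16 * m0 ^ 2 by positivity)
    refine h1.trans (le_of_eq ?_)
    have : m0 * W = θ := by rw [hm0]; field_simp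
    calc 16 * m0 ^ 2 * (2 * γ * W ^ 2) = 32 * ((m0 * W) ^ 2 * γ) := by ring
      _ = 32 := by rw [this, hθγ]; norm_num
  have hlev : ∀ j, ∃ m : ℝ, j < K → ((0 ≤ m ∧ 4 * m ≤ 1) ∧ p ^ 2 / 8192 / δ * (1 + j / 8) ≤
      m * (2 * p * (B / 8 * (3 / 4) ^ j) - 2 * 2 ^ (K - j - 1)) - 16 * m ^ 2 * ((2 ^ (K - j - 1) + 1) * (B + 1))) := by
    intro j
    by_cases hj : j < K
    · obtain ⟨m, hm⟩ := level_exp B p δ K j hj hB1 hp0 hp2 hδ0 hδp hK1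
      exact ⟨m, fun _ => hm⟩
    · exact ⟨0, fun hh => absurd hh hj⟩
  choose m hm using hlev
  have U := local_union h B R (by linarith) n K M (by omega) hRM m0 hm00 hm04 (T - 32) (by linarith) (by
      have : B / (2 * (d + 1)) - R = R := by rw [hR, hp]; ring
      rw [this]; linarith) m (fun j => p ^ 2 / 8192 / δ * (1 + j / 8)) (fun j hj => (hm j hj).1) (by
      intro j hj
      refine (hm j hj).2.trans (le_of_eq ?_)
      have : B / 8 * (3 / 4) ^ j / ((d : ℝ) + 1) = 2 * p * (B / 8 * (3 / 4) ^ j) := by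
        rw [hp]; field_simp
      rw [this])
  refine U.trans (ENNReal.ofReal_le_ofReal ?_)
  have hs : ∑ j ∈ Finset.range K, 3 * 2 ^ j * (M : ℝ) * (2 * Real.exp (-(p ^ 2 / 8192 / δ * (1 + (j : ℝ) / 8)))) ≤
      12 * M * Real.exp (-(p ^ 2 / 8192 / δ)) := by
    refine le_trans (le_of_eq ?_) (sum_geo K M (Real.exp (-(p ^ 2 / 8192 / δ))) (Real.exp (-(p ^ 2 / 8192 / δ / 8)))
      (by positivity) (Real.exp_pos _).le (Real.exp_pos _).le hr)
    refine Finset.sum_congr rfl fun j _ => ?_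
    rw [← Real.exp_nat_mul, ← Real.exp_add]
    congr 3
    ring
  have h12 : 12 * (M : ℝ) * Real.exp (-(p ^ 2 / 8192 / δ)) ≤ 12 * (3 / δ) * Real.exp (-(p ^ 2 / 8192 / δ)) :=
    mul_le_mul_of_nonneg_right (by linarith) (Real.exp_pos _).le
  linarith

end

section

lemma emb_single0 (e N : ℕ) (p : Tor N) (b : ℤ) :
    emb e N (p + ((b : ZMod N), 0)) = emb e N p + projE (e + 1) N (Pi.single 0 b) := by
  refine Prod.ext ?_ ?_
  · funext i
    refine Fin.cases ?_ (fun k => ?_) i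
    · simp [emb, projE]
    · have : (Pi.single 0 b : Lat (e + 1)) (Fin.castSucc (Fin.succ k)) = 0 :=
        Pi.single_eq_of_ne (by rw [Fin.castSucc_succ]; exact Fin.succ_ne_zero _) _
      simp [emb, projE, this]
  · have : (Pi.single 0 b : Lat (e + 1)) (Fin.last (e + 1)) = 0 :=
      Pi.single_eq_of_ne (by exact (Fin.last_pos).ne') _
    simp [emb, projE, this]

lemma emb_singleL (e N : ℕ) (p : Tor N) (b : ℤ) :
    emb e N (p + (0, b)) = emb e N p + projE (e + 1) N (Pi.single (Fin.last (e + 1)) b) := by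
  refine Prod.ext ?_ ?_
  · funext i
    have : (Pi.single (Fin.last (e + 1)) b : Lat (e + 1)) (Fin.castSucc i) = 0 :=
      Pi.single_eq_of_ne (by exact (Fin.castSucc_lt_last i).ne) _
    simp [emb, projE, this]
  · simp [emb, projE]

lemma nn_adj (e N : ℕ) (hN : 2 ≤ N) (p q : Tor N) (h : nn p q) : adj (e + 1) N (emb e N p) (emb e N q) := by
  have hf : Fact (1 < N) := ⟨by omega⟩
  constructor
  · intro hh
    have hpq := emb_inj e N hh
    rcases h with h | h | h | h <;> rw [hpq] at h
    · have := congrArg Prod.fst h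
      simp at this
    · have := congrArg Prod.fst h
      simp at this
    · have := congrArg Prod.snd h
      simp at this
    · have := congrArg Prod.snd h
      simp at this
  · rcases h with h | h | h | h
    · refine ⟨Pi.single 0 1, single_mem _ _ (Or.inl rfl), ?_⟩
      rw [← emb_single0, h]; simp
    · refine ⟨Pi.single 0 (-1), single_mem _ _ (Or.inr rfl), ?_⟩
      rw [← emb_single0, h]; simp
    · exact ⟨Pi.single (Fin.last (e + 1)) 1, single_mem _ _ (Or.inl rfl), by rw [← emb_singleL, h]⟩
    · exact ⟨Pi.single (Fin.last (e + 1)) (-1), single_mem _ _ (Or.inr rfl), by rw [← emb_singleL, h]⟩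

lemma disc_path (e N : ℕ) (hN : 2 ≤ N) (A : Set (Cyl (e + 1) N)) (hA : Disconnects (e + 1) N A) :
    ∃ v : ℕ → Tor N, (∀ i ≤ N / 2, emb e N (v i) ∈ A) ∧ Set.InjOn v {i | i ≤ N / 2} ∧
      ∀ i < N / 2, st (v i) (v (i + 1)) := by
  have : NeZero N := ⟨by omega⟩
  obtain ⟨hfin, M0, hM0⟩ := hA
  obtain ⟨H, hH⟩ : ∃ H : ℕ, ∀ x ∈ A, x.2 < H := by
    obtain ⟨u, hu⟩ := (hfin.image Prod.snd).bddAbove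
    refine ⟨(u + 1).toNat, fun x hx => ?_⟩
    have := hu (Set.mem_image_of_mem Prod.snd hx)
    omega
  set T : ℕ := max M0 H with hT
  set S : Set (Tor N) := {p | emb e N p ∈ A} with hS
  set r : Tor N → Tor N → Prop := fun a b => a ∉ S ∧ b ∉ S ∧ nn a b with hr
  set W : Set (Tor N) := {p | ∃ q : Tor N, (T : ℤ) ≤ q.2 ∧ q ∉ S ∧ Relation.ReflTransGen r q p} with hW
  have hhigh : ∀ q : Tor N, (T : ℤ) ≤ q.2 → q ∉ S := by
    intro q hq hqS
    have h1 : q.2 < (H : ℤ) := hH _ hqS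
    have h2 : (H : ℤ) ≤ T := by exact_mod_cast le_max_right M0 H
    omega
  have htop : ∀ x t, (T : ℤ) ≤ t → ((x, t) : Tor N) ∈ W := fun x t ht =>
    ⟨(x, t), ht, hhigh _ ht, Relation.ReflTransGen.refl⟩
  have hbot : ∀ x t, t ≤ -(T : ℤ) → ((x, t) : Tor N) ∉ W := by
    rintro x t ht ⟨q, hq, hqS, hp⟩
    refine hM0 T (le_max_left _ _) (emb e N q) (emb e N (x, t)) hq ht ?_
    exact Relation.ReflTransGen.lift (p := fun a b => a ∈ Aᶜ ∧ b ∈ Aᶜ ∧ adj (e + 1) N a b) (emb e N)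
      (fun a b hab => ⟨hab.1, hab.2.1, nn_adj e N hN a b hab.2.2⟩) _ _ hp
  have hWS : ∀ p ∈ W, p ∉ S := by
    rintro p ⟨q, hq, hqS, hp⟩
    cases hp with
    | refl => exact hqS
    | tail _ h => exact h.2.1
  have hcl : ∀ p ∈ W, ∀ q, nn p q → q ∉ W → q ∈ S := by
    intro p hp q hpq hqW
    by_contra hqS
    apply hqW
    have hpS := hWS p hp
    obtain ⟨q0, h1, h2, h3⟩ := hp
    exact ⟨q0, h1, h2, h3.tail ⟨hpS, hqS, hpq⟩⟩
  have hconn : ∀ p ∈ W, ∃ q : Tor N, (T : ℤ) ≤ q.2 ∧ Relation.ReflTransGen (fun a b => a ∈ W ∧ b ∈ W ∧ nn a b) q p := by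
    rintro p ⟨q, hq, hqS, hp⟩
    refine ⟨q, hq, ?_⟩
    induction hp with
    | refl => exact Relation.ReflTransGen.refl
    | tail h1 h2 ih => exact ih.tail ⟨⟨q, hq, hqS, h1⟩, ⟨q, hq, hqS, h1.tail h2⟩, h2.2.2⟩
  obtain ⟨p0, hp0, h0, hreach⟩ := duality S W T htop hbot hWS hcl hconn
  obtain ⟨v, hv, h1, h2⟩ := star_path S p0 hp0 h0 hreach
  exact ⟨v, hv, h1, h2⟩

lemma not_ge_disc {d N : ℕ} (ω : ℕ → Cyl d N) (r : ℝ) (h : ¬ geReal (discT d N ω) r) :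
    ∃ n : ℕ, Disconnects d N (ran ω n) ∧ (n : ℝ) < r := by
  unfold geReal at h
  push Not at h
  obtain ⟨n, hn, hr⟩ := h
  have hne : {t : ℕ∞ | ∃ n : ℕ, Disconnects d N (ran ω n) ∧ t = n}.Nonempty := by
    by_contra hc
    rw [Set.not_nonempty_iff_eq_empty] at hc
    unfold discT at hn
    rw [hc, sInf_empty] at hn
    exact (ENat.natCast_ne_top n) hn.symm
  obtain ⟨k, hk, hk2⟩ := csInf_mem hne
  have : (n : ℕ∞) = k := by rw [← hn]; exact hk2
  have : n = k := by exact_mod_cast this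
  subst this
  exact ⟨n, hk, hr⟩

lemma bad_cover (e N n : ℕ) (hN : 2 ≤ N) (b r : ℝ) (hb : 0 < b) (hn : r ≤ n) :
    {ω : ℕ → Cyl (e + 1) N | ¬ geReal (discT (e + 1) N ω) r} ⊆
      {ω | ∃ t, b * (N : ℝ) ^ (e + 1) < (Lt ω t n : ℝ)} ∪ bad2 e N n (5 * b * (N : ℝ) ^ (e + 2)) := by
  intro ω hω
  by_cases hL : ∃ t, b * (N : ℝ) ^ (e + 1) < (Lt ω t n : ℝ)
  · exact Or.inl hL
  right
  push Not at hL
  obtain ⟨k, hk, hkr⟩ := not_ge_disc ω r hω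
  obtain ⟨v, hv, h1, h2⟩ := disc_path e N hN _ hk
  have hkn : k < n := by
    have : (k : ℝ) < n := by linarith
    exact_mod_cast this
  refine ⟨?_, v, ?_, h1, h2⟩
  · intro t0
    have hc := card_slab ω n _ hL (t0 - 2 * N) (t0 + 2 * N) (by omega)
    have hle : (slabN ω n t0 : ℝ) ≤ (((Finset.range n).filter fun i => (ω i).2 ∈ Set.Icc (t0 - 2 * (N : ℤ)) (t0 + 2 * N)).card : ℝ) := by
      have : slabN ω n t0 ≤ ((Finset.range n).filter fun i => (ω i).2 ∈ Set.Icc (t0 - 2 * (N : ℤ)) (t0 + 2 * N)).card := by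
        unfold slabN
        apply Finset.card_le_card
        intro i hi
        simp only [Finset.mem_filter] at hi ⊢
        refine ⟨hi.1, ?_⟩
        have h3 : |(ω i).2 - t0| ≤ 2 * (N : ℤ) := hi.2
        rw [abs_le] at h3
        rw [Set.mem_Icc]
        omega
      exact_mod_cast this
    refine hle.trans (le_trans (by convert hc) ?_)
    have e1 : ((t0 + 2 * (N : ℤ) - (t0 - 2 * N) : ℤ) : ℝ) = 4 * N := by push_cast; ring
    rw [e1]
    have hN1 : (1 : ℝ) ≤ N := by exact_mod_cast (by omega : 1 ≤ N)
    calc (4 * (N : ℝ) + 1) * (b * (N : ℝ) ^ (e + 1)) ≤ (5 * N) * (b * (N : ℝ) ^ (e + 1)) :=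
          mul_le_mul_of_nonneg_right (by linarith) (by positivity)
      _ = _ := by ring
  · intro i hi
    obtain ⟨j, hj, hje⟩ := hv i hi
    exact ⟨j, by omega, hje⟩

lemma tend_aux (ρ K γ : ℝ) (e : ℕ) (hρ0 : 0 ≤ ρ) (hρ : ρ < 1) (hK : 0 ≤ K) (hγ : 0 < γ) (ε : ℝ) (hε : 0 < ε) :
    ∃ N2 : ℕ, ∀ N : ℕ, N2 ≤ N → (N : ℝ) * (4 * γ * (N : ℝ) ^ (2 * (e + 1)) + 1) * 8 * K * ρ ^ (N / 2) ≤ ε := by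
  have t1 : Tendsto (fun m : ℕ => (m : ℝ) ^ (2 * (e + 1) + 1) * ρ ^ m) atTop (nhds 0) :=
    tendsto_pow_const_mul_const_pow_of_abs_lt_one _ (by rwa [abs_of_nonneg hρ0])
  set C : ℝ := (4 * γ + 1) * 3 ^ (2 * (e + 1) + 1) * 8 * K with hC
  have t2 := t1.const_mul C
  rw [mul_zero] at t2
  have t3 := (t2.eventually (ge_mem_nhds hε))
  obtain ⟨m0, hm0⟩ := eventually_atTop.1 t3
  refine ⟨2 * (m0 + 1), fun N hN => ?_⟩
  have hm : m0 + 1 ≤ N / 2 := by omega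
  refine le_trans ?_ (hm0 (N / 2) (by omega))
  set m := N / 2 with hmd
  have hNm : (N : ℝ) ≤ 3 * m := by exact_mod_cast (by omega : N ≤ 3 * m)
  have hN1 : (1 : ℝ) ≤ N := by exact_mod_cast (by omega : 1 ≤ N)
  have hp1 : (1 : ℝ) ≤ (N : ℝ) ^ (2 * (e + 1)) := one_le_pow₀ hN1
  have h1 : (N : ℝ) * (4 * γ * (N : ℝ) ^ (2 * (e + 1)) + 1) ≤ (4 * γ + 1) * (N : ℝ) ^ (2 * (e + 1) + 1) := by
    rw [pow_succ]
    nlinarith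
  have h2 : (N : ℝ) ^ (2 * (e + 1) + 1) ≤ (3 * m) ^ (2 * (e + 1) + 1) := pow_le_pow_left₀ (by positivity) hNm _
  have h3 : (N : ℝ) * (4 * γ * (N : ℝ) ^ (2 * (e + 1)) + 1) ≤ (4 * γ + 1) * (3 * m) ^ (2 * (e + 1) + 1) :=
    h1.trans (mul_le_mul_of_nonneg_left h2 (by positivity))
  calc _ = (N : ℝ) * (4 * γ * (N : ℝ) ^ (2 * (e + 1)) + 1) * (8 * K * ρ ^ m) := by ring
    _ ≤ (4 * γ + 1) * (3 * m) ^ (2 * (e + 1) + 1) * (8 * K * ρ ^ m) :=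
        mul_le_mul_of_nonneg_right h3 (by positivity)
    _ = _ := by rw [hC, mul_pow]; ring

lemma main_bound (e : ℕ) (he : 1 ≤ e) (Q : ZLat e → Measure (ℕ → ZLat e)) (hQ : IsLatRW e Q)
    (hcond : 7 * ((2 + e * retProb e Q) / (e + 2)) < 1) (ε : ℝ) (hε : 0 < ε) :
    ∃ γ0 : ℝ, 0 < γ0 ∧ ∀ γ, 0 < γ → γ ≤ γ0 → ∃ N1 : ℕ, ∀ N : ℕ, N1 ≤ N →
      ∀ Pl : Cyl (e + 1) N → Measure (ℕ → Cyl (e + 1) N), IsCylRW (e + 1) N Pl →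
      Pl 0 {ω | ¬ geReal (discT (e + 1) N ω) (γ * (N : ℝ) ^ (2 * (e + 1)))} ≤ ENNReal.ofReal ε := by
  obtain ⟨η, hη0, hηn, hη1, hηs, hηq⟩ := exists_eta (by omega) hQ
  set q := retProb e Q with hq
  have hq0 : 0 ≤ q := ENNReal.toReal_nonneg
  set r := (2 + e * q) / (e + 2) with hr
  have hr0 : 0 < r := by positivity
  have h7r : 7 < 1 / r := by rw [lt_div_iff₀ hr0]; linarith
  set Λ := (7 + 1 / r) / 2 with hΛ
  have hΛ7 : 7 < Λ := by rw [hΛ]; linarith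
  have hΛr : Λ * r < 1 := by
    have : Λ < 1 / r := by rw [hΛ]; linarith
    rwa [lt_div_iff₀ hr0] at this
  set lam := Real.log Λ with hlam
  have hel : Real.exp lam = Λ := Real.exp_log (by linarith)
  have hl7 : Real.log 7 < lam := Real.log_lt_log (by norm_num) hΛ7
  have h70 : 0 < Real.log 7 := Real.log_pos (by norm_num)
  obtain ⟨K, C3, N0, hK, hC3, hN0, H⟩ := bad2_le e he η q hη0 hηn hη1 hηs hηq lam (by linarith) (by rw [hel]; exact hΛr)
  set lam' := (lam + Real.log 7) / 2 with hlam'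
  have hl' : Real.log 7 < lam' := by rw [hlam']; linarith
  set b := (lam - lam') / (5 * (C3 + 1)) with hb
  have hb0 : 0 < b := by
    have : 0 < lam - lam' := by rw [hlam']; linarith
    positivity
  have hbl : 5 * C3 * b ≤ lam - lam' := by
    have : b * (5 * (C3 + 1)) = lam - lam' := by rw [hb]; field_simp
    nlinarith
  set ρ := 7 * Real.exp (-lam') with hρ
  have hρ0 : 0 ≤ ρ := by positivity
  have hρ1 : ρ < 1 := by
    rw [hρ, Real.exp_neg, ← div_eq_mul_inv, div_lt_one (Real.exp_pos _)]
    exact (Real.log_lt_iff_lt_exp (by norm_num)).1 hl'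
  obtain ⟨γ0, hγ0, HL⟩ := local_time (e + 1) (by omega) b (ε / 2) hb0 (by positivity)
  refine ⟨γ0, hγ0, fun γ hγ hγle => ?_⟩
  obtain ⟨N1, HL⟩ := HL γ hγ hγle
  obtain ⟨N2, H2⟩ := tend_aux ρ K γ e hρ0 hρ1 (by linarith) hγ (ε / 2) (by positivity)
  obtain ⟨N3, H3⟩ := exists_nat_ge (1 / γ)
  refine ⟨max (max N0 N1) (max N2 (N3 + 1)), fun N hN Pl hPl => ?_⟩
  have hNN0 : N0 ≤ N := ((le_max_left _ _).trans (le_max_left _ _)).trans hN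
  have hNN1 : N1 ≤ N := ((le_max_right _ _).trans (le_max_left _ _)).trans hN
  have hNN2 : N2 ≤ N := ((le_max_left _ _).trans (le_max_right _ _)).trans hN
  have hNN3 : N3 + 1 ≤ N := ((le_max_right _ _).trans (le_max_right _ _)).trans hN
  have hNr1 : (1 : ℝ) ≤ N := by exact_mod_cast (by omega : 1 ≤ N)
  set W : ℝ := (N : ℝ) ^ (2 * (e + 1)) with hW
  have hWN : (N : ℝ) ≤ W := le_self_pow₀ hNr1 (by omega)
  have hγW : 1 ≤ γ * W := by
    have h1 : (N3 : ℝ) ≤ N := by exact_mod_cast (by omega : N3 ≤ N)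
    have h2 : 1 / γ ≤ W := by linarith
    rw [div_le_iff₀ hγ] at h2
    linarith
  set n := ⌈γ * W⌉₊ with hn
  have hn1 : γ * W ≤ n := Nat.le_ceil _
  have hn2 : (n : ℝ) ≤ 2 * γ * W := by
    have := (Nat.ceil_lt_add_one (show 0 ≤ γ * W by linarith)).le
    rw [← hn] at this
    linarith
  refine (measure_mono (bad_cover e N n (by omega) b _ hb0 hn1)).trans ((measure_union_le _ _).trans ?_)
  have e2 : ENNReal.ofReal ε = ENNReal.ofReal (ε / 2) + ENNReal.ofReal (ε / 2) := by
    rw [← ENNReal.ofReal_add (by positivity) (by positivity)]; congr 1; ring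
  rw [e2]
  refine add_le_add (HL N hNN1 Pl hPl n hn2) ((H N hNN0 Pl hPl n _).trans (ENNReal.ofReal_le_ofReal ?_))
  refine le_trans ?_ (H2 N hNN2)
  set m := N / 2 with hm
  have hex : Real.exp (-(lam * ((m : ℕ) + 1)) + C3 * ((m : ℕ) + 1) / (N : ℝ) ^ (e + 2) * (5 * b * (N : ℝ) ^ (e + 2))) ≤
      Real.exp (-lam') ^ m := by
    rw [← Real.exp_nat_mul]
    apply Real.exp_le_exp.2
    have hNp : (0 : ℝ) < (N : ℝ) ^ (e + 2) := by positivity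
    have e3 : C3 * ((m : ℝ) + 1) / (N : ℝ) ^ (e + 2) * (5 * b * (N : ℝ) ^ (e + 2)) = (5 * C3 * b) * (m + 1) := by
      field_simp
    rw [e3]
    have hm0 : (0 : ℝ) ≤ m := Nat.cast_nonneg m
    have := mul_le_mul_of_nonneg_right hbl (show (0 : ℝ) ≤ m + 1 by positivity)
    nlinarith
  have h2n : (2 * (n : ℝ) + 1) ≤ 4 * γ * W + 1 := by linarith
  calc (N * (2 * (n : ℝ) + 1)) * (8 * 7 ^ m) * (K * Real.exp (-(lam * ((m : ℕ) + 1)) + C3 * ((m : ℕ) + 1) / (N : ℝ) ^ (e + 2) * (5 * b * (N : ℝ) ^ (e + 2))))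
      ≤ (N * (4 * γ * W + 1)) * (8 * 7 ^ m) * (K * Real.exp (-lam') ^ m) := by
        gcongr
    _ = _ := by rw [hρ, mul_pow]; ring

end

theorem statement_0 (d : ℕ)
    (Q : ZLat (d - 1) → Measure (ℕ → ZLat (d - 1))) (hQ : IsLatRW (d - 1) Q)
    (hcond : 7 * (2 / ((d : ℝ) + 1) + (1 - 2 / ((d : ℝ) + 1)) * retProb (d - 1) Q) < 1)
    (Pl : ∀ N : ℕ, Cyl d N → Measure (ℕ → Cyl d N))
    (hPl : ∀ N : ℕ, IsCylRW d N (Pl N)) :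
    Tendsto (fun γ : ℝ =>
        liminf (fun N : ℕ =>
          ((Pl N 0) {ω | geReal (discT d N ω) (γ * (N : ℝ) ^ (2 * d))}).toReal) atTop)
      (nhdsWithin 0 (Set.Ioi 0)) (nhds 1) := by
  have hq1 : retProb (d - 1) Q ≤ 1 := by
    have := hQ.1 0
    exact measureReal_le_one
  match d, Q, hQ, hcond, Pl, hPl, hq1 with
  | 0, Q, hQ, hcond, Pl, hPl, hq1 =>
    exfalso
    push_cast at hcond
    nlinarith
  | 1, Q, hQ, hcond, Pl, hPl, hq1 =>
    exfalso
    push_cast at hcond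
    norm_num at hcond
  | k + 2, Q, hQ, hcond, Pl, hPl, hq1 =>
    have hc : 7 * ((2 + ((k + 1 : ℕ) : ℝ) * retProb (k + 1) Q) / (((k + 1 : ℕ) : ℝ) + 2)) < 1 := by
      refine lt_of_eq_of_lt ?_ hcond
      have h3 : (k : ℝ) + 1 + 2 ≠ 0 := by positivity
      have h4 : (k : ℝ) + 2 + 1 ≠ 0 := by positivity
      push_cast
      change 7 * ((2 + ((k : ℝ) + 1) * retProb (k + 1) Q) / ((k : ℝ) + 1 + 2)) =
        7 * (2 / ((k : ℝ) + 2 + 1) + (1 - 2 / ((k : ℝ) + 2 + 1)) * retProb (k + 1) Q)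
      field_simp
      ring
    have hle1 : ∀ (γ : ℝ) (N : ℕ), ((Pl N 0) {ω | geReal (discT (k + 2) N ω)
        (γ * (N : ℝ) ^ (2 * (k + 2)))}).toReal ≤ 1 := by
      intro γ N
      have := (hPl N).1 0
      exact measureReal_le_one
    have hup : ∀ γ : ℝ, liminf (fun N : ℕ => ((Pl N 0) {ω | geReal (discT (k + 2) N ω)
        (γ * (N : ℝ) ^ (2 * (k + 2)))}).toReal) atTop ≤ 1 := by
      intro γ
      refine liminf_le_of_le (isBoundedUnder_of ⟨0, fun N => ?_⟩) ?_
      · exact ENNReal.toReal_nonneg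
      · intro b hb
        obtain ⟨N, hN⟩ := hb.exists
        exact hN.trans (hle1 γ N)
    refine tendsto_order.2 ⟨fun a ha => ?_, fun a ha => Eventually.of_forall fun γ => (hup γ).trans_lt ha⟩
    set ε : ℝ := (1 - a) / 2 with hε
    have hε0 : 0 < ε := by rw [hε]; linarith
    obtain ⟨γ0, hγ0, hmain⟩ := main_bound (k + 1) (by omega) Q hQ hc ε hε0
    filter_upwards [Ioc_mem_nhdsGT hγ0] with γ hγ
    obtain ⟨N1, hN1⟩ := hmain γ hγ.1 hγ.2
    have : 1 - ε ≤ liminf (fun N : ℕ => ((Pl N 0) {ω | geReal (discT (k + 2) N ω)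
        (γ * (N : ℝ) ^ (2 * (k + 2)))}).toReal) atTop := by
      refine le_liminf_of_le (Filter.IsBoundedUnder.isCoboundedUnder_ge
        (isBoundedUnder_of ⟨1, fun N => hle1 γ N⟩)) ?_
      filter_upwards [eventually_ge_atTop N1] with N hN
      have hp := (hPl N).1 0
      have h1 := hN1 N hN (Pl N) (hPl N)
      set A : Set (ℕ → Cyl (k + 2) N) := {ω | geReal (discT (k + 2) N ω) (γ * (N : ℝ) ^ (2 * (k + 2)))} with hA
      have h1' : (Pl N 0) Aᶜ ≤ ENNReal.ofReal ε := h1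
      have h2 : (1 : ℝ≥0∞) ≤ (Pl N 0) A + (Pl N 0) Aᶜ := by
        calc (1 : ℝ≥0∞) = (Pl N 0) (A ∪ Aᶜ) := by rw [Set.union_compl_self, measure_univ]
          _ ≤ _ := measure_union_le _ _
      have h3 : (1 : ℝ≥0∞) ≤ ENNReal.ofReal (((Pl N 0) A).toReal + ε) := by
        rw [ENNReal.ofReal_add ENNReal.toReal_nonneg hε0.le, ENNReal.ofReal_toReal (measure_ne_top _ _)]
        exact h2.trans (by gcongr)
      have h4 := ENNReal.one_le_ofReal.1 h3
      linarith
    rw [hε] at this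
    linarith

end DiscCyl
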